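/- Assume f satisfies (f1) and (f2). Then any nonnegative nontrivial weak solution v of the extension problem (P) is radially symmetric in the y-variable with respect to some point y₀ ∈ ℝ^N: there exists y₀ ∈ ℝ^N such that v(x,y) = v(x,y′) whenever |y − y₀| = |y′ − y₀|. -/

import Mathlib

open MeasureTheory Real Set Filter Topology
open scoped ENNReal NNReal

noncomputable section

abbrev EN (N : ℕ) := EuclideanSpace ℝ (Fin N)

/-- The open upper half-space `(0,∞) × ℝ^N`. -/
def upperHalf (N : ℕ) : Set (ℝ × EN N) := {p | 0 < p.1}

/-- The closed upper half-space `[0,∞) × ℝ^N`. -/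
def closedHalf (N : ℕ) : Set (ℝ × EN N) := {p | 0 ≤ p.1}

/-- The unit vector in the `x` direction. -/
def ex (N : ℕ) : ℝ × EN N := (1, 0)

/-- The unit vector in the `yᵢ` direction. -/
def ey {N : ℕ} (i : Fin N) : ℝ × EN N := (0, EuclideanSpace.single i 1)

/-- Pointwise dot product of the gradients of `u` and `v`. -/
def gradDot {N : ℕ} (u v : ℝ × EN N → ℝ) (p : ℝ × EN N) : ℝ :=
  fderiv ℝ u p (ex N) * fderiv ℝ v p (ex N)
    + ∑ i : Fin N, fderiv ℝ u p (ey i) * fderiv ℝ v p (ey i)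

/-- `|∇u|²`. -/
def gradSq {N : ℕ} (u : ℝ × EN N → ℝ) (p : ℝ × EN N) : ℝ := gradDot u u p

/-- The Laplacian in the `N+1` variables. -/
def lap {N : ℕ} (u : ℝ × EN N → ℝ) (p : ℝ × EN N) : ℝ :=
  fderiv ℝ (fun q => fderiv ℝ u q (ex N)) p (ex N)
    + ∑ i : Fin N, fderiv ℝ (fun q => fderiv ℝ u q (ey i)) p (ey i)

/-- Membership in `H¹(ℝ^{N+1}_+)` (with the weak gradient realized as the pointwise
gradient on the open half-space, and continuity up to the boundary so that the trace
`γ(u)(y) = u(0,y)` is meaningful). -/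
structure MemH1 {N : ℕ} (u : ℝ × EN N → ℝ) : Prop where
  contOn : ContinuousOn u (closedHalf N)
  diff : ∀ p ∈ upperHalf N, DifferentiableAt ℝ u p
  memL2 : Integrable (fun p => u p ^ 2) (volume.restrict (upperHalf N))
  gradL2 : Integrable (fun p => gradSq u p) (volume.restrict (upperHalf N))

/-- The squared `H¹(ℝ^{N+1}_+)`-norm `‖u‖² = ∬ (|∇u|² + u²)`. -/
def H1normSq {N : ℕ} (u : ℝ × EN N → ℝ) : ℝ :=
  ∫ p in upperHalf N, (gradSq u p + u p ^ 2)

/-- `u` is a weak solution of the extension problem (P):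
`−Δu + m²u = 0` in `ℝ^{N+1}_+`, `−∂u/∂x(0,y) = f(u(0,y))` on `ℝ^N`. -/
def IsWeakSolution {N : ℕ} (m : ℝ) (f : ℝ → ℝ) (u : ℝ × EN N → ℝ) : Prop :=
  MemH1 u ∧
  ∀ φ : ℝ × EN N → ℝ, MemH1 φ →
    ∫ p in upperHalf N, (gradDot u φ p + m ^ 2 * u p * φ p)
      = ∫ y : EN N, f (u (0, y)) * φ (0, y)

/-- The primitive `F(t) = ∫₀ᵗ f(s) ds`. -/
def Fprim (f : ℝ → ℝ) (t : ℝ) : ℝ := ∫ s in (0:ℝ)..t, f s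

/-- Hypotheses on the nonlinearity `f`: `f` is `C¹`, vanishes on `(−∞,0]`, and satisfies
`(f1)` `lim_{t→0} f(t)/t = 0` and `(f2)` `lim_{t→∞} f(t)/tᵖ = 0` for some
`p ∈ (1, (N+1)/(N−1))`. -/
structure HypF (N : ℕ) (f : ℝ → ℝ) : Prop where
  smooth : ContDiff ℝ 1 f
  nonpos : ∀ t ≤ (0:ℝ), f t = 0
  f1 : Tendsto (fun t => f t / t) (𝓝[≠] (0:ℝ)) (𝓝 0)
  f2 : ∃ p : ℝ, 1 < p ∧ p < ((N : ℝ) + 1) / ((N : ℝ) - 1) ∧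
    Tendsto (fun t => f t / t ^ p) atTop (𝓝 0)

/-- The energy functional `J`. -/
def J {N : ℕ} (m : ℝ) (f : ℝ → ℝ) (u : ℝ × EN N → ℝ) : ℝ :=
  (1 / 2) * (∫ p in upperHalf N, (gradSq u p + m ^ 2 * u p ^ 2))
    - ∫ y : EN N, Fprim f (u (0, y))

/-- The derivative of the energy functional, `J′(u)·φ`. -/
def Jder {N : ℕ} (m : ℝ) (f : ℝ → ℝ) (u φ : ℝ × EN N → ℝ) : ℝ :=
  (∫ p in upperHalf N, (gradDot u φ p + m ^ 2 * u p * φ p))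
    - ∫ y : EN N, f (u (0, y)) * φ (0, y)

/-! ### Divergence theorem on the half-space -/

lemma measurableSet_upperHalf (N : ℕ) : MeasurableSet (upperHalf N) :=
  measurableSet_lt measurable_const measurable_fst

lemma volume_restrict_upperHalf (N : ℕ) :
    (volume : Measure (ℝ × EN N)).restrict (upperHalf N)
      = (volume.restrict (Ioi (0 : ℝ))).prod (volume : Measure (EN N)) := by
  have h : upperHalf N = Ioi (0 : ℝ) ×ˢ (univ : Set (EN N)) := by
    ext p; simp [upperHalf]
  rw [h, Measure.volume_eq_prod, ← Measure.prod_restrict, Measure.restrict_univ]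

lemma hasDerivAt_slice_fst {N : ℕ} {w : ℝ × EN N → ℝ} {x : ℝ} {y : EN N}
    (h : DifferentiableAt ℝ w (x, y)) :
    HasDerivAt (fun r => w (r, y)) (fderiv ℝ w (x, y) (ex N)) x := by
  have h1 : HasDerivAt (fun r : ℝ => (r, y)) (ex N) x :=
    (hasDerivAt_id x).prodMk (hasDerivAt_const x y)
  exact h.hasFDerivAt.comp_hasDerivAt x h1

lemma hasLineDerivAt_slice_snd {N : ℕ} {w : ℝ × EN N → ℝ} {x : ℝ} {y : EN N} (i : Fin N)
    (h : DifferentiableAt ℝ w (x, y)) :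
    HasLineDerivAt ℝ (fun y' => w (x, y')) (fderiv ℝ w (x, y) (ey i)) y
      (EuclideanSpace.single i 1) := by
  have h1 : HasLineDerivAt ℝ w (fderiv ℝ w (x, y) (ey i)) (x, y) (ey i) :=
    h.hasFDerivAt.hasLineDerivAt _
  simpa [HasLineDerivAt, ey] using h1

lemma integral_deriv_fst_upperHalf {N : ℕ} {w w' : ℝ × EN N → ℝ}
    (hc : ContinuousOn w (closedHalf N))
    (hd : ∀ x > 0, ∀ y, HasDerivAt (fun r => w (r, y)) (w' (x, y)) x)
    (hw : IntegrableOn w (upperHalf N)) (hw' : IntegrableOn w' (upperHalf N)) :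
    Integrable (fun y => w (0, y)) ∧
      ∫ p in upperHalf N, w' p = - ∫ y, w (0, y) := by
  rw [IntegrableOn, volume_restrict_upperHalf] at hw hw'
  rw [volume_restrict_upperHalf]
  have key : ∀ᵐ y : EN N, ∫ x in Ioi (0 : ℝ), w' (x, y) = - w (0, y) := by
    filter_upwards [hw.prod_left_ae, hw'.prod_left_ae] with y h1 h2
    have hcy : ContinuousWithinAt (fun x => w (x, y)) (Ici 0) 0 := by
      have := hc (0, y) (by simp [closedHalf])
      refine ContinuousWithinAt.comp (t := closedHalf N) (f := fun x : ℝ => (x, y)) this ?_ ?_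
      · exact (by fun_prop : Continuous fun x : ℝ => (x, y)).continuousWithinAt
      · intro x hx; exact hx
    have ht := tendsto_zero_of_hasDerivAt_of_integrableOn_Ioi (fun x hx => hd x hx y) h2 h1
    have := integral_Ioi_of_hasDerivAt_of_tendsto hcy (fun x hx => hd x hx y) h2 ht
    simpa using this
  have hInt := hw'.integral_prod_right
  refine ⟨?_, ?_⟩
  · have := (hInt.congr key).neg
    simpa using this
  · rw [integral_prod_symm _ hw', ← integral_neg]
    exact integral_congr_ae key

lemma integral_lineDeriv_upperHalf {N : ℕ} {w w' : ℝ × EN N → ℝ} {e : EN N}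
    (hd : ∀ x > 0, ∀ y, HasLineDerivAt ℝ (fun y' => w (x, y')) (w' (x, y)) y e)
    (hw : IntegrableOn w (upperHalf N)) (hw' : IntegrableOn w' (upperHalf N)) :
    ∫ p in upperHalf N, w' p = 0 := by
  rw [IntegrableOn, volume_restrict_upperHalf] at hw hw'
  rw [volume_restrict_upperHalf, integral_prod _ hw']
  have key : ∀ᵐ x ∂(volume.restrict (Ioi (0 : ℝ))), ∫ y : EN N, w' (x, y) = 0 := by
    filter_upwards [hw.prod_right_ae, hw'.prod_right_ae, ae_restrict_mem measurableSet_Ioi]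
      with x h1 h2 hx
    have := integral_bilinear_hasLineDerivAt_right_eq_neg_left_of_integrable
      (μ := (volume : Measure (EN N))) (f := fun y => w (x, y)) (f' := fun y => w' (x, y))
      (g := fun _ => (1 : ℝ)) (g' := fun _ => 0) (v := e) (B := ContinuousLinearMap.mul ℝ ℝ)
      (by simpa using h2) (by simp) (by simpa using h1) (fun y _ => hd x hx y)
      (fun y _ => by simpa [HasLineDerivAt] using hasDerivAt_const (0 : ℝ) (1 : ℝ))
    simpa using this
  rw [integral_congr_ae key]; simp
/-! ### Basic integrability for functions in the energy space -/

lemma integrable_mul_of_integrable_sq {α : Type*} [MeasurableSpace α] {μ : Measure α}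
    {a b : α → ℝ} (ha : AEStronglyMeasurable a μ) (hb : AEStronglyMeasurable b μ)
    (ha2 : Integrable (fun p => a p ^ 2) μ) (hb2 : Integrable (fun p => b p ^ 2) μ) :
    Integrable (fun p => a p * b p) μ := by
  refine (ha2.add hb2).mono' (ha.mul hb) (Eventually.of_forall fun p => ?_)
  simp only [Real.norm_eq_abs, abs_mul, Pi.add_apply]
  rw [← sq_abs (a p), ← sq_abs (b p)]
  nlinarith [sq_nonneg (|a p| - |b p|), sq_nonneg (|a p|), sq_nonneg (|b p|)]

lemma measurable_fderiv_dir {N : ℕ} (v : ℝ × EN N → ℝ) (e : ℝ × EN N) :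
    Measurable (fun p => fderiv ℝ v p e) :=
  measurable_fderiv_apply_const ℝ v e

lemma sq_fderiv_ex_le_gradSq {N : ℕ} (v : ℝ × EN N → ℝ) (p : ℝ × EN N) :
    fderiv ℝ v p (ex N) ^ 2 ≤ gradSq v p := by
  have : 0 ≤ ∑ i : Fin N, fderiv ℝ v p (ey i) * fderiv ℝ v p (ey i) :=
    Finset.sum_nonneg fun i _ => mul_self_nonneg _
  simp only [gradSq, gradDot]; nlinarith

lemma sq_fderiv_ey_le_gradSq {N : ℕ} (v : ℝ × EN N → ℝ) (p : ℝ × EN N) (i : Fin N) :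
    fderiv ℝ v p (ey i) ^ 2 ≤ gradSq v p := by
  have := Finset.single_le_sum (f := fun i => fderiv ℝ v p (ey i) * fderiv ℝ v p (ey i))
    (fun i _ => mul_self_nonneg _) (Finset.mem_univ i)
  simp only [gradSq, gradDot]
  nlinarith [mul_self_nonneg (fderiv ℝ v p (ex N))]

lemma gradSq_nonneg {N : ℕ} (v : ℝ × EN N → ℝ) (p : ℝ × EN N) : 0 ≤ gradSq v p :=
  (sq_nonneg _).trans (sq_fderiv_ex_le_gradSq v p)

lemma upperHalf_subset_closedHalf (N : ℕ) : upperHalf N ⊆ closedHalf N :=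
  fun p hp => le_of_lt (show (0 : ℝ) < p.1 from hp)

namespace MemH1

variable {N : ℕ} {v : ℝ × EN N → ℝ}

lemma aesm (hv : MemH1 v) : AEStronglyMeasurable v (volume.restrict (upperHalf N)) :=
  (hv.contOn.mono (upperHalf_subset_closedHalf N)).aestronglyMeasurable
    (measurableSet_upperHalf N)

lemma sq_ex (hv : MemH1 v) :
    IntegrableOn (fun p => fderiv ℝ v p (ex N) ^ 2) (upperHalf N) :=
  hv.gradL2.mono' ((measurable_fderiv_dir v _).pow_const 2).aestronglyMeasurable
    (Eventually.of_forall fun p => by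
      simpa using sq_fderiv_ex_le_gradSq v p)

lemma sq_ey (hv : MemH1 v) (i : Fin N) :
    IntegrableOn (fun p => fderiv ℝ v p (ey i) ^ 2) (upperHalf N) :=
  hv.gradL2.mono' ((measurable_fderiv_dir v _).pow_const 2).aestronglyMeasurable
    (Eventually.of_forall fun p => by
      simpa using sq_fderiv_ey_le_gradSq v p i)

lemma mul_ex (hv : MemH1 v) :
    IntegrableOn (fun p => v p * fderiv ℝ v p (ex N)) (upperHalf N) :=
  integrable_mul_of_integrable_sq hv.aesm (measurable_fderiv_dir v _).aestronglyMeasurable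
    hv.memL2 hv.sq_ex

lemma mul_ey (hv : MemH1 v) (i : Fin N) :
    IntegrableOn (fun p => v p * fderiv ℝ v p (ey i)) (upperHalf N) :=
  integrable_mul_of_integrable_sq hv.aesm (measurable_fderiv_dir v _).aestronglyMeasurable
    hv.memL2 (hv.sq_ey i)

lemma continuous_trace (hv : MemH1 v) : Continuous (fun y => v (0, y)) := by
  have : Continuous (fun y : EN N => ((0 : ℝ), y)) := by fun_prop
  exact hv.contOn.comp_continuous this (fun y => by simp [closedHalf])

lemma hasDerivAt_fst (hv : MemH1 v) {x : ℝ} (hx : 0 < x) (y : EN N) :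
    HasDerivAt (fun r => v (r, y)) (fderiv ℝ v (x, y) (ex N)) x :=
  hasDerivAt_slice_fst (hv.diff (x, y) hx)

lemma hasLineDerivAt_snd (hv : MemH1 v) {x : ℝ} (hx : 0 < x) (y : EN N) (i : Fin N) :
    HasLineDerivAt ℝ (fun y' => v (x, y')) (fderiv ℝ v (x, y) (ey i)) y
      (EuclideanSpace.single i 1) :=
  hasLineDerivAt_slice_snd i (hv.diff (x, y) hx)

lemma integrable_trace_sq (hv : MemH1 v) : Integrable (fun y => v (0, y) ^ 2) := by
  refine (integral_deriv_fst_upperHalf (w := fun p => v p ^ 2)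
    (w' := fun p => 2 * (v p * fderiv ℝ v p (ex N))) (hv.contOn.pow 2) ?_ hv.memL2
    (hv.mul_ex.const_mul 2)).1
  intro x hx y
  exact ((hv.hasDerivAt_fst hx y).pow 2).congr_deriv (by simp; ring)

end MemH1
/-! ### A Hardy-type trace inequality -/

lemma norm_sq_line {N : ℕ} (y z : EN N) (i : Fin N) (t : ℝ) :
    ‖y + t • EuclideanSpace.single i (1 : ℝ) - z‖ ^ 2
      = ‖y - z‖ ^ 2 + 2 * t * (y i - z i) + t ^ 2 := by
  have h : y + t • EuclideanSpace.single i (1 : ℝ) - z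
      = (y - z) + t • EuclideanSpace.single i (1 : ℝ) := by abel
  rw [h, norm_add_sq_real, inner_smul_right, norm_smul]
  simp [EuclideanSpace.inner_single_right]
  ring

lemma hasDerivAt_norm_sq_line {N : ℕ} (y z : EN N) (i : Fin N) :
    HasDerivAt (fun t : ℝ => ‖y + t • EuclideanSpace.single i (1 : ℝ) - z‖ ^ 2)
      (2 * (y i - z i)) 0 := by
  have h : (fun t : ℝ => ‖y + t • EuclideanSpace.single i (1 : ℝ) - z‖ ^ 2)
      = fun t => ‖y - z‖ ^ 2 + 2 * t * (y i - z i) + t ^ 2 := funext (norm_sq_line y z i)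
  rw [h]
  have h1 : HasDerivAt (fun t : ℝ => ‖y - z‖ ^ 2 + 2 * t * (y i - z i) + t ^ 2)
      (0 + 2 * 1 * (y i - z i) + 2 * (0 : ℝ) ^ 1 * 1) 0 := by
    refine ((hasDerivAt_const _ _).add ?_).add ((hasDerivAt_id (0 : ℝ)).pow 2)
    exact ((hasDerivAt_id (0 : ℝ)).const_mul 2).mul_const _
  exact h1.congr_deriv (by ring)

lemma hasDerivAt_coord_line {N : ℕ} (y z : EN N) (i : Fin N) :
    HasDerivAt (fun t : ℝ => (y + t • EuclideanSpace.single i (1 : ℝ)) i - z i) 1 0 := by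
  have h : (fun t : ℝ => (y + t • EuclideanSpace.single i (1 : ℝ)) i - z i)
      = fun t => t + (y i - z i) := by
    funext t; simp; ring
  rw [h]
  exact (hasDerivAt_id _).add_const _

/-- The regularized squared distance to the boundary point `(0, z)`. -/
def regDist {N : ℕ} (d : ℝ) (z : EN N) (p : ℝ × EN N) : ℝ := p.1 ^ 2 + ‖p.2 - z‖ ^ 2 + d

lemma regDist_pos {N : ℕ} {d : ℝ} (hd : 0 < d) (z : EN N) (p : ℝ × EN N) :
    0 < regDist d z p := by unfold regDist; positivity

lemma continuous_regDist {N : ℕ} (d : ℝ) (z : EN N) : Continuous (regDist d z) := by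
  unfold regDist; fun_prop

lemma sum_sq_sub {N : ℕ} (y z : EN N) : ∑ i, (y i - z i) ^ 2 = ‖y - z‖ ^ 2 := by
  rw [EuclideanSpace.norm_sq_eq]; simp

/-- The pointwise inequality behind the Hardy-type trace inequality. -/
lemma hardy_pointwise {n V X d s v g : ℝ} (hn : 2 ≤ n) (hX : 0 ≤ X) (hV : 0 ≤ V)
    (hd : 0 ≤ d) (hs : 0 < s) (hq : s ^ 2 = X ^ 2 + V + d) {a S : ℝ}
    (hS : -(2 * v * S) ≤ 9 / 2 * g + 2 / 9 * v ^ 2 * (V / (s ^ 2) ^ 2)) :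
    -(2 * v * a * (X / s ^ 2 + 1 / (2 * s))
        + v ^ 2 * (1 / s ^ 2 - 2 * X ^ 2 / (s ^ 2) ^ 2 - X / (2 * s ^ 2 * s))
        + (2 * v * S + v ^ 2 * (n / s ^ 2 - 2 * V / (s ^ 2) ^ 2)))
      ≤ 9 / 2 * (a ^ 2 + g) := by
  have hXs : X ≤ s := by nlinarith
  set c := X / s with hc
  set b := V / s ^ 2 with hb
  have hc0 : 0 ≤ c := by positivity
  have hc1 : c ≤ 1 := by rw [hc, div_le_one hs]; exact hXs
  have hb0 : 0 ≤ b := by positivity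
  have hcb : c ^ 2 + b ≤ 1 := by
    rw [hc, hb, div_pow, ← add_div, div_le_one (by positivity)]; linarith
  set w := v / s with hw
  have e1 : v = w * s := by rw [hw]; field_simp
  have e2 : X = c * s := by rw [hc]; field_simp
  have e3 : V = b * s ^ 2 := by rw [hb]; field_simp
  have h1 : 2 * v * a * (X / s ^ 2 + 1 / (2 * s)) = 2 * w * a * (c + 1 / 2) := by
    rw [e1, e2]; field_simp
  have h2 : v ^ 2 * (1 / s ^ 2 - 2 * X ^ 2 / (s ^ 2) ^ 2 - X / (2 * s ^ 2 * s))
      = w ^ 2 * (1 - 2 * c ^ 2 - c / 2) := by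
    rw [e1, e2]; field_simp
  have h3 : v ^ 2 * (n / s ^ 2 - 2 * V / (s ^ 2) ^ 2) = w ^ 2 * (n - 2 * b) := by
    rw [e1, e3]; field_simp
  have h4 : 2 / 9 * v ^ 2 * (V / (s ^ 2) ^ 2) = 2 / 9 * w ^ 2 * b := by
    rw [e1, e3]; field_simp
  rw [h4] at hS
  rw [h1, h2, h3]
  have h5 : -(2 * w * a * (c + 1 / 2)) ≤ 9 / 2 * a ^ 2 + 2 / 9 * w ^ 2 * (c + 1 / 2) ^ 2 := by
    nlinarith [sq_nonneg (3 * a + 2 / 3 * (w * (c + 1 / 2)))]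
  have h6 : 0 ≤ w ^ 2 * ((1 - 2 * c ^ 2 - c / 2) + (n - 2 * b) - 2 / 9 * b
      - 2 / 9 * (c + 1 / 2) ^ 2) := by
    apply mul_nonneg (sq_nonneg _); nlinarith
  nlinarith

lemma MemH1.hardy_trace_reg {N : ℕ} (hN : 2 ≤ N) {v : ℝ × EN N → ℝ} (hv : MemH1 v) (z : EN N)
    {d : ℝ} (hd : 0 < d) :
    Integrable (fun y => v (0, y) ^ 2 / √(‖y - z‖ ^ 2 + d)) ∧
    ∫ y, v (0, y) ^ 2 / √(‖y - z‖ ^ 2 + d) ≤ 9 * ∫ p in upperHalf N, gradSq v p := by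
  set q := regDist d z with hq
  have hqpos : ∀ p, 0 < q p := regDist_pos hd z
  have hqc : Continuous q := continuous_regDist d z
  have hsc : Continuous (fun p => √(q p)) := hqc.sqrt
  have hspos : ∀ p, 0 < √(q p) := fun p => Real.sqrt_pos.2 (hqpos p)
  have hss : ∀ p, √(q p) ^ 2 = q p := fun p => Real.sq_sqrt (hqpos p).le
  have hqd : ∀ p, d ≤ q p := fun p => by simp only [hq, regDist]; nlinarith [sq_nonneg p.1, sq_nonneg ‖p.2 - z‖]
  have hxq : ∀ p, p.1 ^ 2 ≤ q p := fun p => by simp only [hq, regDist]; nlinarith [sq_nonneg ‖p.2 - z‖]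
  have hyq : ∀ p, ∀ i, (p.2 i - z i) ^ 2 ≤ q p := fun p i => by
    have h1 := Finset.single_le_sum (f := fun i => (p.2 i - z i) ^ 2) (fun i _ => sq_nonneg _)
      (Finset.mem_univ i)
    rw [sum_sq_sub] at h1
    simp only [hq, regDist]; nlinarith [sq_nonneg p.1]
  have hsd : ∀ p, √d ≤ √(q p) := fun p => Real.sqrt_le_sqrt (hqd p)
  have hsd0 : 0 < √d := Real.sqrt_pos.2 hd
  -- the vector field and its derivatives
  set A : ℝ × EN N → ℝ := fun p => p.1 / q p + 1 / (2 * √(q p)) with hA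
  set A' : ℝ × EN N → ℝ := fun p => 1 / q p - 2 * p.1 ^ 2 / q p ^ 2 - p.1 / (2 * q p * √(q p))
    with hA'
  set B : Fin N → ℝ × EN N → ℝ := fun i p => (p.2 i - z i) / q p with hB
  set B' : Fin N → ℝ × EN N → ℝ := fun i p => 1 / q p - 2 * (p.2 i - z i) ^ 2 / q p ^ 2 with hB'
  have hcoord : ∀ i : Fin N, Continuous (fun p : ℝ × EN N => p.2 i) := fun i => by fun_prop
  have hAc : Continuous A := by
    refine (continuous_fst.div hqc fun p => (hqpos p).ne').add
      (continuous_const.div (continuous_const.mul hsc) fun p => ?_)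
    exact mul_ne_zero two_ne_zero (hspos p).ne'
  have hA'c : Continuous A' := by
    refine ((continuous_const.div hqc fun p => (hqpos p).ne').sub
      ((continuous_const.mul (continuous_fst.pow 2)).div (hqc.pow 2) fun p => ?_)).sub
      (continuous_fst.div ((continuous_const.mul hqc).mul hsc) fun p => ?_)
    · exact pow_ne_zero 2 (hqpos p).ne'
    · exact mul_ne_zero (mul_ne_zero two_ne_zero (hqpos p).ne') (hspos p).ne'
  have hBc : ∀ i, Continuous (B i) := fun i =>
    ((hcoord i).sub continuous_const).div hqc fun p => (hqpos p).ne'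
  have hB'c : ∀ i, Continuous (B' i) := fun i => by
    refine (continuous_const.div hqc fun p => (hqpos p).ne').sub
      ((continuous_const.mul (((hcoord i).sub continuous_const).pow 2)).div (hqc.pow 2) fun p => ?_)
    have := hqpos p; positivity
  -- pointwise bounds
  have bxs : ∀ p : ℝ × EN N, |p.1| ≤ √(q p) := fun p => Real.abs_le_sqrt (hxq p)
  have bys : ∀ (p : ℝ × EN N) i, |p.2 i - z i| ≤ √(q p) := fun p i => Real.abs_le_sqrt (hyq p i)
  have bdiv : ∀ (p : ℝ × EN N) (t : ℝ), |t| ≤ √(q p) → |t / q p| ≤ 1 / √d := fun p t ht => by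
    rw [abs_div, abs_of_pos (hqpos p), ← hss p, div_le_div_iff₀ (pow_pos (hspos p) 2) hsd0]
    nlinarith [hsd p, hspos p, abs_nonneg t]
  have bs : ∀ p : ℝ × EN N, |1 / (2 * √(q p))| ≤ 1 / √d := fun p => by
    have := hspos p
    rw [abs_of_pos (by positivity), div_le_div_iff₀ (by positivity) hsd0]
    nlinarith [hsd p]
  have bq : ∀ p : ℝ × EN N, |1 / q p| ≤ 1 / d := fun p => by
    have := hqpos p
    rw [abs_of_pos (by positivity)]
    exact one_div_le_one_div_of_le hd (hqd p)
  have bq2 : ∀ (p : ℝ × EN N) (t : ℝ), |t| ≤ √(q p) → |2 * t ^ 2 / q p ^ 2| ≤ 2 / d :=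
    fun p t ht => by
      have h1 : t ^ 2 ≤ q p := by rw [← sq_abs, ← hss p]; gcongr
      have := hqpos p
      rw [abs_of_nonneg (by positivity), div_le_div_iff₀ (by positivity) hd]
      nlinarith [hqd p, mul_le_mul h1 (hqd p) hd.le this.le]
  have hAb : ∀ p, |A p| ≤ 1 / √d + 1 / √d := fun p =>
    (abs_add_le _ _).trans (add_le_add (bdiv p _ (bxs p)) (bs p))
  have hA'b : ∀ p, |A' p| ≤ 1 / d + 2 / d + (1 / √d) * (1 / √d) := fun p => by
    refine (abs_sub _ _).trans (add_le_add ((abs_sub _ _).trans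
      (add_le_add (bq p) (bq2 p _ (bxs p)))) ?_)
    have : p.1 / (2 * q p * √(q p)) = (p.1 / q p) * (1 / (2 * √(q p))) := by
      field_simp
    rw [this, abs_mul]
    exact mul_le_mul (bdiv p _ (bxs p)) (bs p) (abs_nonneg _) (by positivity)
  have hBb : ∀ i p, |B i p| ≤ 1 / √d := fun i p => bdiv p _ (bys p i)
  have hB'b : ∀ i p, |B' i p| ≤ 1 / d + 2 / d := fun i p =>
    (abs_sub _ _).trans (add_le_add (bq p) (bq2 p _ (bys p i)))
  -- integrability
  have int_mul : ∀ {g Φ : ℝ × EN N → ℝ} {C : ℝ}, IntegrableOn g (upperHalf N) → Continuous Φ →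
      (∀ p, |Φ p| ≤ C) → IntegrableOn (fun p => g p * Φ p) (upperHalf N) :=
    fun {g Φ C} hg hΦ hC => hg.mul_bdd (c := C) hΦ.aestronglyMeasurable
      (Eventually.of_forall hC)
  have hx := integral_deriv_fst_upperHalf (w := fun p => v p ^ 2 * A p)
    (w' := fun p => 2 * (v p * fderiv ℝ v p (ex N)) * A p + v p ^ 2 * A' p)
    ((hv.contOn.pow 2).mul hAc.continuousOn) (fun x hx y => by
      have h1 : HasDerivAt (fun r => q (r, y)) (2 * x) x := by
        simp only [hq, regDist]
        exact ((((hasDerivAt_id x).pow 2).add_const _).add_const _).congr_deriv (by simp)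
      have hp := hqpos (x, y)
      have hsp := hspos (x, y)
      have h2 : HasDerivAt (fun r => A (r, y)) (A' (x, y)) x := by
        refine (((hasDerivAt_id x).div h1 hp.ne').add
          ((hasDerivAt_const x (1 : ℝ)).div ((h1.sqrt hp.ne').const_mul 2)
            (by positivity))).congr_deriv ?_
        have := hss (x, y)
        simp only [hA', id]
        obtain ⟨s, hs⟩ : ∃ s, s = √(q (x, y)) := ⟨_, rfl⟩
        rw [← hs] at hsp this ⊢
        rw [← this]
        field_simp
        ring
      refine (((hv.hasDerivAt_fst hx y).pow 2).mul h2).congr_deriv ?_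
      simp only [Nat.cast_ofNat, Nat.reduceSub, pow_one, Pi.pow_apply]; ring)
    (int_mul hv.memL2 hAc hAb)
    ((int_mul (hv.mul_ex.const_mul 2) hAc hAb).add (int_mul hv.memL2 hA'c hA'b))
  have hintx : IntegrableOn (fun p => 2 * (v p * fderiv ℝ v p (ex N)) * A p + v p ^ 2 * A' p)
      (upperHalf N) :=
    (int_mul (hv.mul_ex.const_mul 2) hAc hAb).add (int_mul hv.memL2 hA'c hA'b)
  have hinty : ∀ i, IntegrableOn (fun p => 2 * (v p * fderiv ℝ v p (ey i)) * B i p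
      + v p ^ 2 * B' i p) (upperHalf N) := fun i =>
    (int_mul ((hv.mul_ey i).const_mul 2) (hBc i) (hBb i)).add
      (int_mul hv.memL2 (hB'c i) (hB'b i))
  have hy : ∀ i, ∫ p in upperHalf N, (2 * (v p * fderiv ℝ v p (ey i)) * B i p
      + v p ^ 2 * B' i p) = 0 := fun i =>
    integral_lineDeriv_upperHalf (w := fun p => v p ^ 2 * B i p) (fun x hx y => by
      have h0 : y + (0 : ℝ) • EuclideanSpace.single i (1 : ℝ) = y := by simp
      have h1 : HasDerivAt (fun t : ℝ => q (x, y + t • EuclideanSpace.single i (1 : ℝ)))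
          (2 * (y i - z i)) 0 := by
        simp only [hq, regDist]
        exact ((hasDerivAt_norm_sq_line y z i).const_add _).add_const _
      have h2 : HasDerivAt (fun t : ℝ => B i (x, y + t • EuclideanSpace.single i (1 : ℝ)))
          (B' i (x, y)) 0 := by
        refine ((hasDerivAt_coord_line y z i).div h1 (hqpos _).ne').congr_deriv ?_
        have hp := hqpos (x, y)
        simp only [hB', h0]
        field_simp
      have h3 : HasDerivAt (fun t : ℝ => v (x, y + t • EuclideanSpace.single i (1 : ℝ)))
        (fderiv ℝ v (x, y) (ey i)) 0 := hv.hasLineDerivAt_snd hx y i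
      refine ((h3.pow 2).mul h2).congr_deriv ?_
      simp only [Nat.cast_ofNat, Nat.reduceSub, pow_one, zero_smul, add_zero, Pi.pow_apply]; ring)
      (int_mul hv.memL2 (hBc i) (hBb i)) (hinty i)
  obtain ⟨hx1, hx2⟩ := hx
  have hbd : ∀ y : EN N, v (0, y) ^ 2 * A (0, y) = 1 / 2 * (v (0, y) ^ 2 / √(‖y - z‖ ^ 2 + d)) := by
    intro y
    have : q (0, y) = ‖y - z‖ ^ 2 + d := by simp [hq, regDist]
    simp only [hA, this]
    field_simp; simp
  simp only [hbd] at hx1 hx2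
  refine ⟨by simpa using hx1.const_mul 2, ?_⟩
  rw [integral_const_mul] at hx2
  have hsum : ∫ p in upperHalf N, -((2 * (v p * fderiv ℝ v p (ex N)) * A p + v p ^ 2 * A' p)
      + ∑ i, (2 * (v p * fderiv ℝ v p (ey i)) * B i p + v p ^ 2 * B' i p))
      = 1 / 2 * ∫ y, v (0, y) ^ 2 / √(‖y - z‖ ^ 2 + d) := by
    rw [integral_neg, integral_add hintx (integrable_finsetSum _ fun i _ => hinty i),
      integral_finsetSum _ fun i _ => hinty i, hx2]
    simp [hy]
  have hle : ∫ p in upperHalf N, -((2 * (v p * fderiv ℝ v p (ex N)) * A p + v p ^ 2 * A' p)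
      + ∑ i, (2 * (v p * fderiv ℝ v p (ey i)) * B i p + v p ^ 2 * B' i p))
      ≤ ∫ p in upperHalf N, 9 / 2 * gradSq v p := by
    refine setIntegral_mono_on (hintx.add (integrable_finsetSum _ fun i _ => hinty i)).neg
      (hv.gradL2.const_mul _) (measurableSet_upperHalf N) fun p hp => ?_
    have hp1 : 0 < p.1 := hp
    have key := hardy_pointwise (n := N) (V := ‖p.2 - z‖ ^ 2) (X := p.1) (d := d) (s := √(q p))
      (v := v p) (g := ∑ i, fderiv ℝ v p (ey i) * fderiv ℝ v p (ey i))
      (a := fderiv ℝ v p (ex N)) (S := ∑ i, fderiv ℝ v p (ey i) * B i p)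
      (by exact_mod_cast hN) hp1.le (sq_nonneg _) hd.le (hspos p) (hss p) (by
        rw [← sum_sq_sub, hss p, Finset.mul_sum, Finset.mul_sum, Finset.sum_div,
          Finset.mul_sum, ← Finset.sum_add_distrib, ← Finset.sum_neg_distrib]
        refine Finset.sum_le_sum fun i _ => ?_
        simp only [hB]
        rw [show (p.2 i - z i) ^ 2 / q p ^ 2 = ((p.2 i - z i) / q p) ^ 2 by rw [div_pow]]
        nlinarith [sq_nonneg (3 * fderiv ℝ v p (ey i) + 2 / 3 * (v p * ((p.2 i - z i) / q p)))])
    rw [hss p] at key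
    refine le_trans (le_of_eq ?_) (key.trans (le_of_eq ?_))
    · simp only [hA, hA', hB']
      have : ∑ i, (2 * (v p * fderiv ℝ v p (ey i)) * B i p
            + v p ^ 2 * (1 / q p - 2 * (p.2 i - z i) ^ 2 / q p ^ 2))
          = 2 * v p * ∑ i, fderiv ℝ v p (ey i) * B i p
            + v p ^ 2 * (N / q p - 2 * ‖p.2 - z‖ ^ 2 / q p ^ 2) := by
        rw [Finset.sum_add_distrib, ← Finset.mul_sum, Finset.sum_sub_distrib, ← Finset.sum_div,
          ← Finset.sum_div, ← Finset.mul_sum, sum_sq_sub, Finset.mul_sum]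
        congr 1
        · exact Finset.sum_congr rfl fun i _ => by ring
        · simp [div_eq_mul_inv]
      rw [this]; ring
    · simp only [gradSq, gradDot]; ring
  rw [hsum, integral_const_mul] at hle
  linarith

lemma MemH1.hardy_trace {N : ℕ} (hN : 2 ≤ N) {v : ℝ × EN N → ℝ} (hv : MemH1 v) (z : EN N) :
    ∫⁻ y, ENNReal.ofReal (v (0, y) ^ 2 / ‖y - z‖)
      ≤ ENNReal.ofReal (9 * ∫ p in upperHalf N, gradSq v p) := by
  have hlim : ∀ y, ENNReal.ofReal (v (0, y) ^ 2 / ‖y - z‖) ≤ liminf (fun n : ℕ =>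
      ENNReal.ofReal (v (0, y) ^ 2 / √(‖y - z‖ ^ 2 + 1 / ((n : ℝ) + 1)))) atTop := by
    intro y
    rcases eq_or_ne y z with rfl | hyz
    · simp
    have hpos : 0 < ‖y - z‖ := norm_pos_iff.2 (sub_ne_zero.2 hyz)
    have h1 : Tendsto (fun n : ℕ => √(‖y - z‖ ^ 2 + 1 / ((n : ℝ) + 1))) atTop
        (𝓝 √(‖y - z‖ ^ 2 + 0)) :=
      (tendsto_one_div_add_atTop_nhds_zero_nat.const_add _).sqrt
    rw [add_zero, Real.sqrt_sq hpos.le] at h1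
    have h2 := ENNReal.tendsto_ofReal ((tendsto_const_nhds (x := v (0, y) ^ 2)).div h1 hpos.ne')
    exact h2.liminf_eq.ge
  refine (lintegral_mono hlim).trans ((lintegral_liminf_le' fun n => ?_).trans ?_)
  · exact (hv.hardy_trace_reg hN z (d := 1 / ((n : ℝ) + 1)) (by positivity)).1.1.aemeasurable.ennreal_ofReal
  · refine liminf_le_of_frequently_le' (Eventually.of_forall fun n => ?_).frequently
    obtain ⟨h1, h2⟩ := hv.hardy_trace_reg hN z (d := 1 / ((n : ℝ) + 1)) (by positivity)
    rw [← ofReal_integral_eq_lintegral_ofReal h1 (Eventually.of_forall fun y => by positivity)]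
    exact ENNReal.ofReal_le_ofReal h2
/-! ### Integrability of powers of the trace -/

/-- A one-dimensional Sobolev inequality. -/
lemma enorm_le_lintegral_add_deriv {w w' : ℝ → ℝ} {a : ℝ}
    (hw : ∀ t ≥ a, HasDerivAt w (w' t) t) :
    ‖w a‖ₑ ≤ ∫⁻ t in Ioi a, (‖w t‖ₑ + ‖w' t‖ₑ) := by
  by_cases htop : ∫⁻ t in Ioi a, (‖w t‖ₑ + ‖w' t‖ₑ) = ⊤
  · rw [htop]; exact le_top
  have hab : a ≤ a + 1 := by linarith
  set ψ' : ℝ → ℝ := fun t => w' t * (t - (a + 1)) + w t * 1 with hψ'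
  have hd : ∀ t ∈ uIcc a (a + 1), HasDerivAt (fun t => w t * (t - (a + 1))) (ψ' t) t := by
    intro t ht
    rw [uIcc_of_le hab] at ht
    exact (hw t ht.1).mul ((hasDerivAt_id t).sub_const _)
  have hmeas : AEStronglyMeasurable ψ' (volume.restrict (Ioc a (a + 1))) := by
    refine (measurable_deriv (fun t => w t * (t - (a + 1)))).aestronglyMeasurable.congr ?_
    filter_upwards [ae_restrict_mem measurableSet_Ioc] with t ht
    exact (hd t (by rw [uIcc_of_le hab]; exact Ioc_subset_Icc_self ht)).deriv
  have hle : ∀ t ∈ Ioc a (a + 1), ‖ψ' t‖ₑ ≤ ‖w t‖ₑ + ‖w' t‖ₑ := by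
    intro t ht
    rw [hψ', add_comm ‖w t‖ₑ]
    refine (enorm_add_le _ _).trans (add_le_add ?_ (by simp))
    rw [enorm_mul]
    refine mul_le_of_le_one_right' ?_
    rw [← enorm_norm, Real.enorm_eq_ofReal (norm_nonneg _), Real.norm_eq_abs,
      abs_of_nonpos (by linarith [ht.2])]
    exact ENNReal.ofReal_le_one.2 (by linarith [ht.1])
  have hle2 : ∫⁻ t in Ioc a (a + 1), ‖ψ' t‖ₑ ≤ ∫⁻ t in Ioi a, (‖w t‖ₑ + ‖w' t‖ₑ) :=
    (setLIntegral_mono' measurableSet_Ioc hle).trans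
      (lintegral_mono_set Ioc_subset_Ioi_self)
  have hInt : IntervalIntegrable ψ' volume a (a + 1) := by
    rw [intervalIntegrable_iff_integrableOn_Ioc_of_le hab]
    exact ⟨hmeas, hle2.trans_lt (lt_top_iff_ne_top.2 htop)⟩
  have h := intervalIntegral.integral_eq_sub_of_hasDerivAt hd hInt
  rw [intervalIntegral.integral_of_le hab] at h
  have h2 : w a = ∫ t in Ioc a (a + 1), ψ' t := by rw [h]; ring
  rw [h2]
  exact (enorm_integral_le_lintegral_enorm _).trans hle2

lemma sq_lintegral_mul_le {α : Type*} [MeasurableSpace α] {μ : Measure α} {a b : α → ℝ≥0∞}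
    (ha : AEMeasurable a μ) (hb : AEMeasurable b μ) :
    (∫⁻ x, a x * b x ∂μ) ^ 2 ≤ (∫⁻ x, a x ^ 2 ∂μ) * ∫⁻ x, b x ^ 2 ∂μ := by
  have h := ENNReal.lintegral_mul_le_Lp_mul_Lq μ Real.HolderConjugate.two_two ha hb
  have h2 := pow_le_pow_left' h 2
  simp only [Pi.mul_apply] at h2
  refine h2.trans (le_of_eq ?_)
  rw [mul_pow, ← ENNReal.rpow_natCast, ← ENNReal.rpow_mul, ← ENNReal.rpow_natCast,
    ← ENNReal.rpow_mul]
  norm_num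

/-- A planar Gagliardo--Nirenberg inequality. -/
lemma lintegral_sq_le_of_planar {W : EN 2 → ℝ} {D : Fin 2 → EN 2 → ℝ} {g : EN 2 → ℝ≥0∞}
    (hD : ∀ i y, HasLineDerivAt ℝ W (D i y) y (EuclideanSpace.single i 1))
    (hg : Measurable g) (hle : ∀ i y, ‖W y‖ₑ + ‖D i y‖ₑ ≤ g y) :
    ∫⁻ y, ‖W y‖ₑ ^ 2 ≤ (∫⁻ y, g y) ^ 2 := by
  have hmp := (EuclideanSpace.volume_preserving_symm_measurableEquiv_toLp (Fin 2)).symm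
  have hpt : ∀ (y : Fin 2 → ℝ) (i : Fin 2), ‖W (WithLp.toLp 2 y)‖ₑ
      ≤ ∫⁻ t, g (WithLp.toLp 2 (Function.update y i t)) := by
    intro y i
    have h := enorm_le_lintegral_add_deriv (a := y i)
      (w := fun t => W (WithLp.toLp 2 (Function.update y i t)))
      (w' := fun t => D i (WithLp.toLp 2 (Function.update y i t))) (fun t _ => by
        have h1 : HasDerivAt (fun s : ℝ => W (WithLp.toLp 2 (Function.update y i t)
          + s • EuclideanSpace.single i (1 : ℝ))) (D i (WithLp.toLp 2 (Function.update y i t)))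
          (t - t) := by rw [sub_self]; exact hD i _
        have h2 := HasDerivAt.comp_sub_const t t h1
        refine h2.congr_of_eventuallyEq (Eventually.of_forall fun s => ?_)
        dsimp only
        congr 1
        ext j
        rcases eq_or_ne j i with rfl | hj
        · simp
        · simp [hj])
    simp only [Function.update_eq_self] at h
    refine h.trans ((setLIntegral_le_lintegral _ _).trans (lintegral_mono fun t => hle i _))
  have hgm : Measurable (fun y : Fin 2 → ℝ => g (WithLp.toLp 2 y)) :=
    hg.comp (MeasurableEquiv.toLp 2 (Fin 2 → ℝ)).measurable
  have h := lintegral_prod_lintegral_pow_le (fun _ : Fin 2 => (volume : Measure ℝ))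
    (p := 2) (by simpa using Real.HolderConjugate.two_two) hgm
  have e1 : ∫⁻ y, ‖W y‖ₑ ^ 2 = ∫⁻ y : Fin 2 → ℝ, ‖W (WithLp.toLp 2 y)‖ₑ ^ 2 :=
    (hmp.lintegral_comp_emb (MeasurableEquiv.measurableEmbedding _) _).symm
  have e2 : ∫⁻ y, g y = ∫⁻ y : Fin 2 → ℝ, g (WithLp.toLp 2 y) :=
    (hmp.lintegral_comp_emb (MeasurableEquiv.measurableEmbedding _) _).symm
  rw [e1, e2]
  refine le_trans (lintegral_mono fun y => ?_) (h.trans (le_of_eq ?_))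
  · simp only [Fin.prod_univ_two, Fintype.card_fin, pow_two]
    norm_num
    exact mul_le_mul' (hpt y 0) (hpt y 1)
  · rw [← ENNReal.rpow_natCast]; norm_num [volume_pi]

namespace MemH1

variable {N : ℕ} {v : ℝ × EN N → ℝ}

lemma continuous_slice (hv : MemH1 v) {x : ℝ} (hx : 0 < x) : Continuous (fun y => v (x, y)) := by
  have : Continuous (fun y : EN N => (x, y)) := by fun_prop
  exact hv.contOn.comp_continuous this (fun y => hx.le)

lemma measurable_gradSq (v : ℝ × EN N → ℝ) : Measurable (gradSq v) := by
  unfold gradSq gradDot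
  exact ((measurable_fderiv_dir v _).mul (measurable_fderiv_dir v _)).add
    (Finset.measurable_fun_sum _ fun i _ =>
      (measurable_fderiv_dir v _).mul (measurable_fderiv_dir v _))

/-- The `L²` norms of the slices are uniformly bounded. -/
lemma exists_lintegral_slice_sq_le (hv : MemH1 v) : ∃ S : ℝ≥0∞, S ≠ ⊤ ∧
    ∀ x > 0, ∫⁻ y, ‖v (x, y) ^ 2‖ₑ ≤ S := by
  set h : ℝ × EN N → ℝ≥0∞ := fun p => ‖v p ^ 2‖ₑ + ‖2 * (v p * fderiv ℝ v p (ex N))‖ₑ with hh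
  have hInt : ∫⁻ p in upperHalf N, h p ≠ ⊤ := by
    rw [hh, lintegral_add_left' hv.memL2.1.enorm]
    exact ENNReal.add_ne_top.2 ⟨hv.memL2.2.ne, (hv.mul_ex.const_mul 2).2.ne⟩
  have hm : AEMeasurable h (volume.restrict (upperHalf N)) :=
    hv.memL2.1.enorm.add (hv.mul_ex.const_mul 2).1.enorm
  refine ⟨_, hInt, fun x hx => ?_⟩
  rw [volume_restrict_upperHalf] at hm ⊢
  rw [lintegral_prod_symm _ hm]
  refine lintegral_mono fun y => ?_
  refine (enorm_le_lintegral_add_deriv (a := x) (w := fun r => v (r, y) ^ 2)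
    (w' := fun r => 2 * (v (r, y) * fderiv ℝ v (r, y) (ex N))) fun t ht => ?_).trans
    (lintegral_mono_set (Ioi_subset_Ioi hx.le))
  exact ((hv.hasDerivAt_fst (hx.trans_le ht) y).pow 2).congr_deriv (by simp; ring)

end MemH1

lemma MemH1.integrable_pow_four {v : ℝ × EN 2 → ℝ} (hv : MemH1 v) :
    IntegrableOn (fun p => v p ^ 4) (upperHalf 2) := by
  obtain ⟨S, hS, hSle⟩ := hv.exists_lintegral_slice_sq_le
  set b : ℝ × EN 2 → ℝ := fun p => |v p| + 2 * √(gradSq v p) with hb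
  have hb0 : ∀ p, 0 ≤ b p := fun p => by positivity
  have hslice : ∀ x > 0, ∫⁻ y, ‖v (x, y) ^ 4‖ₑ ≤ S * ∫⁻ y, ‖b (x, y) ^ 2‖ₑ := by
    intro x hx
    have hvm : Measurable (fun y => v (x, y)) := (hv.continuous_slice hx).measurable
    have hbm : Measurable (fun y => b (x, y)) :=
      hvm.norm.add ((((MemH1.measurable_gradSq v).comp measurable_prodMk_left).sqrt).const_mul 2)
    have h1 := lintegral_sq_le_of_planar (W := fun y => v (x, y) ^ 2)
      (D := fun i y => 2 * (v (x, y) * fderiv ℝ v (x, y) (ey i)))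
      (g := fun y => ‖v (x, y)‖ₑ * ‖b (x, y)‖ₑ) (fun i y => by
        have h3 : HasDerivAt (fun t : ℝ => v (x, y + t • EuclideanSpace.single i (1 : ℝ)))
          (fderiv ℝ v (x, y) (ey i)) 0 := hv.hasLineDerivAt_snd hx y i
        refine (h3.pow 2).congr_deriv ?_
        simp only [Nat.cast_ofNat, Nat.reduceSub, pow_one, zero_smul, add_zero]; ring)
      (hvm.enorm.mul hbm.enorm) (fun i y => by
        have h4 : |fderiv ℝ v (x, y) (ey i)| ≤ √(gradSq v (x, y)) :=
          Real.abs_le_sqrt (sq_fderiv_ey_le_gradSq v _ i)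
        simp only [← ofReal_norm]
        rw [← ENNReal.ofReal_add (norm_nonneg _) (norm_nonneg _),
          ← ENNReal.ofReal_mul (norm_nonneg _)]
        apply ENNReal.ofReal_le_ofReal
        simp only [Real.norm_eq_abs, abs_pow, abs_mul, abs_of_nonneg (hb0 (x, y)), abs_two]
        simp only [hb]
        nlinarith [mul_le_mul_of_nonneg_left h4 (abs_nonneg (v (x, y)))])
    have h2 := sq_lintegral_mul_le (μ := volume) hvm.enorm.aemeasurable hbm.enorm.aemeasurable
    calc ∫⁻ y, ‖v (x, y) ^ 4‖ₑ = ∫⁻ y, ‖v (x, y) ^ 2‖ₑ ^ 2 := by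
          simp only [← enorm_pow, ← pow_mul]
      _ ≤ _ := h1.trans h2
      _ ≤ _ := by
          simp only [← enorm_pow]
          gcongr
          exact hSle x hx
  have hb2 : IntegrableOn (fun p => b p ^ 2) (upperHalf 2) := by
    refine ((hv.memL2.const_mul 2).add (hv.gradL2.const_mul 8)).mono'
      ((hv.aesm.norm.add ((MemH1.measurable_gradSq v).sqrt.const_mul 2).aestronglyMeasurable).pow 2)
      (Eventually.of_forall fun p => ?_)
    have hg := Real.sq_sqrt (gradSq_nonneg v p)
    have hv2 := sq_abs (v p)
    simp only [norm_pow, Real.norm_eq_abs, abs_of_nonneg (hb0 p), Pi.add_apply]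
    simp only [hb]
    nlinarith [sq_nonneg (|v p| - 2 * √(gradSq v p))]
  have hm4 : AEStronglyMeasurable (fun p => v p ^ 4) (volume.restrict (upperHalf 2)) :=
    hv.aesm.pow 4
  refine ⟨hm4, ?_⟩
  have hmb := hb2.1.enorm
  have hm4' := hm4.enorm
  have hfin := hb2.2
  rw [HasFiniteIntegral] at hfin ⊢
  rw [volume_restrict_upperHalf] at hm4' hmb hfin ⊢
  rw [lintegral_prod _ hmb] at hfin
  rw [lintegral_prod _ hm4']
  refine (setLIntegral_mono' measurableSet_Ioi hslice).trans_lt ?_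
  rw [lintegral_const_mul' _ _ hS]
  exact ENNReal.mul_lt_top hS.lt_top hfin

lemma MemH1.exists_integrable_trace_pow {N : ℕ} (hN : 2 ≤ N) {v : ℝ × EN N → ℝ}
    (hv : MemH1 v) : ∃ n : ℕ, 2 ≤ n ∧ ((N : ℝ) + 1) / (N - 1) ≤ n ∧
      Integrable (fun y => v (0, y) ^ n) := by
  rcases hN.eq_or_lt with rfl | hN3
  · refine ⟨3, by norm_num, by norm_num, ?_⟩
    have h4 := hv.integrable_pow_four
    refine (integral_deriv_fst_upperHalf (w := fun p => v p ^ 3)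
      (w' := fun p => 3 * (v p ^ 2 * fderiv ℝ v p (ex 2))) (hv.contOn.pow 3) ?_ ?_
      (Integrable.const_mul ?_ 3)).1
    · intro x hx y
      exact ((hv.hasDerivAt_fst hx y).pow 3).congr_deriv (by simp; ring)
    · refine (hv.memL2.add h4).mono' (hv.aesm.pow 3) (Eventually.of_forall fun p => ?_)
      simp only [norm_pow, Real.norm_eq_abs, Pi.add_apply]
      rw [← sq_abs, show v p ^ 4 = |v p| ^ 4 by rw [← abs_pow]; exact (abs_of_nonneg (by positivity)).symm]
      nlinarith [sq_nonneg (|v p| ^ 2 - |v p|), abs_nonneg (v p), sq_nonneg (|v p|), sq_nonneg (|v p| ^ 2)]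
    · refine integrable_mul_of_integrable_sq (hv.aesm.pow 2)
        (measurable_fderiv_dir v _).aestronglyMeasurable ?_ hv.sq_ex
      simpa [← pow_mul, IntegrableOn] using h4
  · refine ⟨2, le_rfl, ?_, hv.integrable_trace_sq⟩
    have : (3 : ℝ) ≤ N := by exact_mod_cast hN3
    rw [div_le_iff₀ (by linarith)]; push_cast; linarith
/-! ### Gaussian test functions -/

lemma exists_exp_neg_le_inv_pow {c : ℝ} (hc : 0 < c) (k : ℕ) :
    ∃ C : ℝ, 0 < C ∧ ∀ s : ℝ, 0 ≤ s → exp (-(c * s)) ≤ C / (1 + s) ^ k := by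
  refine ⟨k.factorial * (c ^ k)⁻¹ * exp c, by positivity, fun s hs => ?_⟩
  have h := Real.pow_div_factorial_le_exp (c * (1 + s)) (by positivity) k
  rw [mul_pow, mul_add, mul_one, exp_add, div_le_iff₀ (by positivity)] at h
  rw [le_div_iff₀ (by positivity), exp_neg, inv_mul_le_iff₀ (exp_pos _)]
  have hck : 0 < c ^ k := by positivity
  rw [show exp (c * s) * (k.factorial * (c ^ k)⁻¹ * exp c)
    = (exp c * exp (c * s) * k.factorial) / c ^ k by field_simp, le_div_iff₀ hck]
  linarith

lemma exists_exp_inv_mul_exp_le {μ c : ℝ} (hμ : 0 < μ) (hc : 0 < c) (k : ℕ) :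
    ∃ C : ℝ, 0 < C ∧ ∀ r s : ℝ, 0 < r → 0 ≤ s →
      exp (-(μ / r)) * exp (-(c * r * s)) ≤ C / (1 + s) ^ k := by
  set D : ℝ := (2 / (μ * c)) ^ k * (k.factorial * k.factorial) with hD
  have hD0 : 0 < D := by positivity
  refine ⟨2 ^ k + D, by positivity, fun r s hr hs => ?_⟩
  rw [le_div_iff₀ (by positivity)]
  have hμr : 0 < μ / r := by positivity
  have hcrs : 0 ≤ c * r * s := by positivity
  rcases le_total s 1 with h1 | h1
  · have e1 : exp (-(μ / r)) ≤ 1 := exp_le_one_iff.2 (by linarith)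
    have e2 : exp (-(c * r * s)) ≤ 1 := exp_le_one_iff.2 (by linarith)
    have e3 : (1 + s) ^ k ≤ 2 ^ k := pow_le_pow_left₀ (by linarith) (by linarith) k
    calc exp (-(μ / r)) * exp (-(c * r * s)) * (1 + s) ^ k ≤ 1 * 1 * 2 ^ k := by gcongr
      _ ≤ 2 ^ k + D := by linarith
  · have h2 := Real.pow_div_factorial_le_exp _ hμr.le k
    have h3 := Real.pow_div_factorial_le_exp _ hcrs k
    have h4 := mul_le_mul h2 h3 (by positivity) (exp_pos _).le
    have e3 : (1 + s) ^ k ≤ (2 * s) ^ k := pow_le_pow_left₀ (by linarith) (by linarith) k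
    have e4 : (2 * s) ^ k = D * ((μ / r) ^ k / k.factorial * ((c * r * s) ^ k / k.factorial)) := by
      rw [hD, div_pow, div_pow, mul_pow, mul_pow, mul_pow, mul_pow]; field_simp
    have e5 : (1 + s) ^ k ≤ D * (exp (μ / r) * exp (c * r * s)) :=
      (e3.trans_eq e4).trans (mul_le_mul_of_nonneg_left h4 hD0.le)
    rw [exp_neg, exp_neg, ← mul_inv, inv_mul_le_iff₀ (by positivity)]
    refine e5.trans ?_
    rw [mul_comm]
    gcongr
    linarith [show (0 : ℝ) < 2 ^ k by positivity]

/-- The squared distance from `p` to the point `(-a, z)`. -/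
def sqDist {N : ℕ} (a : ℝ) (z : EN N) (p : ℝ × EN N) : ℝ := (p.1 + a) ^ 2 + ‖p.2 - z‖ ^ 2

lemma sqDist_nonneg {N : ℕ} (a : ℝ) (z : EN N) (p : ℝ × EN N) : 0 ≤ sqDist a z p := by
  unfold sqDist; positivity

lemma continuous_sqDist {N : ℕ} (a : ℝ) (z : EN N) : Continuous (sqDist a z) := by
  unfold sqDist; fun_prop

lemma integrable_inv_one_add_sqDist {N : ℕ} (a : ℝ) (z : EN N) :
    Integrable (fun p => 1 / (1 + sqDist a z p) ^ (N + 2)) := by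
  have : (volume : Measure (ℝ × EN N)).IsAddHaarMeasure := by
    rw [Measure.volume_eq_prod]; infer_instance
  have h := integrable_rpow_neg_one_add_norm_sq (E := ℝ × EN N) (μ := volume)
    (r := 2 * ((N + 2 : ℕ) : ℝ)) (by simp; linarith)
  have h2 := h.comp_sub_right ((-a, z) : ℝ × EN N)
  refine h2.mono' ?_ (Eventually.of_forall fun p => ?_)
  · refine (continuous_const.div ((continuous_const.add (continuous_sqDist a z)).pow _)
      fun p => ?_).aestronglyMeasurable
    have := sqDist_nonneg a z p
    exact pow_ne_zero _ (show (0 : ℝ) < 1 + sqDist a z p by linarith).ne'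
  · have hs := sqDist_nonneg a z p
    have hn : ‖p - (-a, z)‖ ^ 2 ≤ sqDist a z p := by
      rw [Prod.norm_def]
      rcases max_choice ‖(p - (-a, z)).1‖ ‖(p - (-a, z)).2‖ with h | h
      · rw [h]; simp [sqDist]
      · rw [h]; simp [sqDist, sq_nonneg]
    rw [Real.norm_of_nonneg (by positivity), show -(2 * ((N + 2 : ℕ) : ℝ)) / 2
      = -((N + 2 : ℕ) : ℝ) by ring, rpow_neg (by positivity), rpow_natCast, one_div]
    gcongr

lemma integrable_inv_one_add_normSq {N : ℕ} (z : EN N) :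
    Integrable (fun y => 1 / (1 + ‖y - z‖ ^ 2) ^ (N + 2)) := by
  have h := integrable_rpow_neg_one_add_norm_sq (E := EN N) (μ := volume)
    (r := 2 * ((N + 2 : ℕ) : ℝ)) (by simp; linarith)
  refine (h.comp_sub_right z).congr (Eventually.of_forall fun y => ?_)
  simp only
  rw [show -(2 * ((N + 2 : ℕ) : ℝ)) / 2
      = -((N + 2 : ℕ) : ℝ) by ring, rpow_neg (by positivity), rpow_natCast, one_div]

/-- The Gaussian test function centred at `(-a, z)`. -/
def gaussTest {N : ℕ} (r a : ℝ) (z : EN N) (p : ℝ × EN N) : ℝ := exp (-(r * sqDist a z p))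

lemma continuous_gaussTest {N : ℕ} (r a : ℝ) (z : EN N) : Continuous (gaussTest r a z) := by
  have := continuous_sqDist a z
  unfold gaussTest; fun_prop

lemma differentiable_gaussTest {N : ℕ} (r a : ℝ) (z : EN N) :
    Differentiable ℝ (gaussTest r a z) := by
  have h : Differentiable ℝ (sqDist a z) := by
    unfold sqDist
    exact ((differentiable_fst.add_const a).pow 2).add
      ((differentiable_snd.sub_const z).norm_sq ℝ)
  unfold gaussTest
  exact (h.const_mul r).neg.exp

lemma hasDerivAt_gaussTest_fst {N : ℕ} (r a : ℝ) (z : EN N) (x : ℝ) (y : EN N) :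
    HasDerivAt (fun t => gaussTest r a z (t, y))
      (-(2 * r * (x + a)) * gaussTest r a z (x, y)) x := by
  have h1 : HasDerivAt (fun t => sqDist a z (t, y)) (2 * (x + a)) x := by
    simp only [sqDist]
    exact ((((hasDerivAt_id x).add_const a).pow 2).add_const _).congr_deriv (by simp)
  exact (h1.const_mul r).neg.exp.congr_deriv (by simp only [gaussTest, Pi.neg_apply]; ring)

lemma hasDerivAt_gaussTest_line {N : ℕ} (r a : ℝ) (z : EN N) (x : ℝ) (y : EN N) (i : Fin N) :
    HasDerivAt (fun t : ℝ => gaussTest r a z (x, y + t • EuclideanSpace.single i (1 : ℝ)))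
      (-(2 * r * (y i - z i)) * gaussTest r a z (x, y)) 0 := by
  have h1 : HasDerivAt (fun t : ℝ => sqDist a z (x, y + t • EuclideanSpace.single i (1 : ℝ)))
      (2 * (y i - z i)) 0 := by
    simp only [sqDist]
    exact (hasDerivAt_norm_sq_line y z i).const_add _
  exact (h1.const_mul r).neg.exp.congr_deriv (by simp only [gaussTest, Pi.neg_apply, zero_smul, add_zero]; ring)

lemma fderiv_gaussTest_ex {N : ℕ} (r a : ℝ) (z : EN N) (p : ℝ × EN N) :
    fderiv ℝ (gaussTest r a z) p (ex N) = -(2 * r * (p.1 + a)) * gaussTest r a z p :=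
  (hasDerivAt_slice_fst (x := p.1) (y := p.2) (differentiable_gaussTest r a z p)).unique
    (hasDerivAt_gaussTest_fst r a z p.1 p.2)

lemma fderiv_gaussTest_ey {N : ℕ} (r a : ℝ) (z : EN N) (p : ℝ × EN N) (i : Fin N) :
    fderiv ℝ (gaussTest r a z) p (ey i) = -(2 * r * (p.2 i - z i)) * gaussTest r a z p :=
  HasDerivAt.unique
    (hasLineDerivAt_slice_snd (x := p.1) (y := p.2) i (differentiable_gaussTest r a z p))
    (hasDerivAt_gaussTest_line r a z p.1 p.2 i)

lemma sq_coord_le_sqDist {N : ℕ} (a : ℝ) (z : EN N) (p : ℝ × EN N) (i : Fin N) :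
    (p.2 i - z i) ^ 2 ≤ sqDist a z p := by
  have h1 := Finset.single_le_sum (f := fun i => (p.2 i - z i) ^ 2) (fun i _ => sq_nonneg _)
    (Finset.mem_univ i)
  rw [sum_sq_sub] at h1
  simp only [sqDist]; nlinarith [sq_nonneg (p.1 + a)]

lemma sq_fst_le_sqDist {N : ℕ} (a : ℝ) (z : EN N) (p : ℝ × EN N) :
    (p.1 + a) ^ 2 ≤ sqDist a z p := by
  simp only [sqDist]; nlinarith [sq_nonneg ‖p.2 - z‖]

lemma mul_exp_neg_le (s : ℝ) : s * exp (-s) ≤ 2 * exp (-(s / 2)) := by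
  have h : s / 2 ≤ exp (s / 2) := by linarith [add_one_le_exp (s / 2)]
  have h2 : exp (-s) = exp (-(s / 2)) * exp (-(s / 2)) := by rw [← exp_add]; ring_nf
  have h3 : exp (s / 2) * exp (-(s / 2)) = 1 := by rw [← exp_add]; simp
  have h4 := mul_le_mul_of_nonneg_right (mul_le_mul_of_nonneg_right h
    (exp_pos (-(s / 2))).le) (exp_pos (-(s / 2))).le
  rw [h3] at h4
  rw [h2]; linarith

/-- Functions dominated by a Gaussian are square integrable. -/
lemma integrable_sq_of_le_gaussTest {N : ℕ} {r a : ℝ} (hr : 0 < r) (z : EN N)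
    {Φ : ℝ × EN N → ℝ} (hΦ : Continuous Φ) {C : ℝ}
    (hle : ∀ p, |Φ p| ≤ C * exp (-(r * sqDist a z p / 2))) :
    Integrable (fun p => Φ p ^ 2) := by
  obtain ⟨D, hD, hDle⟩ := exists_exp_neg_le_inv_pow hr (N + 2)
  refine ((integrable_inv_one_add_sqDist a z).const_mul (C ^ 2 * D)).mono'
    (hΦ.pow 2).aestronglyMeasurable (Eventually.of_forall fun p => ?_)
  rw [norm_pow, Real.norm_eq_abs]
  calc |Φ p| ^ 2 ≤ (C * exp (-(r * sqDist a z p / 2))) ^ 2 :=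
        pow_le_pow_left₀ (abs_nonneg _) (hle p) 2
    _ = C ^ 2 * exp (-(r * sqDist a z p)) := by
        rw [mul_pow, ← exp_nat_mul]; congr 2; push_cast; ring
    _ ≤ C ^ 2 * (D / (1 + sqDist a z p) ^ (N + 2)) := by
        gcongr; exact hDle _ (sqDist_nonneg a z p)
    _ = _ := by ring

section GaussBounds

variable {N : ℕ} {r a : ℝ} (z : EN N) (p : ℝ × EN N)

lemma gaussTest_pos : 0 < gaussTest r a z p := exp_pos _

lemma gaussTest_le (hr : 0 < r) : gaussTest r a z p ≤ exp (-(r * sqDist a z p / 2)) := by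
  have := sqDist_nonneg a z p
  exact exp_le_exp.2 (by nlinarith [mul_nonneg hr.le this])

lemma abs_linear_gaussTest_le (hr : 0 < r) {X : ℝ} (hX : X ^ 2 ≤ sqDist a z p) :
    |-(2 * r * X) * gaussTest r a z p| ≤ (r + 2) * exp (-(r * sqDist a z p / 2)) := by
  have h0 := gaussTest_le (a := a) z p hr
  have h1 := mul_exp_neg_le (r * sqDist a z p)
  have hp := gaussTest_pos (r := r) (a := a) z p
  rw [abs_mul, abs_of_pos hp, abs_neg, abs_mul, abs_of_pos (show 0 < 2 * r by linarith)]
  have h2 : 2 * r * |X| ≤ r + r * sqDist a z p := by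
    have := sq_abs X
    nlinarith [sq_nonneg (|X| - 1), mul_le_mul_of_nonneg_left hX hr.le]
  have h3 := mul_le_mul_of_nonneg_right h2 hp.le
  have h4 : r * gaussTest r a z p ≤ r * exp (-(r * sqDist a z p / 2)) := by gcongr
  simp only [gaussTest] at *
  linarith

lemma abs_quadratic_gaussTest_le (hr : 0 < r) {X b : ℝ} (hX0 : 0 ≤ X) (hX : X ≤ sqDist a z p) (hb : 0 ≤ b) :
    |(4 * r ^ 2 * X - b) * gaussTest r a z p|
      ≤ (8 * r + b) * exp (-(r * sqDist a z p / 2)) := by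
  have h0 := gaussTest_le (a := a) z p hr
  have h1 := mul_exp_neg_le (r * sqDist a z p)
  have hp := gaussTest_pos (r := r) (a := a) z p
  rw [abs_mul, abs_of_pos hp]
  have h2 : |4 * r ^ 2 * X - b| ≤ 4 * r * (r * sqDist a z p) + b := by
    have h5 : 4 * r ^ 2 * X ≤ 4 * r * (r * sqDist a z p) := by
      rw [show 4 * r * (r * sqDist a z p) = 4 * r ^ 2 * sqDist a z p by ring]; gcongr
    have h6 : 0 ≤ 4 * r ^ 2 * X := by positivity
    rw [abs_le]; constructor <;> linarith
  have h3 := mul_le_mul_of_nonneg_right h2 hp.le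
  have h4 : b * gaussTest r a z p ≤ b * exp (-(r * sqDist a z p / 2)) := by gcongr
  have h7 := mul_le_mul_of_nonneg_left h1 (show 0 ≤ 4 * r by linarith)
  simp only [gaussTest] at *
  nlinarith

end GaussBounds

lemma memH1_gaussTest {N : ℕ} {r : ℝ} (hr : 0 < r) (a : ℝ) (z : EN N) :
    MemH1 (gaussTest r a z) where
  contOn := (continuous_gaussTest r a z).continuousOn
  diff := fun p _ => differentiable_gaussTest r a z p
  memL2 := (integrable_sq_of_le_gaussTest hr z (continuous_gaussTest r a z) (C := 1)
    fun p => by rw [abs_of_pos (gaussTest_pos z p), one_mul]; exact gaussTest_le z p hr).restrict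
  gradL2 := by
    simp only [gradSq, gradDot, fderiv_gaussTest_ex, fderiv_gaussTest_ey, ← pow_two]
    have hc := continuous_gaussTest r a z
    refine Integrable.add ?_ (integrable_finsetSum _ fun i _ => ?_)
    · exact (integrable_sq_of_le_gaussTest hr z (by fun_prop)
        fun p => abs_linear_gaussTest_le z p hr (sq_fst_le_sqDist a z p)).restrict
    · exact (integrable_sq_of_le_gaussTest hr z (by fun_prop)
        fun p => abs_linear_gaussTest_le z p hr (sq_coord_le_sqDist a z p i)).restrict
/-! ### The weak formulation tested with Gaussians -/

lemma memH1_integrable_mul_of_le {N : ℕ} {r a : ℝ} (hr : 0 < r) (z : EN N)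
    {w Φ : ℝ × EN N → ℝ} (hwm : AEStronglyMeasurable w (volume.restrict (upperHalf N)))
    (hw : IntegrableOn (fun p => w p ^ 2) (upperHalf N)) (hΦ : Continuous Φ) {C : ℝ}
    (hle : ∀ p, |Φ p| ≤ C * exp (-(r * sqDist a z p / 2))) :
    IntegrableOn (fun p => w p * Φ p) (upperHalf N) :=
  integrable_mul_of_integrable_sq hwm hΦ.aestronglyMeasurable hw
    (integrable_sq_of_le_gaussTest hr z hΦ hle).restrict

/-- Green's formula against a Gaussian. -/
lemma MemH1.green_gaussTest {N : ℕ} {v : ℝ × EN N → ℝ} (hv : MemH1 v) {r : ℝ} (hr : 0 < r)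
    (a : ℝ) (z : EN N) :
    IntegrableOn (gradDot v (gaussTest r a z)) (upperHalf N) ∧
    IntegrableOn (fun p => v p * ((4 * r ^ 2 * sqDist a z p - 2 * (N + 1) * r)
      * gaussTest r a z p)) (upperHalf N) ∧
    ∫ p in upperHalf N, (gradDot v (gaussTest r a z) p
      + v p * ((4 * r ^ 2 * sqDist a z p - 2 * (N + 1) * r) * gaussTest r a z p))
      = ∫ y, v (0, y) * (2 * a * r * gaussTest r a z (0, y)) := by
  set E := gaussTest r a z with hE
  have hEc : Continuous E := continuous_gaussTest r a z
  set X : ℝ × EN N → ℝ := fun p => -(2 * r * (p.1 + a)) * E p with hX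
  set X' : ℝ × EN N → ℝ := fun p => (4 * r ^ 2 * (p.1 + a) ^ 2 - 2 * r) * E p with hX'
  set Y : Fin N → ℝ × EN N → ℝ := fun i p => -(2 * r * (p.2 i - z i)) * E p with hY
  set Y' : Fin N → ℝ × EN N → ℝ := fun i p => (4 * r ^ 2 * (p.2 i - z i) ^ 2 - 2 * r) * E p
    with hY'
  have hXc : Continuous X := by fun_prop
  have hX'c : Continuous X' := by fun_prop
  have hYc : ∀ i, Continuous (Y i) := fun i => by fun_prop
  have hY'c : ∀ i, Continuous (Y' i) := fun i => by fun_prop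
  have hXb : ∀ p, |X p| ≤ _ := fun p => abs_linear_gaussTest_le z p hr (sq_fst_le_sqDist a z p)
  have hYb : ∀ i p, |Y i p| ≤ _ := fun i p =>
    abs_linear_gaussTest_le z p hr (sq_coord_le_sqDist a z p i)
  have hX'b : ∀ p, |X' p| ≤ _ := fun p =>
    abs_quadratic_gaussTest_le z p hr (sq_nonneg _) (sq_fst_le_sqDist a z p) (by linarith : 0 ≤ 2 * r)
  have hY'b : ∀ i p, |Y' i p| ≤ _ := fun i p =>
    abs_quadratic_gaussTest_le z p hr (sq_nonneg _) (sq_coord_le_sqDist a z p i)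
      (by linarith : 0 ≤ 2 * r)
  have i1 : IntegrableOn (fun p => fderiv ℝ v p (ex N) * X p) (upperHalf N) :=
    memH1_integrable_mul_of_le hr z (measurable_fderiv_dir v _).aestronglyMeasurable hv.sq_ex hXc hXb
  have i2 : IntegrableOn (fun p => v p * X' p) (upperHalf N) :=
    memH1_integrable_mul_of_le hr z hv.aesm hv.memL2 hX'c hX'b
  have i3 : ∀ i, IntegrableOn (fun p => fderiv ℝ v p (ey i) * Y i p) (upperHalf N) := fun i =>
    memH1_integrable_mul_of_le hr z (measurable_fderiv_dir v _).aestronglyMeasurable (hv.sq_ey i)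
      (hYc i) (hYb i)
  have i4 : ∀ i, IntegrableOn (fun p => v p * Y' i p) (upperHalf N) := fun i =>
    memH1_integrable_mul_of_le hr z hv.aesm hv.memL2 (hY'c i) (hY'b i)
  have hx := (integral_deriv_fst_upperHalf (w := fun p => v p * X p)
    (w' := fun p => fderiv ℝ v p (ex N) * X p + v p * X' p)
    (hv.contOn.mul hXc.continuousOn) (fun x hx y => by
      have h1 : HasDerivAt (fun t => X (t, y)) (X' (x, y)) x := by
        refine HasDerivAt.congr_deriv (HasDerivAt.mul (c := fun t => -(2 * r * (t + a)))
          (((hasDerivAt_id x).add_const a).const_mul (2 * r)).neg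
          (hasDerivAt_gaussTest_fst r a z x y)) ?_
        simp only [hX', hE]; ring
      exact (hv.hasDerivAt_fst hx y).mul h1)
    (memH1_integrable_mul_of_le hr z hv.aesm hv.memL2 hXc hXb) (i1.add i2)).2
  have hy : ∀ i, ∫ p in upperHalf N, (fderiv ℝ v p (ey i) * Y i p + v p * Y' i p) = 0 := fun i =>
    integral_lineDeriv_upperHalf (w := fun p => v p * Y i p) (e := EuclideanSpace.single i 1)
      (fun x hx y => by
        have h1 : HasDerivAt (fun t : ℝ => Y i (x, y + t • EuclideanSpace.single i (1 : ℝ)))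
            (Y' i (x, y)) 0 := by
          refine HasDerivAt.congr_deriv (HasDerivAt.mul
            (c := fun t : ℝ => -(2 * r * ((y + t • EuclideanSpace.single i (1 : ℝ)) i - z i)))
            ((hasDerivAt_coord_line y z i).const_mul (2 * r)).neg
            (hasDerivAt_gaussTest_line r a z x y i)) ?_
          simp only [hY', hE, zero_smul, add_zero]; ring
        have h3 : HasDerivAt (fun t : ℝ => v (x, y + t • EuclideanSpace.single i (1 : ℝ)))
          (fderiv ℝ v (x, y) (ey i)) 0 := hv.hasLineDerivAt_snd hx y i
        refine (h3.mul h1).congr_deriv ?_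
        simp only [zero_smul, add_zero])
      (memH1_integrable_mul_of_le hr z hv.aesm hv.memL2 (hYc i) (hYb i)) ((i3 i).add (i4 i))
  have hgd : gradDot v E = fun p => fderiv ℝ v p (ex N) * X p
      + ∑ i, fderiv ℝ v p (ey i) * Y i p := by
    funext p
    simp only [gradDot, hE, fderiv_gaussTest_ex, fderiv_gaussTest_ey, hX, hY]
  have hlap : (fun p => v p * ((4 * r ^ 2 * sqDist a z p - 2 * (N + 1) * r) * E p))
      = fun p => v p * X' p + ∑ i, v p * Y' i p := by
    funext p
    simp only [hX', hY', sqDist, ← sum_sq_sub, ← Finset.mul_sum, ← Finset.sum_mul,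
      Finset.sum_sub_distrib, Finset.sum_const, Finset.card_univ, Fintype.card_fin, nsmul_eq_mul]
    ring
  have j1 : IntegrableOn (gradDot v E) (upperHalf N) := by
    rw [hgd]; exact i1.add (integrable_finsetSum _ fun i _ => i3 i)
  have j2 : IntegrableOn (fun p => v p * X' p + ∑ i, v p * Y' i p) (upperHalf N) :=
    i2.add (integrable_finsetSum _ fun i _ => i4 i)
  rw [hlap]
  refine ⟨j1, j2, ?_⟩
  have hsum : ∀ p, gradDot v E p + v p * ((4 * r ^ 2 * sqDist a z p - 2 * (N + 1) * r) * E p)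
      = (fderiv ℝ v p (ex N) * X p + v p * X' p)
        + ∑ i, (fderiv ℝ v p (ey i) * Y i p + v p * Y' i p) := by
    intro p
    rw [hgd, congrFun hlap p, Finset.sum_add_distrib]; ring
  simp only [hsum]
  have k1 : IntegrableOn (fun p => fderiv ℝ v p (ex N) * X p + v p * X' p) (upperHalf N) :=
    i1.add i2
  have k2 : ∀ i, IntegrableOn (fun p => fderiv ℝ v p (ey i) * Y i p + v p * Y' i p)
    (upperHalf N) := fun i => (i3 i).add (i4 i)
  rw [integral_add k1 (integrable_finsetSum _ fun i _ => k2 i),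
    integral_finsetSum _ fun i _ => k2 i, hx]
  simp only [hy, Finset.sum_const_zero, add_zero, ← integral_neg]
  refine integral_congr_ae (Eventually.of_forall fun y => ?_)
  simp only [hX]; ring

lemma IsWeakSolution.gaussTest_identity {N : ℕ} {m : ℝ} {f : ℝ → ℝ} {v : ℝ × EN N → ℝ}
    (hv : IsWeakSolution m f v) {r : ℝ} (hr : 0 < r) (a : ℝ) (z : EN N) :
    (∫ y, v (0, y) * (2 * a * r * gaussTest r a z (0, y)))
        - ∫ y, f (v (0, y)) * gaussTest r a z (0, y)
      = ∫ p in upperHalf N, v p * ((4 * r ^ 2 * sqDist a z p - 2 * (N + 1) * r - m ^ 2)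
          * gaussTest r a z p) := by
  obtain ⟨h1, h2, h3⟩ := hv.1.green_gaussTest hr a z
  have h4 := hv.2 _ (memH1_gaussTest hr a z)
  have i5 : IntegrableOn (fun p => m ^ 2 * v p * gaussTest r a z p) (upperHalf N) := by
    have := (memH1_integrable_mul_of_le hr z hv.1.aesm hv.1.memL2 (continuous_gaussTest r a z)
      (C := 1) (a := a) fun p => by
        rw [abs_of_pos (gaussTest_pos z p), one_mul]; exact gaussTest_le z p hr).const_mul (m ^ 2)
    simpa only [mul_assoc, IntegrableOn] using this
  rw [← h3, ← h4, integral_add h1 h2, integral_add h1 i5, add_sub_add_left_eq_sub,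
    ← integral_sub h2 i5]
  refine integral_congr_ae (Eventually.of_forall fun p => ?_)
  simp only; ring
/-! ### Bessel-type integrals -/

/-- The integrand of the Bessel-type integrals below. -/
def besselFn (β μ t r : ℝ) : ℝ := r ^ β * exp (-(μ / r)) * exp (-(r * t))

/-- Up to elementary factors, a modified Bessel function of the second kind. -/
def besselInt (β μ t : ℝ) : ℝ := ∫ r in Ioi (0 : ℝ), besselFn β μ t r

lemma besselFn_pos (β μ t : ℝ) {r : ℝ} (hr : 0 < r) : 0 < besselFn β μ t r := by
  unfold besselFn; have := rpow_pos_of_pos hr β; positivity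

lemma measurable_besselFn (β μ t : ℝ) : Measurable (besselFn β μ t) := by
  unfold besselFn; fun_prop

lemma exists_exp_neg_div_le {μ : ℝ} (hμ : 0 < μ) (k : ℕ) :
    ∃ C : ℝ, 0 < C ∧ ∀ r : ℝ, 0 < r → exp (-(μ / r)) ≤ C * r ^ k := by
  refine ⟨k.factorial / μ ^ k, by positivity, fun r hr => ?_⟩
  have h := Real.pow_div_factorial_le_exp (μ / r) (by positivity) k
  rw [exp_neg, inv_le_comm₀ (exp_pos _) (by positivity)]
  refine le_trans (le_of_eq ?_) h
  rw [div_pow]; field_simp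

lemma integrableOn_besselFn_zero {β t : ℝ} (hβ : -1 < β) (ht : 0 < t) :
    IntegrableOn (besselFn β 0 t) (Ioi 0) := by
  have h := integrableOn_rpow_mul_exp_neg_mul_rpow hβ one_pos ht
  refine h.congr_fun (fun r _ => ?_) measurableSet_Ioi
  simp [besselFn, mul_comm t]

lemma integrableOn_besselFn (β : ℝ) {μ t : ℝ} (hμ : 0 < μ) (ht : 0 < t) :
    IntegrableOn (besselFn β μ t) (Ioi 0) := by
  obtain ⟨k, hk⟩ := exists_nat_gt (-1 - β)
  obtain ⟨C, hC, hCle⟩ := exists_exp_neg_div_le hμ k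
  refine ((integrableOn_besselFn_zero (β := β + k) (by linarith) ht).const_mul C).mono'
    (measurable_besselFn β μ t).aestronglyMeasurable ?_
  filter_upwards [ae_restrict_mem measurableSet_Ioi] with r hr
  have hr' : 0 < r := hr
  rw [Real.norm_of_nonneg (besselFn_pos β μ t hr').le]
  simp only [besselFn, zero_div, neg_zero, exp_zero, mul_one]
  have := rpow_pos_of_pos hr' β
  rw [rpow_add hr', rpow_natCast]
  calc r ^ β * exp (-(μ / r)) * exp (-(r * t)) ≤ r ^ β * (C * r ^ k) * exp (-(r * t)) := by
        gcongr; exact hCle r hr'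
    _ = _ := by ring

lemma setIntegral_Ioi_pos {f : ℝ → ℝ} (hf : IntegrableOn f (Ioi 0)) (hpos : ∀ r > 0, 0 < f r) :
    0 < ∫ r in Ioi (0 : ℝ), f r := by
  rw [setIntegral_pos_iff_support_of_nonneg_ae _ hf]
  · have : Function.support f ∩ Ioi 0 = Ioi 0 := by
      ext r; simp only [mem_inter_iff, Function.mem_support, and_iff_right_iff_imp]
      exact fun hr => (hpos r hr).ne'
    rw [this]; simp
  · filter_upwards [ae_restrict_mem measurableSet_Ioi] with r hr using (hpos r hr).le

lemma setIntegral_Ioi_lt {f g : ℝ → ℝ} (hf : IntegrableOn f (Ioi 0)) (hg : IntegrableOn g (Ioi 0))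
    (hlt : ∀ r > 0, f r < g r) : ∫ r in Ioi (0 : ℝ), f r < ∫ r in Ioi (0 : ℝ), g r := by
  have h := setIntegral_Ioi_pos (hg.sub hf) (fun r hr => by
    simpa using hlt r hr)
  simp only [Pi.sub_apply] at h
  rw [integral_sub hg hf] at h
  linarith

lemma besselInt_pos (β : ℝ) {μ t : ℝ} (hμ : 0 < μ) (ht : 0 < t) : 0 < besselInt β μ t :=
  setIntegral_Ioi_pos (integrableOn_besselFn β hμ ht) fun _ hr => besselFn_pos β μ t hr

lemma besselInt_nonneg (β μ t : ℝ) : 0 ≤ besselInt β μ t :=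
  setIntegral_nonneg measurableSet_Ioi fun _ hr => (besselFn_pos β μ t hr).le

lemma besselInt_strictAntiOn (β : ℝ) {μ : ℝ} (hμ : 0 < μ) :
    StrictAntiOn (besselInt β μ) (Ioi 0) := by
  intro s hs t ht hst
  refine setIntegral_Ioi_lt (integrableOn_besselFn β hμ ht) (integrableOn_besselFn β hμ hs)
    fun r hr => ?_
  have := rpow_pos_of_pos hr β
  unfold besselFn
  gcongr

lemma besselInt_lt_zero {β μ t : ℝ} (hβ : -1 < β) (hμ : 0 < μ) (ht : 0 < t) :
    besselInt β μ t < besselInt β 0 t := by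
  refine setIntegral_Ioi_lt (integrableOn_besselFn β hμ ht) (integrableOn_besselFn_zero hβ ht)
    fun r hr => ?_
  have := rpow_pos_of_pos hr β
  unfold besselFn
  have h0 : 0 < r := hr
  gcongr

lemma besselInt_zero {β t : ℝ} (hβ : -1 < β) (ht : 0 < t) :
    besselInt β 0 t = Gamma (β + 1) * t ^ (-(β + 1)) := by
  have h := Real.integral_rpow_mul_exp_neg_mul_Ioi (a := β + 1) (by linarith) ht
  rw [besselInt]
  simp only [add_sub_cancel_right] at h
  simp only [besselFn, zero_div, neg_zero, exp_zero, mul_one]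
  simp only [mul_comm t] at h
  rw [h, one_div, inv_rpow ht.le, rpow_neg ht.le, mul_comm]

lemma besselInt_smul_sq {β μ a t : ℝ} (ha : 0 < a) :
    besselInt β μ (a ^ 2 * t) = (a ^ 2) ^ (-(β + 1)) * besselInt β (μ * a ^ 2) t := by
  have ha2 : 0 < a ^ 2 := by positivity
  have h := integral_comp_mul_left_Ioi (fun r => besselFn β (μ * a ^ 2) t r) 0 ha2
  rw [mul_zero, smul_eq_mul] at h
  have h2 : ∫ r in Ioi (0 : ℝ), besselFn β (μ * a ^ 2) t (a ^ 2 * r)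
      = (a ^ 2) ^ β * besselInt β μ (a ^ 2 * t) := by
    rw [besselInt, ← integral_const_mul]
    refine setIntegral_congr_fun measurableSet_Ioi fun r hr => ?_
    have hr' : 0 < r := hr
    simp only [besselFn]
    rw [mul_rpow ha2.le hr'.le, show μ * a ^ 2 / (a ^ 2 * r) = μ / r by field_simp,
      show a ^ 2 * r * t = r * (a ^ 2 * t) by ring]
    ring
  rw [h2] at h
  have hp := rpow_pos_of_pos ha2 β
  rw [besselInt.eq_def β (μ * a ^ 2), neg_add, rpow_add ha2, rpow_neg ha2.le, rpow_neg_one, mul_assoc, ← h]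
  field_simp

lemma hasDerivAt_besselInt (β : ℝ) {μ t : ℝ} (hμ : 0 < μ) (ht : 0 < t) :
    HasDerivAt (besselInt β μ) (-besselInt (β + 1) μ t) t := by
  have hball : Metric.ball t (t / 2) ∈ 𝓝 t := Metric.ball_mem_nhds t (by linarith)
  have h := (hasDerivAt_integral_of_dominated_loc_of_deriv_le
    (μ := volume.restrict (Ioi (0 : ℝ))) (F := fun s r => besselFn β μ s r)
    (F' := fun s r => -besselFn (β + 1) μ s r) (x₀ := t) (s := Metric.ball t (t / 2))
    (bound := besselFn (β + 1) μ (t / 2)) hball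
    (Eventually.of_forall fun s => (measurable_besselFn β μ s).aestronglyMeasurable)
    (integrableOn_besselFn β hμ ht)
    (measurable_besselFn (β + 1) μ t).neg.aestronglyMeasurable ?_
    (integrableOn_besselFn (β + 1) hμ (by linarith)) ?_).2
  · refine h.congr_deriv ?_
    rw [integral_neg]; rfl
  · filter_upwards [ae_restrict_mem measurableSet_Ioi] with r hr s hs
    have hr' : 0 < r := hr
    rw [norm_neg, Real.norm_of_nonneg (besselFn_pos _ μ s hr').le]
    have hs' : t / 2 ≤ s := by
      rw [Metric.mem_ball, Real.dist_eq, abs_lt] at hs; linarith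
    have := rpow_pos_of_pos hr' (β + 1)
    unfold besselFn
    gcongr
  · filter_upwards [ae_restrict_mem measurableSet_Ioi] with r hr s _
    have hr' : 0 < r := hr
    simp only [besselFn]
    refine (((hasDerivAt_id s).const_mul r).neg.exp.const_mul
      (r ^ β * exp (-(μ / r)))).congr_deriv ?_
    rw [rpow_add_one hr'.ne']
    simp; ring

lemma continuousOn_besselInt (β : ℝ) {μ : ℝ} (hμ : 0 < μ) :
    ContinuousOn (besselInt β μ) (Ioi 0) := fun _ ht =>
  (hasDerivAt_besselInt β hμ ht).continuousAt.continuousWithinAt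

lemma exists_besselFn_le (β : ℝ) {μ : ℝ} (hμ : 0 < μ) (t₀ : ℝ) (k : ℕ) :
    ∃ C : ℝ, 0 < C ∧ ∀ t r, 0 ≤ t → 0 < r →
      besselFn β μ (t₀ + t) r ≤ C / (1 + t) ^ k * besselFn β (μ / 2) t₀ r := by
  obtain ⟨C, hC, hCle⟩ := exists_exp_inv_mul_exp_le (μ := μ / 2) (c := 1) (by linarith) one_pos k
  refine ⟨C, hC, fun t r ht hr => ?_⟩
  calc besselFn β μ (t₀ + t) r
      = (exp (-(μ / 2 / r)) * exp (-(1 * r * t))) * besselFn β (μ / 2) t₀ r := by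
        unfold besselFn
        rw [show -(μ / r) = -(μ / 2 / r) + -(μ / 2 / r) by field_simp; ring,
          show -(r * (t₀ + t)) = -(1 * r * t) + -(r * t₀) by ring, exp_add, exp_add]
        ring
    _ ≤ _ := mul_le_mul_of_nonneg_right (hCle r t hr ht) (besselFn_pos _ _ _ hr).le

lemma besselFn_anti (β μ : ℝ) {s t r : ℝ} (hst : s ≤ t) (hr : 0 < r) :
    besselFn β μ t r ≤ besselFn β μ s r := by
  have := rpow_pos_of_pos hr β
  unfold besselFn
  gcongr

/-- Rapid decay of the Bessel integrals. -/
lemma exists_besselInt_le (β : ℝ) {μ t₀ : ℝ} (hμ : 0 < μ) (ht₀ : 0 < t₀) (k : ℕ) :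
    ∃ C : ℝ, 0 < C ∧ ∀ t, 0 ≤ t → besselInt β μ (t₀ + t) ≤ C / (1 + t) ^ k := by
  obtain ⟨C, hC, hCle⟩ := exists_besselFn_le β hμ t₀ k
  have hI := besselInt_pos β (μ := μ / 2) (t := t₀) (by linarith) ht₀
  refine ⟨C * besselInt β (μ / 2) t₀, by positivity, fun t ht => ?_⟩
  rw [mul_div_right_comm, besselInt, besselInt, ← integral_const_mul]
  exact setIntegral_mono_on (integrableOn_besselFn β hμ (by linarith))
    ((integrableOn_besselFn β (by linarith) ht₀).const_mul _) measurableSet_Ioi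
    fun r hr => hCle t r ht hr

lemma integrable_mul_besselFn {α : Type*} [MeasurableSpace α] {ν : Measure α} [SFinite ν]
    {h s T : α → ℝ} (hs : Measurable s) (hT : Measurable T) {t₀ : ℝ} (ht₀ : 0 < t₀)
    (hs0 : ∀ p, 0 ≤ s p) (hTs : ∀ᵐ p ∂ν, t₀ + s p ≤ T p) {k : ℕ}
    (hh : Integrable (fun p => h p * (1 / (1 + s p) ^ k)) ν) (β : ℝ) {μ : ℝ} (hμ : 0 < μ) :
    Integrable (fun q : ℝ × α => h q.2 * besselFn β μ (T q.2) q.1)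
      ((volume.restrict (Ioi (0 : ℝ))).prod ν) := by
  obtain ⟨C, hC, hCle⟩ := exists_besselFn_le β hμ t₀ k
  have hdom := (((integrableOn_besselFn β (μ := μ / 2) (by linarith) ht₀).const_mul C).mul_prod
    hh.norm)
  have hhm : AEStronglyMeasurable h ν := by
    have h1 := hh.1.mul ((measurable_const.add hs).pow_const k).aestronglyMeasurable (μ := ν)
      (f := fun p => h p * (1 / (1 + s p) ^ k)) (g := fun p => (1 + s p) ^ k)
    refine h1.congr (Eventually.of_forall fun p => ?_)
    have : 1 + s p ≠ 0 := by linarith [hs0 p]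
    simp only [Pi.mul_apply]
    field_simp
  refine hdom.mono' (hhm.comp_snd.mul ?_) ?_
  · refine Measurable.aestronglyMeasurable ?_
    unfold besselFn
    have : Measurable (fun q : ℝ × α => T q.2) := hT.comp measurable_snd
    fun_prop
  · have e1 : ∀ᵐ q : ℝ × α ∂((volume.restrict (Ioi (0 : ℝ))).prod ν), 0 < q.1 :=
      Measure.quasiMeasurePreserving_fst.ae (ae_restrict_mem measurableSet_Ioi)
    have e2 : ∀ᵐ q : ℝ × α ∂((volume.restrict (Ioi (0 : ℝ))).prod ν), t₀ + s q.2 ≤ T q.2 :=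
      Measure.quasiMeasurePreserving_snd.ae hTs
    filter_upwards [e1, e2] with q hq hqT
    rw [norm_mul, norm_mul, Real.norm_of_nonneg (besselFn_pos _ _ _ hq).le,
      Real.norm_of_nonneg (show 0 ≤ 1 / (1 + s q.2) ^ k by have := hs0 q.2; positivity)]
    have h1 := (besselFn_anti β μ hqT hq).trans (hCle _ _ (hs0 q.2) hq)
    calc ‖h q.2‖ * besselFn β μ (T q.2) q.1
        ≤ ‖h q.2‖ * (C / (1 + s q.2) ^ k * besselFn β (μ / 2) t₀ q.1) := by gcongr
      _ = _ := by ring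

/-- Fubini's theorem for the Bessel integrals. -/
lemma integral_mul_besselInt {α : Type*} [MeasurableSpace α] {ν : Measure α} [SFinite ν]
    {h T : α → ℝ} {β μ : ℝ}
    (hInt : Integrable (fun q : ℝ × α => h q.2 * besselFn β μ (T q.2) q.1)
      ((volume.restrict (Ioi (0 : ℝ))).prod ν)) :
    Integrable (fun p => h p * besselInt β μ (T p)) ν ∧
    Integrable (fun r => ∫ p, h p * besselFn β μ (T p) r ∂ν) (volume.restrict (Ioi (0 : ℝ))) ∧
    ∫ r in Ioi (0 : ℝ), ∫ p, h p * besselFn β μ (T p) r ∂ν = ∫ p, h p * besselInt β μ (T p) ∂ν := by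
  refine ⟨?_, hInt.integral_prod_left, ?_⟩
  · have := hInt.integral_prod_right
    simp only [integral_const_mul] at this
    exact this
  · rw [integral_integral_swap hInt]
    simp only [integral_const_mul]
    rfl

lemma integral_besselFn_combination {β μ t : ℝ} (hβ : -2 < β) (hμ : 0 < μ) (ht : 0 < t) :
    t * besselInt (β + 2) μ t - (β + 2) * besselInt (β + 1) μ t - μ * besselInt β μ t = 0 := by
  have i0 := integrableOn_besselFn β hμ ht
  have i1 := integrableOn_besselFn (β + 1) hμ ht
  have i2 := integrableOn_besselFn (β + 2) hμ ht
  have hd : ∀ r ∈ Ioi (0 : ℝ), HasDerivAt (besselFn (β + 2) μ t)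
      ((β + 2) * besselFn (β + 1) μ t r + μ * besselFn β μ t r - t * besselFn (β + 2) μ t r) r := by
    intro r hr
    have hr' : 0 < r := hr
    have e1 : HasDerivAt (fun r : ℝ => r ^ (β + 2)) ((β + 2) * r ^ (β + 2 - 1)) r :=
      hasDerivAt_rpow_const (Or.inl hr'.ne')
    have e2 : HasDerivAt (fun r : ℝ => exp (-(μ / r))) (exp (-(μ / r)) * (μ / r ^ 2)) r := by
      have : HasDerivAt (fun r : ℝ => -(μ / r)) (μ / r ^ 2) r := by
        refine ((hasDerivAt_const r μ).div (hasDerivAt_id r) hr'.ne').neg.congr_deriv ?_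
        simp; ring
      exact this.exp
    have e3 : HasDerivAt (fun r : ℝ => exp (-(r * t))) (exp (-(r * t)) * (-t)) r := by
      have : HasDerivAt (fun r : ℝ => -(r * t)) (-t) r :=
        ((hasDerivAt_id r).mul_const t).neg.congr_deriv (by simp)
      exact this.exp
    refine ((e1.mul e2).mul e3).congr_deriv ?_
    simp only [besselFn, Pi.mul_apply]
    rw [show β + 2 - 1 = β + 1 by ring, show β + 2 = β + (2 : ℕ) by norm_num,
      rpow_add_natCast hr'.ne', rpow_add_one hr'.ne']
    field_simp
    push_cast
    ring
  have i3 : IntegrableOn (fun r => (β + 2) * besselFn (β + 1) μ t r + μ * besselFn β μ t r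
      - t * besselFn (β + 2) μ t r) (Ioi 0) :=
    ((i1.const_mul _).add (i0.const_mul _)).sub (i2.const_mul _)
  have hz : besselFn (β + 2) μ t 0 = 0 := by
    simp [besselFn, zero_rpow (show β + 2 ≠ 0 by linarith)]
  have hcont : ContinuousWithinAt (besselFn (β + 2) μ t) (Ici 0) 0 := by
    rw [ContinuousWithinAt, hz]
    have hup : Tendsto (fun r : ℝ => r ^ (β + 2)) (𝓝[≥] 0) (𝓝 0) := by
      have := (continuousAt_rpow_const 0 (β + 2) (Or.inr (by linarith))).tendsto
      rw [zero_rpow (show β + 2 ≠ 0 by linarith)] at this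
      exact this.mono_left nhdsWithin_le_nhds
    refine squeeze_zero' ?_ ?_ hup
    · filter_upwards [self_mem_nhdsWithin] with r hr
      have := rpow_nonneg (show (0 : ℝ) ≤ r from hr) (β + 2)
      unfold besselFn; positivity
    · filter_upwards [self_mem_nhdsWithin] with r hr
      have hr' : (0 : ℝ) ≤ r := hr
      have h1 := rpow_nonneg hr' (β + 2)
      have h2 : exp (-(μ / r)) ≤ 1 := exp_le_one_iff.2 (neg_nonpos.2 (by positivity))
      have h3 : exp (-(r * t)) ≤ 1 := exp_le_one_iff.2 (neg_nonpos.2 (by positivity))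
      unfold besselFn
      calc r ^ (β + 2) * exp (-(μ / r)) * exp (-(r * t)) ≤ r ^ (β + 2) * 1 * 1 := by gcongr
        _ = _ := by ring
  have h := integral_Ioi_of_hasDerivAt_of_tendsto hcont hd i3
    (tendsto_zero_of_hasDerivAt_of_integrableOn_Ioi hd i3 i2)
  have i4 : IntegrableOn (fun r => (β + 2) * besselFn (β + 1) μ t r + μ * besselFn β μ t r)
      (Ioi 0) := (i1.const_mul _).add (i0.const_mul _)
  rw [hz, integral_sub i4 (i2.const_mul _),
    integral_add (i1.const_mul _) (i0.const_mul _), integral_const_mul, integral_const_mul,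
    integral_const_mul] at h
  unfold besselInt
  linarith

lemma HypF.exists_rpow_bound {N : ℕ} {f : ℝ → ℝ} (hf : HypF N f) :
    ∃ p M : ℝ, 1 < p ∧ p < ((N : ℝ) + 1) / ((N : ℝ) - 1) ∧ 1 ≤ M ∧ ∀ t, M ≤ t → |f t| ≤ t ^ p := by
  obtain ⟨p, hp1, hp2, hlim⟩ := hf.f2
  have h1 : ∀ᶠ t in atTop, |f t / t ^ p| < 1 := by
    have := hlim.abs
    rw [abs_zero] at this
    exact this.eventually_lt_const one_pos
  obtain ⟨M, hM⟩ := eventually_atTop.1 h1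
  refine ⟨p, max M 1, hp1, hp2, le_max_right _ _, fun t ht => ?_⟩
  have ht1 : 1 ≤ t := (le_max_right _ _).trans ht
  have hpos : 0 < t ^ p := rpow_pos_of_pos (by linarith) p
  have h2 := hM t ((le_max_left _ _).trans ht)
  rw [abs_div, abs_of_pos hpos, div_lt_one hpos] at h2
  exact h2.le

lemma HypF.continuous {N : ℕ} {f : ℝ → ℝ} (hf : HypF N f) : Continuous f := hf.smooth.continuous

lemma exists_abs_le_on_Icc {f : ℝ → ℝ} (hf : Continuous f) (M : ℝ) :
    ∃ C, 0 < C ∧ ∀ t, 0 ≤ t → t ≤ M → |f t| ≤ C := by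
  obtain ⟨C, hC⟩ := (isCompact_Icc (a := (0 : ℝ)) (b := M)).exists_bound_of_continuousOn
    hf.continuousOn
  exact ⟨|C| + 1, by positivity, fun t h0 h1 =>
    (hC t ⟨h0, h1⟩).trans (by linarith [le_abs_self C])⟩

lemma HypF.exists_pow_bound {N : ℕ} {f : ℝ → ℝ} (hf : HypF N f) {n : ℕ}
    (hn : ((N : ℝ) + 1) / ((N : ℝ) - 1) ≤ n) :
    ∃ C, 0 < C ∧ ∀ t, 0 ≤ t → |f t| ≤ C * (1 + t ^ n) := by
  obtain ⟨p, M, -, hp2, hM, hb⟩ := hf.exists_rpow_bound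
  obtain ⟨C, hC, hCb⟩ := exists_abs_le_on_Icc hf.continuous M
  refine ⟨C + 1, by positivity, fun t ht => ?_⟩
  have hn0 : 0 ≤ t ^ n := by positivity
  rcases le_total t M with h | h
  · have := hCb t ht h
    nlinarith
  · have h1 := hb t h
    have h2 : t ^ p ≤ t ^ n := by
      rw [← rpow_natCast t n]
      exact rpow_le_rpow_of_exponent_le (hM.trans h) (hp2.le.trans hn)
    nlinarith

lemma besselFn_eq_gaussTest {N : ℕ} (β μ a r : ℝ) (z : EN N) (p : ℝ × EN N) :
    besselFn β μ (sqDist a z p) r = r ^ β * exp (-(μ / r)) * gaussTest r a z p := rfl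

lemma besselFn_add_one {β μ t r : ℝ} (hr : 0 < r) :
    besselFn (β + 1) μ t r = r * besselFn β μ t r := by
  unfold besselFn; rw [rpow_add_one hr.ne']; ring

lemma besselFn_add_two {β μ t r : ℝ} (hr : 0 < r) :
    besselFn (β + 2) μ t r = r ^ 2 * besselFn β μ t r := by
  rw [show β + 2 = β + 1 + 1 by ring, besselFn_add_one hr, besselFn_add_one hr]; ring

/-- Multiplying the Gaussian identity by `r ^ β * exp (-μ / r)` and integrating in `r`. -/
lemma IsWeakSolution.besselInt_identity_aux {N : ℕ} {m : ℝ} (hm : 0 < m) {f : ℝ → ℝ}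
    {v : ℝ × EN N → ℝ} (hN : 2 ≤ N) (hf : HypF N f) (hv : IsWeakSolution m f v)
    (hnn : ∀ p ∈ closedHalf N, 0 ≤ v p) {a : ℝ} (ha : 0 < a) (z : EN N) :
    Integrable (fun y => v (0, y) * besselInt (((N : ℝ) - 3) / 2 + 1) (m ^ 2 / 4)
      (sqDist a z (0, y))) ∧
    Integrable (fun y => f (v (0, y)) * besselInt (((N : ℝ) - 3) / 2) (m ^ 2 / 4)
      (sqDist a z (0, y))) ∧
    ∫ y, v (0, y) * (2 * a * besselInt (((N : ℝ) - 3) / 2 + 1) (m ^ 2 / 4) (sqDist a z (0, y)))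
      = ∫ y, f (v (0, y)) * besselInt (((N : ℝ) - 3) / 2) (m ^ 2 / 4) (sqDist a z (0, y)) := by
  set β : ℝ := ((N : ℝ) - 3) / 2 with hβ
  set μ : ℝ := m ^ 2 / 4 with hμd
  have hμ : 0 < μ := by positivity
  have hN' : (2 : ℝ) ≤ N := by exact_mod_cast hN
  have hu0 : ∀ y : EN N, 0 ≤ v (0, y) := fun y => hnn _ (by simp [closedHalf])
  obtain ⟨n, hn2, hn, hun⟩ := hv.1.exists_integrable_trace_pow hN
  obtain ⟨C, hC, hCf⟩ := hf.exists_pow_bound hn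
  have hu2 := hv.1.integrable_trace_sq
  have hcu := hv.1.continuous_trace
  have hcf := hf.continuous
  have hmT : Measurable (fun y : EN N => sqDist a z (0, y)) :=
    ((continuous_sqDist a z).comp (by fun_prop)).measurable
  have hms : Measurable (fun y : EN N => ‖y - z‖ ^ 2) := by fun_prop
  have hTs : ∀ y : EN N, a ^ 2 + ‖y - z‖ ^ 2 ≤ sqDist a z (0, y) := by
    intro y; simp [sqDist]
  have hinv := integrable_inv_one_add_normSq z
  have hle1 : ∀ y : EN N, 1 / (1 + ‖y - z‖ ^ 2) ^ (N + 2) ≤ 1 := by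
    intro y
    rw [div_le_one (by positivity)]
    exact one_le_pow₀ (by nlinarith [sq_nonneg ‖y - z‖])
  have hcw : Continuous (fun y : EN N => 1 / (1 + ‖y - z‖ ^ 2) ^ (N + 2)) := by
    refine continuous_const.div (by fun_prop) fun y => ?_
    positivity
  have b1 : Integrable (fun y => v (0, y) * (1 / (1 + ‖y - z‖ ^ 2) ^ (N + 2))) := by
    refine (hinv.add hu2).mono' (hcu.mul hcw).aestronglyMeasurable
      (Eventually.of_forall fun y => ?_)
    have h0 : 0 ≤ 1 / (1 + ‖y - z‖ ^ 2) ^ (N + 2) := by positivity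
    rw [Real.norm_of_nonneg (mul_nonneg (hu0 y) h0)]
    simp only [Pi.add_apply]
    nlinarith [hle1 y, hu0 y, sq_nonneg (v (0, y) - 1), sq_nonneg (v (0, y))]
  have b2 : Integrable (fun y => f (v (0, y)) * (1 / (1 + ‖y - z‖ ^ 2) ^ (N + 2))) := by
    refine ((hinv.add hun).const_mul C).mono' ((hcf.comp hcu).mul hcw).aestronglyMeasurable
      (Eventually.of_forall fun y => ?_)
    have h0 : 0 ≤ 1 / (1 + ‖y - z‖ ^ 2) ^ (N + 2) := by positivity
    rw [norm_mul, Real.norm_of_nonneg h0, Real.norm_eq_abs]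
    simp only [Pi.add_apply]
    have hun0 : 0 ≤ v (0, y) ^ n := pow_nonneg (hu0 y) n
    calc |f (v (0, y))| * (1 / (1 + ‖y - z‖ ^ 2) ^ (N + 2))
        ≤ C * (1 + v (0, y) ^ n) * (1 / (1 + ‖y - z‖ ^ 2) ^ (N + 2)) := by
          gcongr; exact hCf _ (hu0 y)
      _ = C * (1 / (1 + ‖y - z‖ ^ 2) ^ (N + 2)
            + v (0, y) ^ n * (1 / (1 + ‖y - z‖ ^ 2) ^ (N + 2))) := by ring
      _ ≤ C * (1 / (1 + ‖y - z‖ ^ 2) ^ (N + 2) + v (0, y) ^ n * 1) := by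
          gcongr; exact hle1 y
      _ = _ := by ring
  obtain ⟨c1, c2, c3⟩ := integral_mul_besselInt (h := fun y => v (0, y))
    (T := fun y => sqDist a z (0, y)) (integrable_mul_besselFn hms hmT (t₀ := a ^ 2)
    (by positivity) (fun y => by positivity) (Eventually.of_forall hTs) b1 (β + 1) hμ)
  obtain ⟨d1, d2, d3⟩ := integral_mul_besselInt (h := fun y => f (v (0, y)))
    (T := fun y => sqDist a z (0, y)) (integrable_mul_besselFn hms hmT (t₀ := a ^ 2)
    (by positivity) (fun y => by positivity) (Eventually.of_forall hTs) b2 β hμ)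
  refine ⟨c1, d1, ?_⟩
  have hmT' : Measurable (sqDist a z) := (continuous_sqDist a z).measurable
  have hms' : Measurable (sqDist 0 z) := (continuous_sqDist 0 z).measurable
  have hmem : ∀ᵐ p ∂(volume.restrict (upperHalf N)), p ∈ upperHalf N :=
    ae_restrict_mem (measurableSet_upperHalf N)
  have hTs' : ∀ p ∈ upperHalf N, a ^ 2 + sqDist 0 z p ≤ sqDist a z p := by
    intro p hp
    have : 0 < p.1 := hp
    simp only [sqDist]; nlinarith
  have hTs2 : ∀ᵐ p ∂(volume.restrict (upperHalf N)), a ^ 2 + sqDist 0 z p ≤ sqDist a z p := by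
    filter_upwards [hmem] with p hp using hTs' p hp
  have hinv' : Integrable (fun p => 1 / (1 + sqDist 0 z p) ^ (N + 2))
      (volume.restrict (upperHalf N)) := (integrable_inv_one_add_sqDist 0 z).integrableOn
  have hle1' : ∀ p : ℝ × EN N, 1 / (1 + sqDist 0 z p) ^ (N + 2) ≤ 1 := by
    intro p
    have := sqDist_nonneg 0 z p
    rw [div_le_one (by positivity)]
    exact one_le_pow₀ (by linarith)
  have e1 : Integrable (fun p => v p * (1 / (1 + sqDist 0 z p) ^ (N + 2)))
      (volume.restrict (upperHalf N)) := by
    refine (hinv'.add hv.1.memL2).mono' (hv.1.aesm.mul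
      (measurable_const.div ((measurable_const.add hms').pow_const _)).aestronglyMeasurable) ?_
    filter_upwards [hmem] with p hp
    have hs := sqDist_nonneg 0 z p
    have h0 : 0 ≤ 1 / (1 + sqDist 0 z p) ^ (N + 2) := by positivity
    have hv0 := hnn p (upperHalf_subset_closedHalf N hp)
    simp only [Pi.add_apply]
    rw [Real.norm_of_nonneg (mul_nonneg hv0 h0)]
    nlinarith [hle1' p, sq_nonneg (v p - 1), sq_nonneg (v p)]
  have e2 : Integrable (fun p => v p * sqDist a z p * (1 / (1 + sqDist 0 z p) ^ (N + 3)))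
      (volume.restrict (upperHalf N)) := by
    refine (e1.const_mul (2 * a ^ 2 + 2)).mono' ((hv.1.aesm.mul hmT'.aestronglyMeasurable).mul
      (measurable_const.div ((measurable_const.add hms').pow_const _)).aestronglyMeasurable) ?_
    filter_upwards [hmem] with p hp
    have hs := sqDist_nonneg 0 z p
    have hs' := sqDist_nonneg a z p
    have hv0 := hnn p (upperHalf_subset_closedHalf N hp)
    have hσ : sqDist a z p ≤ (2 * a ^ 2 + 2) * (1 + sqDist 0 z p) := by
      simp only [sqDist]
      nlinarith [sq_nonneg (p.1 - a), sq_nonneg p.1, sq_nonneg ‖p.2 - z‖, sq_nonneg a,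
        mul_nonneg (sq_nonneg a) (sq_nonneg p.1), mul_nonneg (sq_nonneg a) (sq_nonneg ‖p.2 - z‖)]
    rw [Real.norm_of_nonneg (by positivity)]
    calc v p * sqDist a z p * (1 / (1 + sqDist 0 z p) ^ (N + 3))
        ≤ v p * ((2 * a ^ 2 + 2) * (1 + sqDist 0 z p)) * (1 / (1 + sqDist 0 z p) ^ (N + 3)) := by
          gcongr
      _ = _ := by rw [pow_succ _ (N + 2)]; field_simp
  have i2 := integrable_mul_besselFn hms' hmT' (t₀ := a ^ 2) (by positivity)
    (fun p => sqDist_nonneg 0 z p) hTs2 e2 (β + 2) hμ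
  have i1 := integrable_mul_besselFn hms' hmT' (t₀ := a ^ 2) (by positivity)
    (fun p => sqDist_nonneg 0 z p) hTs2 e1 (β + 1) hμ
  have i0 := integrable_mul_besselFn hms' hmT' (t₀ := a ^ 2) (by positivity)
    (fun p => sqDist_nonneg 0 z p) hTs2 e1 β hμ
  have iall : Integrable (fun q : ℝ × (ℝ × EN N) =>
      4 * (v q.2 * sqDist a z q.2 * besselFn (β + 2) μ (sqDist a z q.2) q.1)
      - 2 * (N + 1) * (v q.2 * besselFn (β + 1) μ (sqDist a z q.2) q.1)
      - m ^ 2 * (v q.2 * besselFn β μ (sqDist a z q.2) q.1))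
      ((volume.restrict (Ioi (0 : ℝ))).prod (volume.restrict (upperHalf N))) :=
    ((i2.const_mul _).sub (i1.const_mul _)).sub (i0.const_mul _)
  have hInt : ∫ r in Ioi (0 : ℝ), ∫ p in upperHalf N,
      (4 * (v p * sqDist a z p * besselFn (β + 2) μ (sqDist a z p) r)
      - 2 * (N + 1) * (v p * besselFn (β + 1) μ (sqDist a z p) r)
      - m ^ 2 * (v p * besselFn β μ (sqDist a z p) r)) = 0 := by
    rw [integral_integral_swap iall]
    refine integral_eq_zero_of_ae ?_
    filter_upwards [hmem] with p hp
    have hσ : 0 < sqDist a z p := by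
      have := hTs' p hp
      have := sqDist_nonneg 0 z p
      nlinarith [pow_pos ha 2]
    have j0 := integrableOn_besselFn β hμ hσ
    have j1 := integrableOn_besselFn (β + 1) hμ hσ
    have j2 := integrableOn_besselFn (β + 2) hμ hσ
    have k : IntegrableOn (fun r => 4 * (v p * sqDist a z p * besselFn (β + 2) μ (sqDist a z p) r)
      - 2 * (N + 1) * (v p * besselFn (β + 1) μ (sqDist a z p) r)) (Ioi 0) :=
      ((j2.const_mul _).const_mul _).sub ((j1.const_mul _).const_mul _)
    have hc := integral_besselFn_combination (β := β) (by rw [hβ]; linarith) hμ hσ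
    simp only [besselInt] at hc
    rw [integral_sub k ((j0.const_mul _).const_mul _),
      integral_sub ((j2.const_mul _).const_mul _) ((j1.const_mul _).const_mul _)]
    simp only [integral_const_mul, Pi.zero_apply]
    have e : (2 * ((N : ℝ) + 1)) = 4 * (β + 2) := by rw [hβ]; ring
    rw [e, show m ^ 2 = 4 * μ by rw [hμd]; ring]
    linear_combination 4 * v p * hc
  have hkey : ∀ r ∈ Ioi (0 : ℝ),
      2 * a * (∫ y, v (0, y) * besselFn (β + 1) μ (sqDist a z (0, y)) r)
        - ∫ y, f (v (0, y)) * besselFn β μ (sqDist a z (0, y)) r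
      = ∫ p in upperHalf N,
      (4 * (v p * sqDist a z p * besselFn (β + 2) μ (sqDist a z p) r)
      - 2 * (N + 1) * (v p * besselFn (β + 1) μ (sqDist a z p) r)
      - m ^ 2 * (v p * besselFn β μ (sqDist a z p) r)) := by
    intro r hr
    have hr' : 0 < r := hr
    have hid := congrArg (fun t => r ^ β * exp (-(μ / r)) * t) (hv.gaussTest_identity hr' a z)
    simp only [mul_sub, ← integral_const_mul] at hid ⊢
    convert hid using 1
    · congr 1
      · refine integral_congr_ae (Eventually.of_forall fun y => ?_)
        simp only [besselFn_add_one hr', besselFn_eq_gaussTest]; ring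
      · refine integral_congr_ae (Eventually.of_forall fun y => ?_)
        simp only [besselFn_eq_gaussTest]; ring
    · refine integral_congr_ae (Eventually.of_forall fun y => ?_)
      simp only [besselFn_add_one hr', besselFn_add_two hr', besselFn_eq_gaussTest]; ring
  have h := setIntegral_congr_fun (μ := volume) measurableSet_Ioi hkey
  rw [hInt, integral_sub (c2.const_mul _) d2, integral_const_mul, c3, d3] at h
  rw [← integral_const_mul, sub_eq_zero] at h
  rw [← h]
  congr 1
  ext y
  ring

lemma IsWeakSolution.besselInt_identity {N : ℕ} {m : ℝ} (hm : 0 < m) {f : ℝ → ℝ}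
    {v : ℝ × EN N → ℝ} (hN : 2 ≤ N) (hf : HypF N f) (hv : IsWeakSolution m f v)
    (hnn : ∀ p ∈ closedHalf N, 0 ≤ v p) {a : ℝ} (ha : 0 < a) (z : EN N) :
    Integrable (fun y => v (0, y) * besselInt (((N : ℝ) - 3) / 2 + 1) (m ^ 2 / 4)
      (a ^ 2 + ‖y - z‖ ^ 2)) ∧
    Integrable (fun y => f (v (0, y)) * besselInt (((N : ℝ) - 3) / 2) (m ^ 2 / 4)
      (a ^ 2 + ‖y - z‖ ^ 2)) ∧
    ∫ y, v (0, y) * (2 * a * besselInt (((N : ℝ) - 3) / 2 + 1) (m ^ 2 / 4) (a ^ 2 + ‖y - z‖ ^ 2))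
      = ∫ y, f (v (0, y)) * besselInt (((N : ℝ) - 3) / 2) (m ^ 2 / 4) (a ^ 2 + ‖y - z‖ ^ 2) := by
  have h := hv.besselInt_identity_aux hm hN hf hnn ha z
  simpa only [sqDist, zero_add] using h

/-- The Poisson kernel of `-Δ + m²` on the half-space, up to a normalizing constant. -/
def poissonKer (N : ℕ) (m a : ℝ) (η : EN N) : ℝ :=
  2 * a * besselInt (((N : ℝ) - 3) / 2 + 1) (m ^ 2 / 4) (a ^ 2 + ‖η‖ ^ 2)

/-- The Neumann kernel of `-Δ + m²` on the half-space, up to a normalizing constant. -/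
def neumannKer (N : ℕ) (m a : ℝ) (η : EN N) : ℝ :=
  besselInt (((N : ℝ) - 3) / 2) (m ^ 2 / 4) (a ^ 2 + ‖η‖ ^ 2)

/-- The normalizing constant of the Poisson kernel. -/
def poissonConst (N : ℕ) : ℝ :=
  ∫ ξ : EN N, 2 * besselInt (((N : ℝ) - 3) / 2 + 1) 0 (1 + ‖ξ‖ ^ 2)

lemma integral_lt_integral_of_forall_lt {α : Type*} [MeasurableSpace α] {ν : Measure α}
    (hν : ν ≠ 0) {f g : α → ℝ} (hf : Integrable f ν) (hg : Integrable g ν)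
    (hlt : ∀ᵐ x ∂ν, f x < g x) : ∫ x, f x ∂ν < ∫ x, g x ∂ν := by
  have hi : Integrable (fun x => g x - f x) ν := hg.sub hf
  rw [← sub_pos, ← integral_sub hg hf, integral_pos_iff_support_of_nonneg_ae _ hi]
  · have h : (Function.support fun x => g x - f x) =ᵐ[ν] univ := by
      rw [eventuallyEq_univ]
      filter_upwards [hlt] with x hx
      exact (sub_pos.2 hx).ne'
    rw [measure_congr h]
    simpa [pos_iff_ne_zero] using hν
  · filter_upwards [hlt] with x hx
    exact (sub_pos.2 hx).le

lemma continuous_besselInt_norm {N : ℕ} (β : ℝ) {μ t₀ : ℝ} (hμ : 0 < μ) (ht₀ : 0 < t₀) :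
    Continuous (fun η : EN N => besselInt β μ (t₀ + ‖η‖ ^ 2)) :=
  (continuousOn_besselInt β hμ).comp_continuous (by fun_prop) fun η => by
    show 0 < t₀ + ‖η‖ ^ 2; positivity

lemma continuous_poissonKer {N : ℕ} {m a : ℝ} (hm : 0 < m) (ha : 0 < a) :
    Continuous (poissonKer N m a) :=
  continuous_const.mul (continuous_besselInt_norm _ (by positivity) (by positivity))

lemma poissonKer_nonneg {N : ℕ} (m : ℝ) {a : ℝ} (ha : 0 ≤ a) (η : EN N) :
    0 ≤ poissonKer N m a η :=
  mul_nonneg (by positivity) (besselInt_nonneg _ _ _)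

lemma neumannKer_nonneg {N : ℕ} (m a : ℝ) (η : EN N) : 0 ≤ neumannKer N m a η :=
  besselInt_nonneg _ _ _

lemma integrable_poissonConst {N : ℕ} (hN : 2 ≤ N) :
    Integrable fun ξ : EN N => 2 * besselInt (((N : ℝ) - 3) / 2 + 1) 0 (1 + ‖ξ‖ ^ 2) := by
  have hN' : (2 : ℝ) ≤ N := by exact_mod_cast hN
  have h := integrable_rpow_neg_one_add_norm_sq (E := EN N) (μ := volume) (r := (N : ℝ) + 1)
    (by simp)
  refine ((h.const_mul (Gamma (((N : ℝ) - 3) / 2 + 1 + 1))).const_mul 2).congr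
    (Eventually.of_forall fun ξ => ?_)
  simp only
  rw [besselInt_zero (by linarith) (by positivity)]
  congr 3
  ring

lemma poissonConst_pos {N : ℕ} (hN : 2 ≤ N) : 0 < poissonConst N := by
  have hN' : (2 : ℝ) ≤ N := by exact_mod_cast hN
  have h := integral_lt_integral_of_forall_lt (ν := (volume : Measure (EN N)))
    (NeZero.ne _)
    (integrable_zero _ _ _) (integrable_poissonConst hN) (Eventually.of_forall fun ξ => by
      rw [besselInt_zero (by linarith) (by positivity)]
      have : 0 < Gamma (((N : ℝ) - 3) / 2 + 1 + 1) := Gamma_pos_of_pos (by linarith)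
      positivity)
  simp only [Pi.zero_apply, integral_zero] at h
  exact h

lemma integral_mul_poissonKer {N : ℕ} {m a : ℝ} (ha : 0 < a) (w : EN N → ℝ) (z : EN N) :
    ∫ y, w y * poissonKer N m a (y - z) =
      ∫ ξ, w (z + a • ξ) *
        (2 * besselInt (((N : ℝ) - 3) / 2 + 1) (m ^ 2 / 4 * a ^ 2) (1 + ‖ξ‖ ^ 2)) := by
  have h1 : ∫ y, w y * poissonKer N m a (y - z) = ∫ y, w (z + y) * poissonKer N m a y := by
    rw [← integral_add_left_eq_self _ z]
    simp
  have h2 := Measure.integral_comp_smul (volume : Measure (EN N))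
    (fun y => w (z + y) * poissonKer N m a y) a
  rw [h1]
  have hpos : 0 < a ^ N := by positivity
  have hfr : Module.finrank ℝ (EN N) = N := by simp
  rw [hfr, abs_of_pos (by positivity), smul_eq_mul] at h2
  have h3 : ∫ y, w (z + y) * poissonKer N m a y
      = ∫ ξ, a ^ N * (w (z + a • ξ) * poissonKer N m a (a • ξ)) := by
    rw [integral_const_mul, h2, ← mul_assoc, mul_inv_cancel₀ hpos.ne', one_mul]
  rw [h3]
  congr 1
  ext ξ
  have h4 : a ^ 2 + ‖a • ξ‖ ^ 2 = a ^ 2 * (1 + ‖ξ‖ ^ 2) := by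
    rw [norm_smul, Real.norm_of_nonneg ha.le]; ring
  have h5 : (a ^ 2) ^ (-(((N : ℝ) - 3) / 2 + 1 + 1)) = (a ^ N * a)⁻¹ := by
    rw [← rpow_natCast a 2, ← rpow_mul ha.le, ← pow_succ, ← rpow_natCast a (N + 1),
      ← rpow_neg ha.le]
    congr 1
    push_cast
    ring
  rw [poissonKer, h4, besselInt_smul_sq ha, h5]
  field_simp

lemma tendsto_besselInt_zero {β t : ℝ} (hβ : -1 < β) (ht : 0 < t) {μ : ℝ} (hμ : 0 < μ) :
    Tendsto (fun a : ℝ => besselInt β (μ * a ^ 2) t) (𝓝[>] 0) (𝓝 (besselInt β 0 t)) := by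
  unfold besselInt
  refine tendsto_integral_filter_of_dominated_convergence (besselFn β 0 t)
    (Eventually.of_forall fun a => (measurable_besselFn _ _ _).aestronglyMeasurable)
    (Eventually.of_forall fun a => ?_) (integrableOn_besselFn_zero hβ ht) ?_
  · filter_upwards [ae_restrict_mem measurableSet_Ioi] with r hr
    have hr' : 0 < r := hr
    rw [Real.norm_of_nonneg (besselFn_pos _ _ _ hr).le]
    have := rpow_pos_of_pos hr' β
    unfold besselFn
    gcongr
    positivity
  · filter_upwards [ae_restrict_mem measurableSet_Ioi] with r hr
    have : Continuous fun a : ℝ => besselFn β (μ * a ^ 2) t r := by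
      unfold besselFn; fun_prop
    have h := this.tendsto 0
    simp only [ne_eq, OfNat.ofNat_ne_zero, not_false_eq_true, zero_pow, mul_zero] at h
    exact h.mono_left nhdsWithin_le_nhds

lemma integrable_besselInt_scaled {N : ℕ} (hN : 2 ≤ N) {μ : ℝ} (hμ : 0 < μ) :
    Integrable fun ξ : EN N => 2 * besselInt (((N : ℝ) - 3) / 2 + 1) μ (1 + ‖ξ‖ ^ 2) := by
  have hN' : (2 : ℝ) ≤ N := by exact_mod_cast hN
  refine (integrable_poissonConst hN).mono'
    (continuous_const.mul (continuous_besselInt_norm _ hμ one_pos)).aestronglyMeasurable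
    (Eventually.of_forall fun ξ => ?_)
  have := besselInt_nonneg (((N : ℝ) - 3) / 2 + 1) μ (1 + ‖ξ‖ ^ 2)
  rw [Real.norm_of_nonneg (by positivity)]
  have := besselInt_lt_zero (β := ((N : ℝ) - 3) / 2 + 1) (by linarith) hμ
    (show 0 < 1 + ‖ξ‖ ^ 2 by positivity)
  linarith

/-- The Poisson kernel is an approximate identity. -/
lemma tendsto_integral_mul_poissonKer {N : ℕ} (hN : 2 ≤ N) {m : ℝ} (hm : 0 < m) {w : EN N → ℝ}
    (hw : Continuous w) {B : ℝ} (hB : ∀ y, |w y| ≤ B) (z : EN N) :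
    Tendsto (fun a => ∫ y, w y * poissonKer N m a (y - z)) (𝓝[>] 0)
      (𝓝 (poissonConst N * w z)) := by
  have hN' : (2 : ℝ) ≤ N := by exact_mod_cast hN
  have hβ : -1 < ((N : ℝ) - 3) / 2 + 1 := by linarith
  have hpos : ∀ᶠ a : ℝ in 𝓝[>] 0, 0 < a := self_mem_nhdsWithin
  rw [mul_comm, poissonConst, ← integral_const_mul]
  refine Tendsto.congr' (f₁ := fun a => ∫ ξ, w (z + a • ξ) *
        (2 * besselInt (((N : ℝ) - 3) / 2 + 1) (m ^ 2 / 4 * a ^ 2) (1 + ‖ξ‖ ^ 2))) ?_ ?_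
  · filter_upwards [hpos] with a ha using (integral_mul_poissonKer ha w z).symm
  refine tendsto_integral_filter_of_dominated_convergence
    (fun ξ => B * (2 * besselInt (((N : ℝ) - 3) / 2 + 1) 0 (1 + ‖ξ‖ ^ 2))) ?_ ?_
    ((integrable_poissonConst hN).const_mul B) ?_
  · filter_upwards [hpos] with a ha
    exact ((hw.comp (by fun_prop)).mul (continuous_const.mul
      (continuous_besselInt_norm _ (by positivity) one_pos))).aestronglyMeasurable
  · filter_upwards [hpos] with a ha
    refine Eventually.of_forall fun ξ => ?_
    have h0 := besselInt_nonneg (((N : ℝ) - 3) / 2 + 1) (m ^ 2 / 4 * a ^ 2) (1 + ‖ξ‖ ^ 2)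
    have h1 := besselInt_lt_zero hβ (show 0 < m ^ 2 / 4 * a ^ 2 by positivity)
      (show 0 < 1 + ‖ξ‖ ^ 2 by positivity)
    rw [norm_mul, Real.norm_of_nonneg (show 0 ≤ 2 * besselInt _ _ _ by positivity),
      Real.norm_eq_abs]
    gcongr
    · exact (abs_nonneg _).trans (hB z)
    · exact hB _
  · refine Eventually.of_forall fun ξ => ?_
    refine Tendsto.mul ?_ ((tendsto_besselInt_zero hβ (by positivity) (by positivity)).const_mul 2)
    have : Continuous fun a : ℝ => w (z + a • ξ) := by fun_prop
    have h := this.tendsto 0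
    simp only [zero_smul, add_zero] at h
    exact h.mono_left nhdsWithin_le_nhds

lemma integrable_poissonKer {N : ℕ} {m a : ℝ} (hm : 0 < m) (ha : 0 < a) :
    Integrable (poissonKer N m a) := by
  obtain ⟨C, hC, hle⟩ := exists_besselInt_le (((N : ℝ) - 3) / 2 + 1) (μ := m ^ 2 / 4)
    (t₀ := a ^ 2) (by positivity) (by positivity) (N + 2)
  have h := integrable_inv_one_add_normSq (0 : EN N)
  refine (h.const_mul (2 * a * C)).mono' (continuous_poissonKer hm ha).aestronglyMeasurable
    (Eventually.of_forall fun η => ?_)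
  rw [Real.norm_of_nonneg (poissonKer_nonneg m ha.le η)]
  simp only [sub_zero, poissonKer]
  calc 2 * a * besselInt (((N : ℝ) - 3) / 2 + 1) (m ^ 2 / 4) (a ^ 2 + ‖η‖ ^ 2)
      ≤ 2 * a * (C / (1 + ‖η‖ ^ 2) ^ (N + 2)) := by
        gcongr; exact hle _ (by positivity)
    _ = _ := by ring

/-- The Poisson kernel has total mass less than its normalizing constant. -/
lemma integral_poissonKer_lt {N : ℕ} (hN : 2 ≤ N) {m a : ℝ} (hm : 0 < m) (ha : 0 < a) :
    ∫ η, poissonKer N m a η < poissonConst N := by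
  have hN' : (2 : ℝ) ≤ N := by exact_mod_cast hN
  have h := integral_mul_poissonKer (m := m) ha (fun _ : EN N => (1 : ℝ)) 0
  simp only [one_mul, sub_zero] at h
  rw [h, poissonConst]
  refine integral_lt_integral_of_forall_lt
    (NeZero.ne _)
    (integrable_besselInt_scaled hN (by positivity)) (integrable_poissonConst hN)
    (Eventually.of_forall fun ξ => ?_)
  have := besselInt_lt_zero (β := ((N : ℝ) - 3) / 2 + 1) (by linarith)
    (show 0 < m ^ 2 / 4 * a ^ 2 by positivity) (show 0 < 1 + ‖ξ‖ ^ 2 by positivity)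
  linarith

lemma measurable_besselInt (β μ : ℝ) : Measurable (besselInt β μ) := by
  have h : Measurable (fun q : ℝ × ℝ => besselFn β μ q.1 q.2) := by
    unfold besselFn; fun_prop
  exact (h.stronglyMeasurable.integral_prod_right (ν := volume.restrict (Ioi 0))).measurable

lemma measurable_neumannKer (N : ℕ) (m a : ℝ) : Measurable (neumannKer N m a) :=
  (measurable_besselInt _ _).comp (by fun_prop)

lemma neumannKer_neg {N : ℕ} (m a : ℝ) (η : EN N) : neumannKer N m a (-η) = neumannKer N m a η := by
  simp [neumannKer]

lemma neumannKer_le_zero {N : ℕ} {m : ℝ} (hm : 0 < m) (a : ℝ) {η : EN N} (hη : η ≠ 0) :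
    neumannKer N m a η ≤ neumannKer N m 0 η := by
  have h0 : 0 < ‖η‖ := norm_pos_iff.2 hη
  refine (besselInt_strictAntiOn _ (by positivity)).antitoneOn ?_ ?_ ?_
  · show 0 < (0 : ℝ) ^ 2 + ‖η‖ ^ 2; positivity
  · show 0 < a ^ 2 + ‖η‖ ^ 2; positivity
  · nlinarith [sq_nonneg a]

lemma integrable_indicator_norm_rpow {N : ℕ} (hN : 2 ≤ N) {s : ℝ} (hs : s < N) :
    Integrable (fun η : EN N => (Iio (1 : ℝ)).indicator (fun r => r ^ (-s)) ‖η‖) := by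
  have : Nonempty (Fin N) := ⟨⟨0, by omega⟩⟩
  rw [integrable_fun_norm_addHaar volume (f := (Iio (1 : ℝ)).indicator (fun r => r ^ (-s)))]
  have hfr : Module.finrank ℝ (EN N) = N := by simp
  rw [hfr]
  have h1 : IntegrableOn (fun r : ℝ => r ^ ((N : ℝ) - 1 - s)) (Ioo 0 1) :=
    (intervalIntegral.integrableOn_Ioo_rpow_iff one_pos).2 (by linarith)
  have h2 : IntegrableOn ((Iio (1 : ℝ)).indicator fun r : ℝ => r ^ ((N : ℝ) - 1 - s)) (Ioi 0) := by
    rw [IntegrableOn, integrable_indicator_iff measurableSet_Iio, IntegrableOn,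
      Measure.restrict_restrict measurableSet_Iio, inter_comm]
    exact h1
  refine h2.congr_fun (fun r hr => ?_) measurableSet_Ioi
  have hr' : 0 < r := hr
  by_cases h : r < 1
  · simp only [mem_Iio, h, indicator_of_mem, smul_eq_mul]
    rw [← rpow_natCast, ← rpow_add hr', Nat.cast_sub (by omega)]
    congr 1
    push_cast; ring
  · simp [h]

/-- The size of the Neumann kernel near the origin and at infinity. -/
lemma exists_neumannKer_bound {N : ℕ} (hN : 2 ≤ N) {m : ℝ} (hm : 0 < m) :
    ∃ c : ℝ, 0 < c ∧ (∀ η : EN N, η ≠ 0 → neumannKer N m 0 η ≤ c * ‖η‖ ^ (-((N : ℝ) - 1))) ∧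
      ∀ η : EN N, 1 ≤ ‖η‖ → neumannKer N m 0 η ≤ c * (1 / (1 + ‖η‖ ^ 2) ^ (N + 2)) := by
  have hN' : (2 : ℝ) ≤ N := by exact_mod_cast hN
  obtain ⟨C, hC, hle⟩ := exists_besselInt_le (((N : ℝ) - 3) / 2) (μ := m ^ 2 / 4)
    (t₀ := 1) (by positivity) one_pos (N + 2)
  have hG : 0 < Gamma (((N : ℝ) - 3) / 2 + 1) := Gamma_pos_of_pos (by linarith)
  refine ⟨Gamma (((N : ℝ) - 3) / 2 + 1) + C * 2 ^ (N + 2), by positivity, fun η hη => ?_,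
    fun η hη => ?_⟩
  · have h0 : 0 < ‖η‖ := norm_pos_iff.2 hη
    have h1 := besselInt_lt_zero (β := ((N : ℝ) - 3) / 2) (by linarith)
      (show 0 < m ^ 2 / 4 by positivity) (show 0 < ‖η‖ ^ 2 by positivity)
    rw [besselInt_zero (by linarith) (by positivity), ← rpow_natCast ‖η‖ 2,
      ← rpow_mul h0.le] at h1
    have e : ((2 : ℕ) : ℝ) * -(((N : ℝ) - 3) / 2 + 1) = -((N : ℝ) - 1) := by push_cast; ring
    rw [e, rpow_natCast] at h1
    have h2 : 0 < ‖η‖ ^ (-((N : ℝ) - 1)) := rpow_pos_of_pos h0 _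
    have h3 : 0 < C * 2 ^ (N + 2) := by positivity
    simp only [neumannKer, ne_eq, OfNat.ofNat_ne_zero, not_false_eq_true, zero_pow, zero_add]
    nlinarith
  · have h1 := hle (‖η‖ ^ 2 - 1) (by nlinarith)
    simp only [add_sub_cancel] at h1
    simp only [neumannKer, ne_eq, OfNat.ofNat_ne_zero, not_false_eq_true, zero_pow, zero_add]
    refine h1.trans ?_
    have h2 : (1 + ‖η‖ ^ 2) ^ (N + 2) ≤ 2 ^ (N + 2) * (‖η‖ ^ 2) ^ (N + 2) := by
      rw [← mul_pow]
      gcongr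
      nlinarith
    rw [mul_one_div, div_le_div_iff₀ (by positivity) (by positivity)]
    calc C * (1 + ‖η‖ ^ 2) ^ (N + 2) ≤ C * (2 ^ (N + 2) * (‖η‖ ^ 2) ^ (N + 2)) := by gcongr
      _ ≤ _ := by
        have : 0 < (‖η‖ ^ 2) ^ (N + 2) := by positivity
        nlinarith

lemma ae_ne_point {N : ℕ} (hN : 2 ≤ N) (z : EN N) : ∀ᵐ y : EN N, y ≠ z := by
  have : Nonempty (Fin N) := ⟨⟨0, by omega⟩⟩
  exact compl_mem_ae_iff.2 (measure_singleton z)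

lemma integrable_neumannKer_zero {N : ℕ} (hN : 2 ≤ N) {m : ℝ} (hm : 0 < m) :
    Integrable (neumannKer N m 0) := by
  obtain ⟨c, hc, hn, hf⟩ := exists_neumannKer_bound hN hm
  have h1 := integrable_indicator_norm_rpow hN (s := (N : ℝ) - 1) (by linarith)
  have h2 := integrable_inv_one_add_normSq (0 : EN N)
  refine ((h1.add h2).const_mul c).mono' (measurable_neumannKer N m 0).aestronglyMeasurable ?_
  filter_upwards [ae_ne_point hN 0] with η hη
  rw [Real.norm_of_nonneg (neumannKer_nonneg _ _ _)]
  simp only [Pi.add_apply, sub_zero, mul_add]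
  by_cases h : ‖η‖ < 1
  · have := hn η hη
    have h3 : 0 ≤ c * (1 / (1 + ‖η‖ ^ 2) ^ (N + 2)) := by positivity
    simp only [mem_Iio, h, indicator_of_mem]
    linarith
  · have := hf η (not_lt.1 h)
    simp only [mem_Iio, h, not_false_eq_true, indicator_of_notMem]
    linarith

/-- Potential estimate for the truncated iteration. -/
lemma neumannKer_mul_rpow_le {N : ℕ} {m c θ t : ℝ} (hc : 0 < c)
    (hn : ∀ η : EN N, η ≠ 0 → neumannKer N m 0 η ≤ c * ‖η‖ ^ (-((N : ℝ) - 1)))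
    (hf : ∀ η : EN N, 1 ≤ ‖η‖ → neumannKer N m 0 η ≤ c * (1 / (1 + ‖η‖ ^ 2) ^ (N + 2)))
    (hθ : 0 < θ) (hθ1 : θ < 1) (ht : 1 ≤ t) {η : EN N} (hη : η ≠ 0) :
    neumannKer N m 0 η * t ^ (2 * θ) ≤ c * (t ^ 2 / ‖η‖) +
      c * (Iio (1 : ℝ)).indicator (fun r => r ^ (-(((N : ℝ) - 1 - θ) / (1 - θ)))) ‖η‖
      + c * t ^ 2 := by
  have h0 : 0 < ‖η‖ := norm_pos_iff.2 hη
  have ht0 : 0 < t := by linarith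
  by_cases h : ‖η‖ < 1
  · simp only [mem_Iio, h, indicator_of_mem]
    have hy := Real.geom_mean_le_arith_mean2_weighted (w₁ := θ) (w₂ := 1 - θ)
      (p₁ := t ^ 2 / ‖η‖) (p₂ := ‖η‖ ^ (-(((N : ℝ) - 1 - θ) / (1 - θ)))) hθ.le (by linarith)
      (by positivity) (rpow_nonneg h0.le _) (by ring)
    have e : (t ^ 2 / ‖η‖) ^ θ * (‖η‖ ^ (-(((N : ℝ) - 1 - θ) / (1 - θ)))) ^ (1 - θ)
        = ‖η‖ ^ (-((N : ℝ) - 1)) * t ^ (2 * θ) := by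
      rw [div_rpow (by positivity) h0.le, ← rpow_natCast t 2, ← rpow_mul ht0.le,
        ← rpow_mul h0.le, div_mul_eq_mul_div, mul_div_assoc, ← rpow_sub h0, mul_comm]
      congr 2
      have : 1 - θ ≠ 0 := by linarith
      field_simp
      ring
    rw [e] at hy
    have h1 := hn η hη
    have hX : 0 ≤ t ^ 2 / ‖η‖ := by positivity
    have hY := rpow_nonneg h0.le (-(((N : ℝ) - 1 - θ) / (1 - θ)))
    have hT : 0 ≤ t ^ (2 * θ) := by positivity
    calc neumannKer N m 0 η * t ^ (2 * θ) ≤ c * ‖η‖ ^ (-((N : ℝ) - 1)) * t ^ (2 * θ) := by gcongr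
      _ = c * (‖η‖ ^ (-((N : ℝ) - 1)) * t ^ (2 * θ)) := by ring
      _ ≤ c * (t ^ 2 / ‖η‖ + ‖η‖ ^ (-(((N : ℝ) - 1 - θ) / (1 - θ)))) := by
        gcongr
        nlinarith
      _ ≤ _ := by
        have : 0 ≤ c * t ^ 2 := by positivity
        linarith
  · have h1 := hf η (not_lt.1 h)
    have h2 : neumannKer N m 0 η ≤ c := by
      refine h1.trans (mul_le_of_le_one_right hc.le ?_)
      rw [div_le_one (by positivity)]
      exact one_le_pow₀ (by nlinarith [sq_nonneg ‖η‖])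
    have h3 : t ^ (2 * θ) ≤ t ^ 2 := by
      rw [← rpow_natCast t 2]
      exact rpow_le_rpow_of_exponent_le ht (by push_cast; linarith)
    simp only [mem_Iio, h, not_false_eq_true, indicator_of_notMem, mul_zero, add_zero]
    have h4 : 0 ≤ c * (t ^ 2 / ‖η‖) := by positivity
    have h5 : neumannKer N m 0 η * t ^ (2 * θ) ≤ c * t ^ 2 := by
      have : 0 ≤ t ^ (2 * θ) := by positivity
      gcongr
    linarith

/-- The boundary trace is dominated by the Neumann potential of the positive part of `f`. -/
lemma IsWeakSolution.ofReal_trace_le {N : ℕ} {m : ℝ} (hm : 0 < m) {f : ℝ → ℝ}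
    {v : ℝ × EN N → ℝ} (hN : 2 ≤ N) (hf : HypF N f) (hv : IsWeakSolution m f v)
    (hnn : ∀ p ∈ closedHalf N, 0 ≤ v p) (z : EN N) :
    ENNReal.ofReal (poissonConst N * v (0, z)) ≤
      ∫⁻ y, ENNReal.ofReal (neumannKer N m 0 (y - z)) * ENNReal.ofReal (f (v (0, y))) := by
  have hu0 : ∀ y : EN N, 0 ≤ v (0, y) := fun y => hnn _ (by simp [closedHalf])
  have hcu := hv.1.continuous_trace
  have hlim := tendsto_integral_mul_poissonKer hN hm (w := fun y => min (v (0, y)) (v (0, z)))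
    (hcu.min continuous_const) (B := v (0, z)) (fun y => by
      rw [abs_of_nonneg (le_min (hu0 y) (hu0 z))]; exact min_le_right _ _) z
  simp only [min_self] at hlim
  refine le_of_tendsto ((ENNReal.continuous_ofReal.tendsto _).comp hlim) ?_
  filter_upwards [self_mem_nhdsWithin] with a ha
  have ha' : 0 < a := ha
  obtain ⟨i1, i2, heq⟩ := hv.besselInt_identity hm hN hf hnn ha' z
  have i1' : Integrable (fun y => v (0, y) * poissonKer N m a (y - z)) :=
    (i1.const_mul (2 * a)).congr (Eventually.of_forall fun y => by simp only [poissonKer]; ring)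
  have hP : ∀ y, 0 ≤ poissonKer N m a (y - z) := fun y => poissonKer_nonneg m ha'.le _
  have hle1 : ∫ y, min (v (0, y)) (v (0, z)) * poissonKer N m a (y - z)
      ≤ ∫ y, v (0, y) * poissonKer N m a (y - z) := by
    refine integral_mono_of_nonneg (Eventually.of_forall fun y => ?_) i1'
      (Eventually.of_forall fun y => ?_)
    · exact mul_nonneg (le_min (hu0 y) (hu0 z)) (hP y)
    · exact mul_le_mul_of_nonneg_right (min_le_left _ _) (hP y)
  have hle2 : ∫ y, v (0, y) * poissonKer N m a (y - z)
      ≤ ∫ y, max (f (v (0, y)) * neumannKer N m a (y - z)) 0 := by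
    rw [show ∫ y, v (0, y) * poissonKer N m a (y - z) = ∫ y, f (v (0, y)) *
      neumannKer N m a (y - z) from heq]
    exact integral_mono i2 i2.pos_part fun y => le_max_left _ _
  refine (ENNReal.ofReal_le_ofReal (hle1.trans hle2)).trans ?_
  have i3 : Integrable fun y => max (f (v (0, y)) * neumannKer N m a (y - z)) 0 := i2.pos_part
  rw [ofReal_integral_eq_lintegral_ofReal i3
    (Eventually.of_forall fun y => le_max_right _ _)]
  refine lintegral_mono_ae ?_
  filter_upwards [ae_ne_point hN z] with y hy
  rw [← ENNReal.ofReal_mul (neumannKer_nonneg _ _ _)]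
  rcases le_total (f (v (0, y))) 0 with h | h
  · rw [max_eq_right (mul_nonpos_of_nonpos_of_nonneg h (neumannKer_nonneg _ _ _))]
    simp
  · rw [max_eq_left (mul_nonneg h (neumannKer_nonneg _ _ _)), mul_comm]
    exact ENNReal.ofReal_le_ofReal (mul_le_mul_of_nonneg_right
      (neumannKer_le_zero hm a (sub_ne_zero.2 hy)) h)

/-- A sublinear integral inequality with a small symmetric kernel forces boundedness. -/
lemma exists_bound_of_potential_le {α : Type*} [MeasurableSpace α] {ν : Measure α} [SFinite ν]
    {κ : α → α → ℝ≥0∞} (hκ : Measurable (Function.uncurry κ)) (hsymm : ∀ x y, κ x y = κ y x)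
    {U V : α → ℝ≥0∞} (hU : Measurable U) (hV : Measurable V) {c b : ℝ≥0∞} (hc : c ≠ 0)
    (hc' : c ≠ ∞) (hb : b ≠ ∞) (hfin : ∫⁻ y, V y * U y ∂ν ≠ ∞)
    (hsmall : ∀ z, ∫⁻ y, κ z y * V y ∂ν ≤ c / 2)
    (hle : ∀ z, c * U z ≤ b + ∫⁻ y, κ z y * (V y * U y) ∂ν) :
    ∃ H : ℝ≥0∞, H ≠ ∞ ∧ ∀ z, U z ≤ H := by
  set H : ℝ≥0∞ := 2 * b / c with hH
  have hHt : H ≠ ∞ := ENNReal.div_ne_top (ENNReal.mul_ne_top ENNReal.ofNat_ne_top hb) hc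
  have hcH : b + H * (c / 2) = c * H := by
    have e1 : c * H = 2 * b := by rw [hH, ENNReal.mul_div_cancel hc hc']
    have e2 : H * (c / 2) = b := by
      rw [mul_comm, ENNReal.mul_comm_div, ← mul_div_assoc, e1, mul_comm 2 b,
        ENNReal.mul_div_cancel_right (by simp) (by simp)]
    rw [e1, e2, two_mul]
  set D : α → ℝ≥0∞ := fun y => U y - H with hD
  have hDm : Measurable D := hU.sub measurable_const
  have hκz : ∀ z, Measurable (κ z) := fun z => hκ.comp measurable_prodMk_left
  have hVD : Measurable fun y => V y * D y := hV.mul hDm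
  have hκV : ∀ z, Measurable fun y => κ z y * V y := fun z => (hκz z).mul hV
  have hκVD : ∀ z, Measurable fun y => κ z y * (V y * D y) := fun z => (hκz z).mul hVD
  have hDle : ∀ z, c * D z ≤ ∫⁻ y, κ z y * (V y * D y) ∂ν := by
    intro z
    have h1 : c * U z ≤ (∫⁻ y, κ z y * (V y * D y) ∂ν) + c * H := by
      calc c * U z ≤ b + ∫⁻ y, κ z y * (V y * U y) ∂ν := hle z
        _ ≤ b + ∫⁻ y, (κ z y * (V y * D y) + H * (κ z y * V y)) ∂ν := by
          gcongr with y
          calc κ z y * (V y * U y) ≤ κ z y * (V y * (D y + H)) := by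
                gcongr; exact le_tsub_add
            _ = _ := by ring
        _ = b + ((∫⁻ y, κ z y * (V y * D y) ∂ν) + H * ∫⁻ y, κ z y * V y ∂ν) := by
          rw [lintegral_add_left (hκVD z),
            lintegral_const_mul _ (hκV z)]
        _ ≤ b + ((∫⁻ y, κ z y * (V y * D y) ∂ν) + H * (c / 2)) := by
          gcongr; exact hsmall z
        _ = (∫⁻ y, κ z y * (V y * D y) ∂ν) + (b + H * (c / 2)) := by ring
        _ = _ := by rw [hcH]
    rw [hD, ENNReal.mul_sub (fun _ _ => hc')]
    exact tsub_le_iff_right.2 h1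
  set T : ℝ≥0∞ := ∫⁻ y, V y * D y ∂ν with hT
  have hTfin : T ≠ ∞ := by
    refine ne_top_of_le_ne_top hfin (lintegral_mono fun y => ?_)
    gcongr
    exact tsub_le_self
  have hTle : c * T ≤ c / 2 * T := by
    calc c * T = ∫⁻ z, V z * (c * D z) ∂ν := by
          rw [hT, ← lintegral_const_mul _ hVD]
          congr 1; ext z; ring
      _ ≤ ∫⁻ z, V z * ∫⁻ y, κ z y * (V y * D y) ∂ν ∂ν := by
          gcongr with z; exact hDle z
      _ = ∫⁻ z, ∫⁻ y, V z * (κ z y * (V y * D y)) ∂ν ∂ν := by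
          congr 1; ext z
          rw [lintegral_const_mul _ (hκVD z)]
      _ = ∫⁻ y, ∫⁻ z, V z * (κ z y * (V y * D y)) ∂ν ∂ν := by
          refine lintegral_lintegral_swap ?_
          exact ((hV.comp measurable_fst).mul (hκ.mul
            (hVD.comp measurable_snd))).aemeasurable
      _ = ∫⁻ y, (V y * D y) * ∫⁻ z, κ y z * V z ∂ν ∂ν := by
          congr 1; ext y
          rw [← lintegral_const_mul _ (hκV y)]
          congr 1; ext z
          rw [hsymm z y]; ring
      _ ≤ ∫⁻ y, (V y * D y) * (c / 2) ∂ν := by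
          gcongr with y; exact hsmall y
      _ = c / 2 * T := by
          rw [lintegral_mul_const _ hVD, mul_comm]
  have hT0 : T = 0 := by
    by_contra hne
    have h1 := (ENNReal.mul_le_mul_iff_left hne hTfin).1 hTle
    exact absurd h1 (not_le.2 (ENNReal.half_lt_self hc hc'))
  have hae : ∀ᵐ y ∂ν, V y * D y = 0 := (lintegral_eq_zero_iff hVD).1 hT0
  refine ⟨H, hHt, fun z => ?_⟩
  have h0 : ∫⁻ y, κ z y * (V y * D y) ∂ν = 0 := by
    rw [lintegral_congr_ae (g := fun _ => 0)]
    · simp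
    · filter_upwards [hae] with y hy
      rw [hy, mul_zero]
  have h1 := hDle z
  rw [h0, nonpos_iff_eq_zero, mul_eq_zero] at h1
  exact tsub_eq_zero_iff_le.1 (h1.resolve_left hc)

/-- Solutions of subcritical problems have bounded traces. -/
lemma IsWeakSolution.exists_trace_bound {N : ℕ} {m : ℝ} (hm : 0 < m) {f : ℝ → ℝ}
    {v : ℝ × EN N → ℝ} (hN : 2 ≤ N) (hf : HypF N f) (hv : IsWeakSolution m f v)
    (hnn : ∀ p ∈ closedHalf N, 0 ≤ v p) : ∃ B : ℝ, ∀ y, v (0, y) ≤ B := by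
  have hN' : (2 : ℝ) ≤ N := by exact_mod_cast hN
  have hN1 : 0 < (N : ℝ) - 1 := by linarith
  have hu0 : ∀ y : EN N, 0 ≤ v (0, y) := fun y => hnn _ (by simp [closedHalf])
  have hcu := hv.1.continuous_trace
  set u : EN N → ℝ := fun y => v (0, y) with hu
  obtain ⟨p, M₀, hp1, hpq, hM₀, hfp⟩ := hf.exists_rpow_bound
  obtain ⟨n, hn2, hn, hun⟩ := hv.1.exists_integrable_trace_pow hN
  have hu2 := hv.1.integrable_trace_sq
  obtain ⟨c, hc, hnear, hfar⟩ := exists_neumannKer_bound hN hm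
  have hC₀ := poissonConst_pos hN
  obtain ⟨p', hpp', hp'q⟩ := exists_between hpq
  set θ : ℝ := (p' - 1) / 2 with hθd
  have hθ : 0 < θ := by rw [hθd]; linarith
  have hθN : θ * ((N : ℝ) - 1) < 1 := by
    rw [lt_div_iff₀ hN1] at hp'q
    rw [hθd]; linarith
  have hθ1 : θ < 1 := by nlinarith
  set s : ℝ := ((N : ℝ) - 1 - θ) / (1 - θ) with hs
  have hsN : s < N := by
    rw [hs, div_lt_iff₀ (by linarith)]; nlinarith
  have hball := integrable_indicator_norm_rpow hN hsN
  set A : ℝ := c * (9 * ∫ q in upperHalf N, gradSq v q) +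
    c * (∫ η : EN N, (Iio (1 : ℝ)).indicator (fun r => r ^ (-s)) ‖η‖) + c * ∫ y, u y ^ 2 with hA
  have hind : ∀ r : ℝ, 0 ≤ r → 0 ≤ (Iio (1 : ℝ)).indicator (fun r => r ^ (-s)) r := fun r hr =>
    indicator_apply_nonneg fun _ => rpow_nonneg hr _
  have hA0 : 0 ≤ A := by
    have h1 : 0 ≤ ∫ q in upperHalf N, gradSq v q := integral_nonneg fun q => gradSq_nonneg v q
    have h2 : 0 ≤ ∫ η : EN N, (Iio (1 : ℝ)).indicator (fun r => r ^ (-s)) ‖η‖ :=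
      integral_nonneg fun η => hind _ (norm_nonneg η)
    have h3 : 0 ≤ ∫ y, u y ^ 2 := integral_nonneg fun y => sq_nonneg _
    positivity
  have hκ : 0 < p' - p := by linarith
  obtain ⟨M, hM0, hM1, hMA⟩ : ∃ M, M₀ ≤ M ∧ 1 ≤ M ∧ M ^ (-(p' - p)) * A ≤ poissonConst N / 2 := by
    have h1 : Tendsto (fun M : ℝ => M ^ (-(p' - p)) * A) atTop (𝓝 (0 * A)) :=
      (tendsto_rpow_neg_atTop hκ).mul_const A
    rw [zero_mul] at h1
    have h2 := (h1.eventually_le_const (half_pos hC₀)).and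
      ((eventually_ge_atTop M₀).and (eventually_ge_atTop 1))
    obtain ⟨M, h3, h4, h5⟩ := h2.exists
    exact ⟨M, h4, h5, h3⟩
  obtain ⟨Bf, hBf, hBfle⟩ := exists_abs_le_on_Icc hf.continuous M
  set V : EN N → ℝ := fun y => if M < u y then u y ^ (p - 1) else 0 with hVd
  have hVm : Measurable V := Measurable.ite (measurableSet_lt measurable_const hcu.measurable)
    (hcu.measurable.pow_const _) measurable_const
  have hV0 : ∀ y, 0 ≤ V y := fun y => by
    simp only [hVd]; split_ifs
    · exact rpow_nonneg (hu0 y) _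
    · exact le_rfl
  have hfV : ∀ y, f (u y) ≤ Bf + V y * u y := by
    intro y
    simp only [hVd]
    split_ifs with h
    · have h0 : 0 < u y := by linarith
      have h1 := (le_abs_self _).trans (hfp (u y) (hM0.trans h.le))
      have e : u y ^ (p - 1) * u y = u y ^ p := by
        rw [← rpow_add_one h0.ne']; congr 1; ring
      rw [e]; linarith
    · have h1 := (le_abs_self _).trans (hBfle (u y) (hu0 y) (not_lt.1 h))
      linarith
  have hVint : ∫⁻ y, ENNReal.ofReal (V y) * ENNReal.ofReal (u y) ≠ ∞ := by
    refine ne_top_of_le_ne_top hun.lintegral_lt_top.ne (lintegral_mono fun y => ?_)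
    rw [← ENNReal.ofReal_mul (hV0 y)]
    refine ENNReal.ofReal_le_ofReal ?_
    simp only [hVd]
    split_ifs with h
    · have h0 : 0 < u y := by linarith
      have e : u y ^ (p - 1) * u y = u y ^ p := by
        rw [← rpow_add_one h0.ne']; congr 1; ring
      rw [e, ← rpow_natCast (v (0, y)) n]
      exact rpow_le_rpow_of_exponent_le (hM1.trans h.le) (hpq.le.trans hn)
    · rw [zero_mul]; exact pow_nonneg (hu0 y) n
  have hsmall : ∀ z, ∫⁻ y, ENNReal.ofReal (neumannKer N m 0 (y - z)) * ENNReal.ofReal (V y)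
      ≤ ENNReal.ofReal (poissonConst N) / 2 := by
    intro z
    have hk : 0 ≤ M ^ (-(p' - p)) := by positivity
    have hpt : ∀ᵐ y, ENNReal.ofReal (neumannKer N m 0 (y - z)) * ENNReal.ofReal (V y) ≤
        ENNReal.ofReal (M ^ (-(p' - p))) * (ENNReal.ofReal c * ENNReal.ofReal (u y ^ 2 / ‖y - z‖)
          + ENNReal.ofReal c *
            ENNReal.ofReal ((Iio (1 : ℝ)).indicator (fun r => r ^ (-s)) ‖y - z‖)
          + ENNReal.ofReal c * ENNReal.ofReal (u y ^ 2)) := by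
      filter_upwards [ae_ne_point hN z] with y hy
      have hi := hind _ (norm_nonneg (y - z))
      rw [← ENNReal.ofReal_mul hc.le, ← ENNReal.ofReal_mul hc.le, ← ENNReal.ofReal_mul hc.le,
        ← ENNReal.ofReal_add (by positivity) (by positivity),
        ← ENNReal.ofReal_add (by positivity) (by positivity),
        ← ENNReal.ofReal_mul hk, ← ENNReal.ofReal_mul (neumannKer_nonneg _ _ _)]
      refine ENNReal.ofReal_le_ofReal ?_
      have hΓ := neumannKer_nonneg m 0 (y - z)
      by_cases h : M < u y
      · have h0 : 0 < u y := by linarith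
        have h1 := neumannKer_mul_rpow_le hc hnear hfar hθ hθ1 (hM1.trans h.le)
          (sub_ne_zero.2 hy)
        have h2 : V y ≤ M ^ (-(p' - p)) * u y ^ (2 * θ) := by
          simp only [hVd, h, if_true]
          have e : u y ^ (p - 1) = u y ^ (-(p' - p)) * u y ^ (2 * θ) := by
            rw [← rpow_add h0]; congr 1; rw [hθd]; ring
          rw [e]
          refine mul_le_mul_of_nonneg_right ?_ (rpow_nonneg h0.le _)
          exact rpow_le_rpow_of_nonpos (zero_lt_one.trans_le hM1) h.le (by linarith)
        calc neumannKer N m 0 (y - z) * V y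
            ≤ neumannKer N m 0 (y - z) * (M ^ (-(p' - p)) * u y ^ (2 * θ)) := by gcongr
          _ = M ^ (-(p' - p)) * (neumannKer N m 0 (y - z) * u y ^ (2 * θ)) := by ring
          _ ≤ _ := by gcongr
      · simp only [hVd, h, if_false, mul_zero]
        positivity
    refine (lintegral_mono_ae hpt).trans ?_
    have m1 : Measurable fun y : EN N => ENNReal.ofReal (u y ^ 2 / ‖y - z‖) := by
      have := hcu.measurable
      fun_prop
    have m2 : Measurable fun y : EN N =>
        ENNReal.ofReal ((Iio (1 : ℝ)).indicator (fun r => r ^ (-s)) ‖y - z‖) := by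
      have : Measurable ((Iio (1 : ℝ)).indicator (fun r : ℝ => r ^ (-s))) :=
        (measurable_id.pow_const _).indicator measurableSet_Iio
      fun_prop
    have m3 : Measurable fun y : EN N => ENNReal.ofReal (u y ^ 2) := by
      have := hcu.measurable
      fun_prop
    have hb2 := (hball.comp_sub_right z)
    have l2 : ∫⁻ y : EN N, ENNReal.ofReal ((Iio (1 : ℝ)).indicator (fun r => r ^ (-s)) ‖y - z‖)
        = ENNReal.ofReal (∫ η : EN N, (Iio (1 : ℝ)).indicator (fun r => r ^ (-s)) ‖η‖) := by
      rw [← integral_sub_right_eq_self _ z, ofReal_integral_eq_lintegral_ofReal hb2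
        (Eventually.of_forall fun y => hind _ (norm_nonneg _))]
    have l3 : ∫⁻ y : EN N, ENNReal.ofReal (u y ^ 2) = ENNReal.ofReal (∫ y, u y ^ 2) := by
      rw [ofReal_integral_eq_lintegral_ofReal hu2 (Eventually.of_forall fun y => sq_nonneg _)]
    have l1 := hv.1.hardy_trace hN z
    have g0 : 0 ≤ ∫ q in upperHalf N, gradSq v q := integral_nonneg fun q => gradSq_nonneg v q
    have g2 : 0 ≤ ∫ η : EN N, (Iio (1 : ℝ)).indicator (fun r => r ^ (-s)) ‖η‖ :=
      integral_nonneg fun η => hind _ (norm_nonneg η)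
    have g3 : 0 ≤ ∫ y, u y ^ 2 := integral_nonneg fun y => sq_nonneg _
    rw [lintegral_const_mul _ (by fun_prop), lintegral_add_left (by fun_prop),
      lintegral_add_left (by fun_prop), lintegral_const_mul _ m1, lintegral_const_mul _ m2,
      lintegral_const_mul _ m3, l2, l3]
    calc _ ≤ ENNReal.ofReal (M ^ (-(p' - p))) * (ENNReal.ofReal c *
          ENNReal.ofReal (9 * ∫ q in upperHalf N, gradSq v q)
          + ENNReal.ofReal c *
            ENNReal.ofReal (∫ η : EN N, (Iio (1 : ℝ)).indicator (fun r => r ^ (-s)) ‖η‖)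
          + ENNReal.ofReal c * ENNReal.ofReal (∫ y, u y ^ 2)) := by gcongr
      _ = ENNReal.ofReal (M ^ (-(p' - p)) * A) := by
        rw [← ENNReal.ofReal_mul hc.le, ← ENNReal.ofReal_mul hc.le, ← ENNReal.ofReal_mul hc.le,
          ← ENNReal.ofReal_add (by positivity) (by positivity),
          ← ENNReal.ofReal_add (by positivity) (by positivity), ← ENNReal.ofReal_mul hk]
      _ ≤ ENNReal.ofReal (poissonConst N / 2) := ENNReal.ofReal_le_ofReal hMA
      _ = _ := by rw [ENNReal.ofReal_div_of_pos two_pos]; simp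
  have hI := integrable_neumannKer_zero hN hm
  have hle : ∀ z, ENNReal.ofReal (poissonConst N) * ENNReal.ofReal (u z) ≤
      ENNReal.ofReal Bf * (∫⁻ η, ENNReal.ofReal (neumannKer N m 0 η)) +
      ∫⁻ y, ENNReal.ofReal (neumannKer N m 0 (y - z)) *
        (ENNReal.ofReal (V y) * ENNReal.ofReal (u y)) := by
    intro z
    rw [← ENNReal.ofReal_mul hC₀.le]
    refine (hv.ofReal_trace_le hm hN hf hnn z).trans ?_
    have mk : Measurable fun y : EN N => ENNReal.ofReal (neumannKer N m 0 (y - z)) := by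
      have := measurable_neumannKer N m 0
      fun_prop
    calc _ ≤ ∫⁻ y, (ENNReal.ofReal Bf * ENNReal.ofReal (neumannKer N m 0 (y - z)) +
          ENNReal.ofReal (neumannKer N m 0 (y - z)) *
            (ENNReal.ofReal (V y) * ENNReal.ofReal (u y))) := by
          refine lintegral_mono fun y => ?_
          rw [← ENNReal.ofReal_mul (hV0 y), mul_comm (ENNReal.ofReal Bf), ← mul_add,
            ← ENNReal.ofReal_add hBf.le (mul_nonneg (hV0 y) (hu0 y))]
          gcongr
          exact hfV y
      _ = _ := by
          rw [lintegral_add_left (mk.const_mul _), lintegral_const_mul _ mk]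
          rw [lintegral_sub_right_eq_self (fun η => ENNReal.ofReal (neumannKer N m 0 η)) z]
  obtain ⟨H, hH, hUH⟩ := exists_bound_of_potential_le (ν := (volume : Measure (EN N)))
    (κ := fun z y => ENNReal.ofReal (neumannKer N m 0 (y - z)))
    (U := fun y => ENNReal.ofReal (u y)) (V := fun y => ENNReal.ofReal (V y))
    (by
      have := measurable_neumannKer N m 0
      unfold Function.uncurry
      fun_prop)
    (fun z y => by rw [← neumannKer_neg, neg_sub])
    (hcu.measurable.ennreal_ofReal) hVm.ennreal_ofReal
    (by simpa using hC₀) ENNReal.ofReal_ne_top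
    (ENNReal.mul_ne_top ENNReal.ofReal_ne_top hI.lintegral_lt_top.ne) hVint hsmall hle
  exact ⟨H.toReal, fun y => (ENNReal.ofReal_le_iff_le_toReal hH).1 (hUH y)⟩

/-- The kernel of the resolvent `(K + √(-Δ + m²))⁻¹`, up to a normalizing constant. -/
def greenKer (N : ℕ) (m K : ℝ) (η : EN N) : ℝ :=
  ∫ a in Ioi (0 : ℝ), exp (-K * a) * poissonKer N m a η

lemma measurable_poissonKer_prod (N : ℕ) (m : ℝ) :
    Measurable fun q : ℝ × EN N => poissonKer N m q.1 q.2 := by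
  have := measurable_besselInt (((N : ℝ) - 3) / 2 + 1) (m ^ 2 / 4)
  unfold poissonKer
  fun_prop

lemma measurable_neumannKer_prod (N : ℕ) (m : ℝ) :
    Measurable fun q : ℝ × EN N => neumannKer N m q.1 q.2 := by
  have := measurable_besselInt (((N : ℝ) - 3) / 2) (m ^ 2 / 4)
  unfold neumannKer
  fun_prop

lemma measurable_exp_mul_poissonKer_prod (N : ℕ) (m K : ℝ) :
    Measurable fun q : ℝ × EN N => exp (-K * q.1) * poissonKer N m q.1 q.2 := by
  have := measurable_poissonKer_prod N m
  fun_prop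

lemma integral_exp_neg_mul_Ioi {K : ℝ} (hK : 0 < K) :
    ∫ a in Ioi (0 : ℝ), exp (-K * a) = 1 / K := by
  have h := integral_exp_mul_Ioi (a := -K) (by linarith) 0
  rw [h]; simp

lemma integrable_exp_mul_poissonKer {N : ℕ} (hN : 2 ≤ N) {m K : ℝ} (hm : 0 < m) (hK : 0 < K) :
    Integrable (fun q : ℝ × EN N => exp (-K * q.1) * poissonKer N m q.1 q.2)
      ((volume.restrict (Ioi (0 : ℝ))).prod volume) := by
  have hmeas := (measurable_exp_mul_poissonKer_prod N m K).aestronglyMeasurable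
    (μ := (volume.restrict (Ioi (0 : ℝ))).prod volume)
  have hmem : ∀ᵐ a ∂(volume.restrict (Ioi (0 : ℝ))), a ∈ Ioi (0 : ℝ) :=
    ae_restrict_mem measurableSet_Ioi
  refine (integrable_prod_iff hmeas).2 ⟨?_, ?_⟩
  · filter_upwards [hmem] with a ha
    exact (integrable_poissonKer hm ha).const_mul _
  · refine ((integrableOn_exp_mul_Ioi (a := -K) (by linarith) 0).mul_const
      (poissonConst N)).mono' hmeas.norm.integral_prod_right' ?_
    filter_upwards [hmem] with a ha
    have ha' : 0 < a := ha
    rw [Real.norm_of_nonneg (integral_nonneg fun y => norm_nonneg _)]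
    simp only [norm_mul, Real.norm_of_nonneg (exp_pos _).le,
      Real.norm_of_nonneg (poissonKer_nonneg m ha'.le _), integral_const_mul]
    gcongr
    exact (integral_poissonKer_lt hN hm ha').le

lemma integrable_greenKer {N : ℕ} (hN : 2 ≤ N) {m K : ℝ} (hm : 0 < m) (hK : 0 < K) :
    Integrable (greenKer N m K) :=
  (integrable_exp_mul_poissonKer hN hm hK).integral_prod_right

lemma greenKer_congr {N : ℕ} (m K : ℝ) {η η' : EN N} (h : ‖η‖ = ‖η'‖) :
    greenKer N m K η = greenKer N m K η' := by
  simp only [greenKer, poissonKer, h]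

lemma greenKer_nonneg {N : ℕ} (m K : ℝ) (η : EN N) : 0 ≤ greenKer N m K η :=
  setIntegral_nonneg measurableSet_Ioi fun _ ha =>
    mul_nonneg (exp_pos _).le (poissonKer_nonneg m (le_of_lt ha) η)

/-- The total mass of the resolvent kernel. -/
lemma integral_greenKer_lt {N : ℕ} (hN : 2 ≤ N) {m K : ℝ} (hm : 0 < m) (hK : 0 < K) :
    K * ∫ η, greenKer N m K η < poissonConst N := by
  have hInt := integrable_exp_mul_poissonKer hN hm hK
  have h1 : ∫ η, greenKer N m K η
      = ∫ a in Ioi (0 : ℝ), ∫ η, exp (-K * a) * poissonKer N m a η :=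
    (integral_integral_swap hInt).symm
  have hexp := integrableOn_exp_mul_Ioi (a := -K) (by linarith) 0
  have h2 := setIntegral_Ioi_lt hInt.integral_prod_left (hexp.mul_const (poissonConst N))
    fun a ha => by
      simp only [integral_const_mul]
      exact mul_lt_mul_of_pos_left (integral_poissonKer_lt hN hm ha) (exp_pos _)
  rw [← h1, integral_mul_const, integral_exp_neg_mul_Ioi hK, one_div, inv_mul_eq_div,
    lt_div_iff₀ hK, mul_comm] at h2
  exact h2

lemma integrableOn_exp_mul_id {K : ℝ} (hK : 0 < K) :
    IntegrableOn (fun a : ℝ => exp (-K * a) * a) (Ioi 0) := by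
  have h := integrableOn_rpow_mul_exp_neg_mul_rpow (p := 1) (s := 1) (b := K) (by norm_num)
    one_pos hK
  refine h.congr_fun (fun a _ => ?_) measurableSet_Ioi
  simp [mul_comm]

lemma integrableOn_exp_mul_poissonKer {N : ℕ} {m K : ℝ} (hm : 0 < m) (hK : 0 < K) {η : EN N}
    (hη : η ≠ 0) : IntegrableOn (fun a => exp (-K * a) * poissonKer N m a η) (Ioi 0) := by
  have h0 : 0 < ‖η‖ := norm_pos_iff.2 hη
  have hmeas : Measurable fun a => exp (-K * a) * poissonKer N m a η :=
    (measurable_exp_mul_poissonKer_prod N m K).comp measurable_prodMk_right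
  refine ((integrableOn_exp_mul_id hK).mul_const
    (2 * besselInt (((N : ℝ) - 3) / 2 + 1) (m ^ 2 / 4) (‖η‖ ^ 2))).mono'
    hmeas.aestronglyMeasurable ?_
  filter_upwards [ae_restrict_mem measurableSet_Ioi] with a ha
  have ha' : 0 < a := ha
  rw [Real.norm_of_nonneg (mul_nonneg (exp_pos _).le (poissonKer_nonneg m ha'.le η)), poissonKer]
  have h1 : besselInt (((N : ℝ) - 3) / 2 + 1) (m ^ 2 / 4) (a ^ 2 + ‖η‖ ^ 2)
      ≤ besselInt (((N : ℝ) - 3) / 2 + 1) (m ^ 2 / 4) (‖η‖ ^ 2) := by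
    refine (besselInt_strictAntiOn _ (by positivity)).antitoneOn ?_ ?_ ?_
    · show 0 < ‖η‖ ^ 2; positivity
    · show 0 < a ^ 2 + ‖η‖ ^ 2; positivity
    · nlinarith [sq_nonneg a]
  calc exp (-K * a) * (2 * a * besselInt (((N : ℝ) - 3) / 2 + 1) (m ^ 2 / 4) (a ^ 2 + ‖η‖ ^ 2))
      ≤ exp (-K * a) * (2 * a * besselInt (((N : ℝ) - 3) / 2 + 1) (m ^ 2 / 4) (‖η‖ ^ 2)) := by
        gcongr
    _ = _ := by ring

lemma greenKer_lt {N : ℕ} {m K : ℝ} (hm : 0 < m) (hK : 0 < K) {η η' : EN N} (hη : η ≠ 0)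
    (h : ‖η‖ < ‖η'‖) : greenKer N m K η' < greenKer N m K η := by
  have h0 : 0 < ‖η‖ := norm_pos_iff.2 hη
  have hη' : η' ≠ 0 := norm_pos_iff.1 (h0.trans h)
  refine setIntegral_Ioi_lt (integrableOn_exp_mul_poissonKer hm hK hη')
    (integrableOn_exp_mul_poissonKer hm hK hη) fun a ha => ?_
  have ha' : 0 < a := ha
  unfold poissonKer
  have h1 : besselInt (((N : ℝ) - 3) / 2 + 1) (m ^ 2 / 4) (a ^ 2 + ‖η'‖ ^ 2)
      < besselInt (((N : ℝ) - 3) / 2 + 1) (m ^ 2 / 4) (a ^ 2 + ‖η‖ ^ 2) := by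
    refine besselInt_strictAntiOn _ (by positivity) ?_ ?_ ?_
    · show 0 < a ^ 2 + ‖η‖ ^ 2; positivity
    · show 0 < a ^ 2 + ‖η'‖ ^ 2; positivity
    · gcongr
  gcongr

lemma integral_exp_mul_neumannKer {N : ℕ} {m K : ℝ} (hm : 0 < m) (hK : 0 < K) {η : EN N}
    (hη : η ≠ 0) : ∫ a in Ioi (0 : ℝ), K * exp (-K * a) * neumannKer N m a η
      = neumannKer N m 0 η - greenKer N m K η := by
  have h0 : 0 < ‖η‖ := norm_pos_iff.2 hη
  have hμ : 0 < m ^ 2 / 4 := by positivity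
  have hd : ∀ a : ℝ, HasDerivAt (fun a => -(exp (-K * a) * neumannKer N m a η))
      (K * exp (-K * a) * neumannKer N m a η + exp (-K * a) * poissonKer N m a η) a := by
    intro a
    have e1 : HasDerivAt (fun a : ℝ => exp (-K * a)) (exp (-K * a) * (-K)) a := by
      have : HasDerivAt (fun a : ℝ => -K * a) (-K) a := by
        simpa using (hasDerivAt_id a).const_mul (-K)
      exact this.exp
    have e2 : HasDerivAt (fun a : ℝ => a ^ 2 + ‖η‖ ^ 2) (2 * a) a := by
      simpa using ((hasDerivAt_id a).pow 2).add_const (‖η‖ ^ 2)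
    have e3 : HasDerivAt (fun a => neumannKer N m a η) (-poissonKer N m a η) a := by
      refine ((hasDerivAt_besselInt (((N : ℝ) - 3) / 2) hμ
        (show 0 < a ^ 2 + ‖η‖ ^ 2 by positivity)).comp a e2).congr_deriv ?_
      unfold poissonKer; ring
    refine (e1.mul e3).neg.congr_deriv ?_
    ring
  have hmeas : Measurable fun a => K * exp (-K * a) * neumannKer N m a η := by
    have : Measurable fun a => neumannKer N m a η :=
      (measurable_neumannKer_prod N m).comp measurable_prodMk_right
    fun_prop
  have i1 : IntegrableOn (fun a => K * exp (-K * a) * neumannKer N m a η) (Ioi 0) := by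
    refine (((integrableOn_exp_mul_Ioi (a := -K) (by linarith) 0).const_mul K).mul_const
      (neumannKer N m 0 η)).mono' hmeas.aestronglyMeasurable (Eventually.of_forall fun a => ?_)
    have := neumannKer_nonneg m a η
    rw [Real.norm_of_nonneg (by positivity)]
    gcongr
    exact neumannKer_le_zero hm a hη
  have i2 := integrableOn_exp_mul_poissonKer hm hK hη
  have i12 : IntegrableOn (fun a => K * exp (-K * a) * neumannKer N m a η
      + exp (-K * a) * poissonKer N m a η) (Ioi 0) := i1.add i2
  have i0 : IntegrableOn (fun a => -(exp (-K * a) * neumannKer N m a η)) (Ioi 0) := by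
    refine (i1.const_mul (-K⁻¹)).congr (Eventually.of_forall fun a => ?_)
    simp only
    field_simp
  have h := integral_Ioi_of_hasDerivAt_of_tendsto (hd 0).continuousAt.continuousWithinAt
    (fun a _ => hd a) i12
    (tendsto_zero_of_hasDerivAt_of_integrableOn_Ioi (fun a _ => hd a) i12 i0)
  rw [integral_add i1 i2] at h
  simp only [mul_zero, exp_zero, one_mul, zero_sub, neg_neg] at h
  unfold greenKer
  linarith

lemma integrable_mul_comp_sub {N : ℕ} {G w : EN N → ℝ} (hG : Integrable G) (hw : Continuous w)
    {B : ℝ} (hB : ∀ y, |w y| ≤ B) (z : EN N) : Integrable fun y => G (y - z) * w y :=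
  (hG.comp_sub_right z).mul_bdd hw.aestronglyMeasurable (Eventually.of_forall hB)

set_option maxHeartbeats 1000000 in
/-- The trace of a solution satisfies the resolvent integral equation. -/
lemma IsWeakSolution.green_equation {N : ℕ} {m : ℝ} (hm : 0 < m) {f : ℝ → ℝ}
    {v : ℝ × EN N → ℝ} (hN : 2 ≤ N) (hf : HypF N f) (hv : IsWeakSolution m f v)
    (hnn : ∀ p ∈ closedHalf N, 0 ≤ v p) {B : ℝ} (hB : ∀ y, v (0, y) ≤ B) {K : ℝ} (hK : 0 < K)
    (z : EN N) : poissonConst N * v (0, z) =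
      ∫ y, greenKer N m K (y - z) * (f (v (0, y)) + K * v (0, y)) := by
  have hu0 : ∀ y : EN N, 0 ≤ v (0, y) := fun y => hnn _ (by simp [closedHalf])
  have hcu := hv.1.continuous_trace
  have hcf : Continuous fun y => f (v (0, y)) := hf.continuous.comp hcu
  obtain ⟨Bf, hBf, hBfle⟩ := exists_abs_le_on_Icc hf.continuous B
  have hfb : ∀ y, |f (v (0, y))| ≤ Bf := fun y => hBfle _ (hu0 y) (hB y)
  have hub : ∀ y, |v (0, y)| ≤ B := fun y => by rw [abs_of_nonneg (hu0 y)]; exact hB y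
  have hid : ∀ a : ℝ, 0 < a → ∫ y, v (0, y) * poissonKer N m a (y - z)
      = ∫ y, f (v (0, y)) * neumannKer N m a (y - z) := fun a ha =>
    (hv.besselInt_identity hm hN hf hnn ha z).2.2
  have iN := (integrable_neumannKer_zero hN hm).comp_sub_right z
  have iG := integrable_greenKer hN hm hK
  -- the limit `a → 0`
  have hlim : poissonConst N * v (0, z) = ∫ y, f (v (0, y)) * neumannKer N m 0 (y - z) := by
    refine tendsto_nhds_unique (tendsto_integral_mul_poissonKer hN hm hcu hub z) ?_
    refine Tendsto.congr' (f₁ := fun a => ∫ y, f (v (0, y)) * neumannKer N m a (y - z)) ?_ ?_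
    · filter_upwards [self_mem_nhdsWithin] with a ha using (hid a ha).symm
    refine tendsto_integral_filter_of_dominated_convergence
      (fun y => Bf * neumannKer N m 0 (y - z)) ?_ ?_ (iN.const_mul Bf) ?_
    · refine Eventually.of_forall fun a => ?_
      exact hcf.aestronglyMeasurable.mul
        ((measurable_neumannKer N m a).comp (measurable_id.sub_const z)).aestronglyMeasurable
    · refine Eventually.of_forall fun a => ?_
      filter_upwards [ae_ne_point hN z] with y hy
      rw [norm_mul, Real.norm_of_nonneg (neumannKer_nonneg _ _ _)]
      exact mul_le_mul (hfb y) (neumannKer_le_zero hm a (sub_ne_zero.2 hy))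
        (neumannKer_nonneg _ _ _) hBf.le
    · filter_upwards [ae_ne_point hN z] with y hy
      refine Tendsto.const_mul _ ?_
      have h0 : 0 < ‖y - z‖ := norm_pos_iff.2 (sub_ne_zero.2 hy)
      have hc : Continuous fun a => neumannKer N m a (y - z) :=
        (continuousOn_besselInt _ (by positivity)).comp_continuous (by fun_prop) fun a => by
          show 0 < a ^ 2 + ‖y - z‖ ^ 2; positivity
      exact (hc.tendsto 0).mono_left nhdsWithin_le_nhds
  have hexp := integrableOn_exp_mul_Ioi (a := -K) (by linarith) 0
  have hsub : Measurable fun q : ℝ × EN N => (q.1, q.2 - z) := by fun_prop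
  -- integration of the left side
  have p1 : Integrable (fun q : ℝ × EN N => v (0, q.2) *
      (exp (-K * q.1) * poissonKer N m q.1 (q.2 - z)))
      ((volume.restrict (Ioi (0 : ℝ))).prod volume) := by
    have hmp : MeasurePreserving (fun q : ℝ × EN N => (q.1, q.2 - z))
        ((volume.restrict (Ioi (0 : ℝ))).prod volume)
        ((volume.restrict (Ioi (0 : ℝ))).prod volume) :=
      (MeasurePreserving.id _).prod (measurePreserving_sub_right volume z)
    have h := hmp.integrable_comp_of_integrable (integrable_exp_mul_poissonKer hN hm hK)
    exact h.bdd_mul (c := B) (hcu.comp continuous_snd).aestronglyMeasurable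
      (Eventually.of_forall fun q => hub q.2)
  have s1 : ∫ a in Ioi (0 : ℝ), ∫ y, v (0, y) * (exp (-K * a) * poissonKer N m a (y - z))
      = ∫ y, v (0, y) * greenKer N m K (y - z) := by
    rw [integral_integral_swap p1]
    simp only [integral_const_mul]
    rfl
  have p2 : Integrable (fun q : ℝ × EN N => f (v (0, q.2)) *
      (K * exp (-K * q.1) * neumannKer N m q.1 (q.2 - z)))
      ((volume.restrict (Ioi (0 : ℝ))).prod volume) := by
    have hd := ((hexp.const_mul K).mul_prod (iN.const_mul Bf))
    have mN : Measurable fun q : ℝ × EN N => neumannKer N m q.1 (q.2 - z) :=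
      (measurable_neumannKer_prod N m).comp hsub
    have mE : Measurable fun q : ℝ × EN N => K * exp (-K * q.1) := by fun_prop
    refine hd.mono' ((hcf.comp continuous_snd).aestronglyMeasurable.mul
      (mE.mul mN).aestronglyMeasurable) ?_
    have e2 : ∀ᵐ q : ℝ × EN N ∂((volume.restrict (Ioi (0 : ℝ))).prod volume), q.2 ≠ z :=
      Measure.quasiMeasurePreserving_snd.ae (ae_ne_point hN z)
    filter_upwards [e2] with q hq
    have h1 := neumannKer_nonneg m q.1 (q.2 - z)
    rw [norm_mul, Real.norm_of_nonneg (show 0 ≤ K * exp (-K * q.1) * _ by positivity)]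
    calc ‖f (v (0, q.2))‖ * (K * exp (-K * q.1) * neumannKer N m q.1 (q.2 - z))
        ≤ Bf * (K * exp (-K * q.1) * neumannKer N m 0 (q.2 - z)) := by
          gcongr
          · exact hfb q.2
          · exact neumannKer_le_zero hm q.1 (sub_ne_zero.2 hq)
      _ = _ := by ring
  have s2 : ∫ a in Ioi (0 : ℝ), ∫ y, f (v (0, y)) * (K * exp (-K * a) * neumannKer N m a (y - z))
      = ∫ y, f (v (0, y)) * (neumannKer N m 0 (y - z) - greenKer N m K (y - z)) := by
    rw [integral_integral_swap p2]
    refine integral_congr_ae ?_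
    filter_upwards [ae_ne_point hN z] with y hy
    rw [integral_const_mul, integral_exp_mul_neumannKer hm hK (sub_ne_zero.2 hy)]
  have s3 : ∫ a in Ioi (0 : ℝ), ∫ y, f (v (0, y)) * (K * exp (-K * a) * neumannKer N m a (y - z))
      = K * ∫ y, v (0, y) * greenKer N m K (y - z) := by
    rw [← s1, ← integral_const_mul]
    refine setIntegral_congr_fun measurableSet_Ioi fun a ha => ?_
    calc ∫ y, f (v (0, y)) * (K * exp (-K * a) * neumannKer N m a (y - z))
        = (K * exp (-K * a)) * ∫ y, f (v (0, y)) * neumannKer N m a (y - z) := by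
          rw [← integral_const_mul]
          exact integral_congr_ae (Eventually.of_forall fun y => by simp only; ring)
      _ = K * ∫ y, v (0, y) * (exp (-K * a) * poissonKer N m a (y - z)) := by
          rw [← hid a ha, ← integral_const_mul, ← integral_const_mul]
          exact integral_congr_ae (Eventually.of_forall fun y => by simp only; ring)
  have j1 : Integrable fun y => f (v (0, y)) * neumannKer N m 0 (y - z) :=
    iN.bdd_mul hcf.aestronglyMeasurable (Eventually.of_forall hfb)
  have j2 := integrable_mul_comp_sub iG hcf hfb z
  have j3 := integrable_mul_comp_sub iG hcu hub z
  have s4 : ∫ y, f (v (0, y)) * (neumannKer N m 0 (y - z) - greenKer N m K (y - z))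
      = (∫ y, f (v (0, y)) * neumannKer N m 0 (y - z))
        - ∫ y, greenKer N m K (y - z) * f (v (0, y)) := by
    rw [← integral_sub j1 j2]
    refine integral_congr_ae (Eventually.of_forall fun y => ?_)
    simp only; ring
  have s5 : ∫ y, greenKer N m K (y - z) * (f (v (0, y)) + K * v (0, y))
      = (∫ y, greenKer N m K (y - z) * f (v (0, y)))
        + K * ∫ y, greenKer N m K (y - z) * v (0, y) := by
    rw [← integral_const_mul, ← integral_add j2 (j3.const_mul K)]
    refine integral_congr_ae (Eventually.of_forall fun y => ?_)
    simp only; ring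
  rw [s5, hlim]
  have s6 : ∫ y, v (0, y) * greenKer N m K (y - z) = ∫ y, greenKer N m K (y - z) * v (0, y) := by
    simp only [mul_comm]
  rw [s2, s4, s6] at s3
  linarith

/-! ### Moving planes -/

/-- Reflection of `ℝ^N` across the hyperplane `⟪y, e⟫ = l`, for a unit vector `e`. -/
def planeRefl {N : ℕ} (e : EN N) (l : ℝ) (y : EN N) : EN N := y - (2 * (inner ℝ y e - l)) • e

lemma inner_planeRefl {N : ℕ} {e : EN N} (he : ‖e‖ = 1) (l : ℝ) (y : EN N) :
    inner ℝ (planeRefl e l y) e = 2 * l - inner ℝ y e := by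
  simp only [planeRefl, inner_sub_left, real_inner_smul_left, real_inner_self_eq_norm_sq, he]
  ring

lemma planeRefl_planeRefl {N : ℕ} {e : EN N} (he : ‖e‖ = 1) (l : ℝ) (y : EN N) :
    planeRefl e l (planeRefl e l y) = y := by
  conv_lhs => rw [planeRefl, inner_planeRefl he, planeRefl]
  module

lemma planeRefl_of_inner_eq {N : ℕ} {e : EN N} {l : ℝ} {y : EN N} (h : inner ℝ y e = l) :
    planeRefl e l y = y := by simp [planeRefl, h]

lemma continuous_planeRefl {N : ℕ} (e : EN N) (l : ℝ) : Continuous (planeRefl e l) := by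
  unfold planeRefl; fun_prop

lemma planeRefl_eq_reflection {N : ℕ} {e : EN N} (he : ‖e‖ = 1) (l : ℝ) (y : EN N) :
    planeRefl e l y = (ℝ ∙ e)ᗮ.reflection y + (2 * l) • e := by
  rw [Submodule.reflection_orthogonal_apply, Submodule.reflection_singleton_apply, he, planeRefl,
    real_inner_comm]
  simp
  module

lemma measurePreserving_planeRefl {N : ℕ} {e : EN N} (he : ‖e‖ = 1) (l : ℝ) :
    MeasurePreserving (planeRefl e l) := by
  have h : planeRefl e l = (fun y => y + (2 * l) • e) ∘ (ℝ ∙ e)ᗮ.reflection :=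
    funext fun y => planeRefl_eq_reflection he l y
  rw [h]
  exact (measurePreserving_add_right volume _).comp (LinearIsometryEquiv.measurePreserving _)

lemma measurableEmbedding_planeRefl {N : ℕ} {e : EN N} (he : ‖e‖ = 1) (l : ℝ) :
    MeasurableEmbedding (planeRefl e l) :=
  (continuous_planeRefl e l).measurableEmbedding
    (Function.LeftInverse.injective (planeRefl_planeRefl he l))

lemma norm_planeRefl_sub {N : ℕ} {e : EN N} (he : ‖e‖ = 1) (l : ℝ) (y z : EN N) :
    ‖planeRefl e l y - z‖ = ‖y - planeRefl e l z‖ := by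
  conv_rhs => rw [← planeRefl_planeRefl he l y]
  rw [planeRefl_eq_reflection he l (planeRefl e l y), planeRefl_eq_reflection he l z,
    add_sub_add_right_eq_sub, ← map_sub, LinearIsometryEquiv.norm_map]

lemma norm_sub_planeRefl_sq {N : ℕ} {e : EN N} (he : ‖e‖ = 1) (l : ℝ) (y z : EN N) :
    ‖y - planeRefl e l z‖ ^ 2 =
      ‖y - z‖ ^ 2 + 4 * (inner ℝ y e - l) * (inner ℝ z e - l) := by
  have h : y - planeRefl e l z = (y - z) + (2 * (inner ℝ z e - l)) • e := by
    rw [planeRefl]; module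
  rw [h, norm_add_sq_real, real_inner_smul_right, norm_smul, he, inner_sub_left, mul_pow,
    Real.norm_eq_abs, sq_abs]
  ring

lemma norm_sub_lt_norm_sub_planeRefl {N : ℕ} {e : EN N} (he : ‖e‖ = 1) {l : ℝ} {y z : EN N}
    (hy : l < inner ℝ y e) (hz : l < inner ℝ z e) : ‖y - z‖ < ‖y - planeRefl e l z‖ := by
  refine lt_of_pow_lt_pow_left₀ 2 (norm_nonneg _) ?_
  rw [norm_sub_planeRefl_sq he]
  nlinarith [mul_pos (sub_pos.2 hy) (sub_pos.2 hz)]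

lemma planeRefl_eq_swap {N : ℕ} {y y' c : EN N} (h : ‖y - c‖ = ‖y' - c‖) (hne : y ≠ y') :
    ∃ e : EN N, ‖e‖ = 1 ∧ planeRefl e (inner ℝ c e) y = y' := by
  have h0 : ‖y - y'‖ ≠ 0 := norm_ne_zero_iff.2 (sub_ne_zero.2 hne)
  refine ⟨‖y - y'‖⁻¹ • (y - y'), by rw [norm_smul, norm_inv, norm_norm, inv_mul_cancel₀ h0], ?_⟩
  have h1 : 2 * inner ℝ (y - c) (y - y') = ‖y - y'‖ ^ 2 := by
    have h2 : y - y' = (y - c) - (y' - c) := by abel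
    have h3 := norm_sub_sq_real (y - c) (y' - c)
    rw [← h2, ← h] at h3
    rw [h3]
    conv_lhs => rw [h2, inner_sub_right, real_inner_self_eq_norm_sq]
    ring
  rw [planeRefl, ← inner_sub_left, real_inner_smul_right, smul_smul]
  have : 2 * (‖y - y'‖⁻¹ * inner ℝ (y - c) (y - y')) * ‖y - y'‖⁻¹ = 1 := by
    field_simp; linarith
  rw [this]; module

lemma volume_hyperplane {N : ℕ} {e : EN N} (he : ‖e‖ = 1) (l : ℝ) :
    ∀ᵐ y : EN N, inner ℝ y e ≠ l := by
  have h := Measure.addHaar_affineSubspace (volume : Measure (EN N))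
    (AffineSubspace.mk' (l • e) (ℝ ∙ e)ᗮ) ?_
  · rw [ae_iff]
    convert h using 2
    ext y
    simp only [not_not, mem_ofPred_eq, SetLike.mem_coe, AffineSubspace.mem_mk', vsub_eq_sub,
      Submodule.mem_orthogonal_singleton_iff_inner_left, inner_sub_left, real_inner_smul_left,
      real_inner_self_eq_norm_sq, he]
    constructor <;> intro h <;> linarith
  · intro h
    have h1 : (l + 1) • e ∈ AffineSubspace.mk' (l • e) (ℝ ∙ e)ᗮ := by rw [h]; trivial
    rw [AffineSubspace.mem_mk', vsub_eq_sub,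
      Submodule.mem_orthogonal_singleton_iff_inner_left, inner_sub_left, real_inner_smul_left,
      real_inner_smul_left, real_inner_self_eq_norm_sq, he] at h1
    linarith

/-- A nonnegative bounded square-integrable solution `u` of the integral equation
`C u = G * (g ∘ u)`, where the kernel `G` is radially decreasing, `g` is increasing, and `g` is a
contraction relative to `C` for small arguments. -/
structure PlaneSetup {N : ℕ} (G u : EN N → ℝ) (g : ℝ → ℝ) (C κ K B δ : ℝ) : Prop where
  dim : 2 ≤ N
  kerInt : Integrable G
  kerNonneg : ∀ η, 0 ≤ G η
  kerCongr : ∀ η η', ‖η‖ = ‖η'‖ → G η = G η'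
  kerAnti : ∀ η η', η ≠ 0 → ‖η‖ < ‖η'‖ → G η' < G η
  cont : Continuous u
  nonneg : ∀ y, 0 ≤ u y
  le : ∀ y, u y ≤ B
  sqInt : Integrable fun y => u y ^ 2
  gCont : Continuous g
  eqn : ∀ z, C * u z = ∫ y, G (y - z) * g (u y)
  mono : ∀ s t, 0 ≤ s → s < t → t ≤ B → g s < g t
  lip : ∀ s t, 0 ≤ s → s ≤ t → t ≤ B → g t - g s ≤ K * (t - s)
  small : ∀ s t, 0 ≤ s → s ≤ t → t ≤ δ → g t - g s ≤ κ * (t - s)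
  posδ : 0 < δ
  posC : 0 < C
  nonnegκ : 0 ≤ κ
  nonnegK : 0 ≤ K
  contr : κ * ∫ η, G η < C

/-- The integrand comparing `u` with its reflection. -/
def reflDiff {N : ℕ} (G u : EN N → ℝ) (g : ℝ → ℝ) (e : EN N) (l : ℝ) (z y : EN N) : ℝ :=
  (G (y - z) - G (y - planeRefl e l z)) * (g (u y) - g (u (planeRefl e l y)))

section PlaneSetup

variable {N : ℕ} {G u : EN N → ℝ} {g : ℝ → ℝ} {C κ K B δ : ℝ}

lemma PlaneSetup.exists_bound (h : PlaneSetup G u g C κ K B δ) : ∃ M, ∀ y, |g (u y)| ≤ M := by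
  obtain ⟨M, -, hM⟩ := exists_abs_le_on_Icc h.gCont B
  exact ⟨M, fun y => hM _ (h.nonneg y) (h.le y)⟩

lemma PlaneSetup.mono_le (h : PlaneSetup G u g C κ K B δ) {s t : ℝ} (hs : 0 ≤ s) (hst : s ≤ t)
    (ht : t ≤ B) : g s ≤ g t := by
  rcases hst.eq_or_lt with rfl | h'
  · exact le_rfl
  · exact (h.mono s t hs h' ht).le

lemma PlaneSetup.ker_refl (h : PlaneSetup G u g C κ K B δ) {e : EN N} (he : ‖e‖ = 1) (l : ℝ)
    (y z : EN N) : G (planeRefl e l y - z) = G (y - planeRefl e l z) :=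
  h.kerCongr _ _ (norm_planeRefl_sub he l y z)

lemma PlaneSetup.ker_lt (h : PlaneSetup G u g C κ K B δ) {e : EN N} (he : ‖e‖ = 1) {l : ℝ}
    {y z : EN N} (hy : l < inner ℝ y e) (hz : l < inner ℝ z e) (hyz : y ≠ z) :
    0 < G (y - z) - G (y - planeRefl e l z) :=
  sub_pos.2 (h.kerAnti _ _ (sub_ne_zero.2 hyz) (norm_sub_lt_norm_sub_planeRefl he hy hz))

lemma PlaneSetup.reflDiff_planeRefl (h : PlaneSetup G u g C κ K B δ) {e : EN N} (he : ‖e‖ = 1)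
    (l : ℝ) (z y : EN N) : reflDiff G u g e l z (planeRefl e l y) = reflDiff G u g e l z y := by
  simp only [reflDiff, planeRefl_planeRefl he, h.ker_refl he]
  ring

lemma PlaneSetup.integrable_ker_mul (h : PlaneSetup G u g C κ K B δ) {w : EN N → ℝ} {M : ℝ}
    (hw : AEStronglyMeasurable w) (hM : ∀ y, |w y| ≤ M) (z : EN N) :
    Integrable fun y => G (y - z) * w y :=
  (h.kerInt.comp_sub_right z).mul_bdd hw (Eventually.of_forall hM)

lemma PlaneSetup.integrable_reflDiff (h : PlaneSetup G u g C κ K B δ) (e : EN N)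
    (l : ℝ) (z : EN N) : Integrable (reflDiff G u g e l z) := by
  obtain ⟨M, hM⟩ := h.exists_bound
  have hc : Continuous fun y => g (u y) - g (u (planeRefl e l y)) :=
    (h.gCont.comp h.cont).sub (h.gCont.comp (h.cont.comp (continuous_planeRefl e l)))
  have hk : Integrable fun y => G (y - z) - G (y - planeRefl e l z) :=
    (h.kerInt.comp_sub_right z).sub (h.kerInt.comp_sub_right _)
  refine hk.mul_bdd (c := M + M) hc.aestronglyMeasurable (Eventually.of_forall fun y => ?_)
  exact (norm_sub_le _ _).trans (add_le_add (hM _) (hM _))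

lemma PlaneSetup.integral_reflDiff (h : PlaneSetup G u g C κ K B δ) {e : EN N} (he : ‖e‖ = 1)
    (l : ℝ) (z : EN N) :
    ∫ y, reflDiff G u g e l z y = 2 * (C * (u z - u (planeRefl e l z))) := by
  obtain ⟨M, hM⟩ := h.exists_bound
  have hc := (h.gCont.comp h.cont).aestronglyMeasurable (μ := volume)
  have i1 : ∀ z, Integrable fun y => G (y - z) * g (u y) := h.integrable_ker_mul hc hM
  have mp := measurePreserving_planeRefl he l
  have me := measurableEmbedding_planeRefl he l
  have i2 : ∀ z, Integrable fun y => G (y - planeRefl e l z) * g (u (planeRefl e l y)) := by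
    intro z
    have := mp.integrable_comp_of_integrable (i1 z)
    refine this.congr (Eventually.of_forall fun y => ?_)
    simp only [Function.comp_apply, h.ker_refl he]
  have e2 : ∀ z, ∫ y, G (y - planeRefl e l z) * g (u (planeRefl e l y)) = C * u z := by
    intro z
    rw [h.eqn, ← mp.integral_comp me]
    simp only [h.ker_refl he, planeRefl_planeRefl he]
  have i3 := i2 (planeRefl e l z)
  have e3 := e2 (planeRefl e l z)
  rw [planeRefl_planeRefl he] at i3 e3
  have : ∀ y, reflDiff G u g e l z y = (G (y - z) * g (u y) - G (y - planeRefl e l z) * g (u y)) -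
      (G (y - z) * g (u (planeRefl e l y))
        - G (y - planeRefl e l z) * g (u (planeRefl e l y))) := by
    intro y; rw [reflDiff]; ring
  simp only [this]
  have k1 : Integrable fun y => G (y - z) * g (u y) - G (y - planeRefl e l z) * g (u y) :=
    (i1 z).sub (i1 _)
  have k2 : Integrable fun y => G (y - z) * g (u (planeRefl e l y))
        - G (y - planeRefl e l z) * g (u (planeRefl e l y)) := i3.sub (i2 z)
  rw [integral_sub k1 k2, integral_sub (i1 z) (i1 _), integral_sub i3 (i2 z), e3, e2, ← h.eqn,
    ← h.eqn]
  ring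

/-- The half-space where the reflected function dominates. -/
def ReflDominates (u : EN N → ℝ) (e : EN N) (l : ℝ) : Prop :=
  ∀ z, l < inner ℝ z e → u z ≤ u (planeRefl e l z)

/-- The part of the half-space where `u` is not small and exceeds its reflection. -/
def badSet (u : EN N → ℝ) (δ : ℝ) (e : EN N) (l : ℝ) : Set (EN N) :=
  {y | l < inner ℝ y e ∧ δ < u y ∧ u (planeRefl e l y) < u y}

lemma PlaneSetup.measurableSet_badSet (h : PlaneSetup G u g C κ K B δ) (e : EN N) (l : ℝ) :
    MeasurableSet (badSet u δ e l) := by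
  have h1 : IsOpen {y : EN N | l < inner ℝ y e} := isOpen_lt (by fun_prop) (by fun_prop)
  have h2 : IsOpen {y : EN N | δ < u y} := isOpen_lt (by fun_prop) h.cont
  have h3 : IsOpen {y : EN N | u (planeRefl e l y) < u y} :=
    isOpen_lt (h.cont.comp (continuous_planeRefl e l)) h.cont
  exact (h1.inter (h2.inter h3)).measurableSet

lemma PlaneSetup.contraction (h : PlaneSetup G u g C κ K B δ) {e : EN N} (he : ‖e‖ = 1) {l : ℝ}
    {θ : ℝ} (hθ : ∀ z, ∫ y in badSet u δ e l, G (y - z) ≤ θ) {T : ℝ} (hT : 0 ≤ T)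
    (hle : ∀ z, l < inner ℝ z e → u z - u (planeRefl e l z) ≤ T) {z : EN N}
    (hz : l < inner ℝ z e) :
    C * (u z - u (planeRefl e l z)) ≤ (κ * (∫ η, G η) + K * θ) * T := by
  classical
  set A := badSet u δ e l with hA
  have hAm : MeasurableSet A := h.measurableSet_badSet e l
  set Q : EN N → ℝ := fun y => (κ * T) * G (y - z) + (K * T) * A.indicator (fun y => G (y - z)) y
  have hGz := h.kerInt.comp_sub_right z
  have iQ : Integrable Q := (hGz.const_mul _).add ((hGz.indicator hAm).const_mul _)
  have hQ0 : ∀ y, 0 ≤ Q y := fun y => add_nonneg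
    (mul_nonneg (mul_nonneg h.nonnegκ hT) (h.kerNonneg _))
    (mul_nonneg (mul_nonneg h.nonnegK hT) (indicator_nonneg (fun _ _ => h.kerNonneg _) y))
  have mp := measurePreserving_planeRefl he l
  have me := measurableEmbedding_planeRefl he l
  have iQR : Integrable fun y => Q (planeRefl e l y) := mp.integrable_comp_of_integrable iQ
  have key : ∀ y, l < inner ℝ y e → y ≠ z → reflDiff G u g e l z y ≤ Q y := by
    intro y hy hyz
    have hker := h.ker_lt he hy hz hyz
    by_cases hu : u (planeRefl e l y) < u y
    · have h1 : reflDiff G u g e l z y ≤ G (y - z) * (g (u y) - g (u (planeRefl e l y))) :=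
        mul_le_mul_of_nonneg_right (by linarith [h.kerNonneg (y - planeRefl e l z)])
          (sub_nonneg.2 (h.mono_le (h.nonneg _) hu.le (h.le _)))
      refine h1.trans ?_
      have hd := hle y hy
      by_cases hs : δ < u y
      · have hyA : y ∈ A := ⟨hy, hs, hu⟩
        have h2 := h.lip _ _ (h.nonneg (planeRefl e l y)) hu.le (h.le y)
        have h3 : g (u y) - g (u (planeRefl e l y)) ≤ K * T :=
          h2.trans (mul_le_mul_of_nonneg_left hd h.nonnegK)
        have h4 : 0 ≤ κ * T * G (y - z) := mul_nonneg (mul_nonneg h.nonnegκ hT) (h.kerNonneg _)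
        simp only [Q, indicator_of_mem hyA]
        nlinarith [mul_le_mul_of_nonneg_left h3 (h.kerNonneg (y - z))]
      · have h2 := h.small _ _ (h.nonneg (planeRefl e l y)) hu.le (not_lt.1 hs)
        have h3 : g (u y) - g (u (planeRefl e l y)) ≤ κ * T :=
          h2.trans (mul_le_mul_of_nonneg_left hd h.nonnegκ)
        have hyA : y ∉ A := fun h => hs h.2.1
        simp only [Q, indicator_of_notMem hyA]
        nlinarith [mul_le_mul_of_nonneg_left h3 (h.kerNonneg (y - z))]
    · refine le_trans (mul_nonpos_of_nonneg_of_nonpos hker.le ?_) (hQ0 y)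
      exact sub_nonpos.2 (h.mono_le (h.nonneg _) (not_lt.1 hu) (h.le _))
  have key2 : ∀ᵐ y, reflDiff G u g e l z y ≤ Q y + Q (planeRefl e l y) := by
    filter_upwards [ae_ne_point h.dim z, ae_ne_point h.dim (planeRefl e l z)] with y hyz hyz'
    rcases lt_trichotomy l (inner ℝ y e) with hy | hy | hy
    · linarith [key y hy hyz, hQ0 (planeRefl e l y)]
    · have : reflDiff G u g e l z y = 0 := by
        rw [reflDiff, planeRefl_of_inner_eq hy.symm, sub_self, mul_zero]
      linarith [hQ0 y, hQ0 (planeRefl e l y)]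
    · have := key (planeRefl e l y) (by rw [inner_planeRefl he]; linarith)
        fun hh => hyz' (by rw [← hh, planeRefl_planeRefl he])
      rw [h.reflDiff_planeRefl he] at this
      linarith [hQ0 y]
  have hI := integral_mono_ae (h.integrable_reflDiff e l z) (iQ.add iQR) key2
  have e1 : ∫ y, Q (planeRefl e l y) = ∫ y, Q y := mp.integral_comp me Q
  have e2 : ∫ y, Q y = κ * T * (∫ η, G η) + K * T * ∫ y in A, G (y - z) := by
    rw [integral_add (hGz.const_mul _) ((hGz.indicator hAm).const_mul _), integral_const_mul,
      integral_const_mul, integral_indicator hAm, integral_sub_right_eq_self G z]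
  rw [h.integral_reflDiff he] at hI
  simp only [Pi.add_apply] at hI
  rw [integral_add iQ iQR, e1, e2] at hI
  nlinarith [mul_le_mul_of_nonneg_left (hθ z) (mul_nonneg h.nonnegK hT)]

lemma exists_setIntegral_translate_le (hG : Integrable G) (hG0 : ∀ η, 0 ≤ G η) {θ : ℝ}
    (hθ : 0 < θ) : ∃ η : ℝ≥0∞, 0 < η ∧ ∀ A : Set (EN N), MeasurableSet A → volume A < η →
      ∀ z, ∫ y in A, G (y - z) ≤ θ := by
  have hfin : ∫⁻ y, ENNReal.ofReal (G y) ≠ ∞ := hG.lintegral_lt_top.ne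
  obtain ⟨η, hη, hlt⟩ := exists_pos_setLIntegral_lt_of_measure_lt hfin
    (ENNReal.ofReal_pos.2 hθ).ne'
  refine ⟨η, hη, fun A hA hAη z => ?_⟩
  have h1 : A = (fun y => y - z) ⁻¹' ((fun y => y + z) ⁻¹' A) := by
    ext y; simp
  have mp := measurePreserving_sub_right (volume : Measure (EN N)) z
  have mp' := measurePreserving_add_right (volume : Measure (EN N)) z
  rw [h1, mp.setIntegral_preimage_emb (measurableEmbedding_subRight z) G,
    integral_eq_lintegral_of_nonneg_ae (Eventually.of_forall hG0) hG.aestronglyMeasurable.restrict]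
  refine ENNReal.toReal_le_of_le_ofReal hθ.le (hlt _ ?_).le
  rwa [mp'.measure_preimage hA.nullMeasurableSet]

lemma PlaneSetup.exists_reflDominates (h : PlaneSetup G u g C κ K B δ) :
    ∃ η : ℝ≥0∞, 0 < η ∧ ∀ (e : EN N) (l : ℝ), ‖e‖ = 1 → volume (badSet u δ e l) < η →
      ReflDominates u e l := by
  set θ := (C - κ * ∫ η, G η) / (2 * (K + 1)) with hθ
  have hK := h.nonnegK
  have hgap : 0 < C - κ * ∫ η, G η := sub_pos.2 h.contr
  have hθ0 : 0 < θ := by positivity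
  have hKθ : K * θ < C - κ * ∫ η, G η := by
    rw [hθ, mul_div_assoc', div_lt_iff₀ (by positivity)]
    nlinarith
  obtain ⟨η, hη, H⟩ := exists_setIntegral_translate_le h.kerInt h.kerNonneg hθ0
  refine ⟨η, hη, fun e l he hA => ?_⟩
  have hθ' := H _ (h.measurableSet_badSet e l) hA
  have hB : 0 ≤ B := (h.nonneg 0).trans (h.le 0)
  set ρ := (κ * (∫ η, G η) + K * θ) / C with hρ
  have hC := h.posC
  have hG0 : 0 ≤ ∫ η, G η := integral_nonneg h.kerNonneg
  have hκ := h.nonnegκ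
  have hρ0 : 0 ≤ ρ := by positivity
  have hρ1 : ρ < 1 := by rw [hρ, div_lt_one hC]; linarith
  have hn : ∀ n : ℕ, ∀ z, l < inner ℝ z e → u z - u (planeRefl e l z) ≤ ρ ^ n * B := by
    intro n
    induction n with
    | zero => intro z _; linarith [h.le z, h.nonneg (planeRefl e l z)]
    | succ n ih =>
      intro z hz
      have h1 := h.contraction he hθ' (by positivity) ih hz
      rw [mul_comm, ← le_div_iff₀ hC] at h1
      refine h1.trans_eq ?_
      rw [hρ]; ring
  intro z hz
  have hlim : Tendsto (fun n : ℕ => ρ ^ n * B) atTop (𝓝 (0 * B)) :=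
    (tendsto_pow_atTop_nhds_zero_of_lt_one hρ0 hρ1).mul_const B
  have := ge_of_tendsto' hlim fun n => hn n z hz
  linarith

lemma PlaneSetup.measure_lt_top (h : PlaneSetup G u g C κ K B δ) {c : ℝ} (hc : 0 < c) :
    volume {y | c < u y} < ∞ := by
  refine (measure_mono fun y hy => ?_).trans_lt (h.sqInt.measure_gt_lt_top (pow_pos hc 2))
  exact pow_lt_pow_left₀ hy hc.le two_ne_zero

lemma PlaneSetup.tendsto_measure_tail (h : PlaneSetup G u g C κ K B δ) (e : EN N) {c : ℝ}
    (hc : 0 < c) : Tendsto (fun T : ℝ => volume {y | T < inner ℝ y e ∧ c < u y}) atTop (𝓝 0) := by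
  have hm : MeasurableSet {y | c < u y} := (isOpen_lt continuous_const h.cont).measurableSet
  have hT : ∀ T : ℝ, MeasurableSet {y : EN N | T < inner ℝ y e ∧ c < u y} := fun T =>
    ((isOpen_lt (by fun_prop) (by fun_prop) : IsOpen {y : EN N | T < inner ℝ y e}).inter
      (isOpen_lt continuous_const h.cont)).measurableSet
  have := tendsto_measure_of_ae_tendsto_indicator (μ := (volume : Measure (EN N))) atTop
    (A := ∅) MeasurableSet.empty hT hm (h.measure_lt_top hc).ne
    (Eventually.of_forall fun T y hy => hy.2)
    (Eventually.of_forall fun y => by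
      filter_upwards [eventually_ge_atTop (inner ℝ y e : ℝ)] with T hT
      simp [hT])
  simpa using this

lemma PlaneSetup.exists_forall_ge_reflDominates (h : PlaneSetup G u g C κ K B δ) {e : EN N}
    (he : ‖e‖ = 1) : ∃ l, ∀ μ, l ≤ μ → ReflDominates u e μ := by
  obtain ⟨η, hη, H⟩ := h.exists_reflDominates
  obtain ⟨l, hl⟩ := eventually_atTop.1 ((h.tendsto_measure_tail e h.posδ).eventually_lt_const hη)
  refine ⟨l, fun μ hμ => H e μ he ?_⟩
  have hsub : badSet u δ e μ ⊆ {y | μ < inner ℝ y e ∧ δ < u y} := fun y hy => ⟨hy.1, hy.2.1⟩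
  exact (measure_mono hsub).trans_lt (hl μ hμ)

lemma PlaneSetup.not_recurrent (h : PlaneSetup G u g C κ K B δ) {y₀ : EN N} (h0 : u y₀ ≠ 0)
    {e : EN N} (he : ‖e‖ = 1) (hrec : ∀ T : ℝ, ∃ t, T ≤ t ∧ ∀ y, u y ≤ u (y + t • e)) : False := by
  have hpos : 0 < u y₀ := lt_of_le_of_ne (h.nonneg _) h0.symm
  have hopen : IsOpen {y | u y₀ / 2 < u y} := isOpen_lt continuous_const h.cont
  obtain ⟨r, hr, hball⟩ := Metric.isOpen_iff.1 hopen y₀ (by simp only [mem_ofPred_eq]; linarith)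
  have hlim := h.tendsto_measure_tail e (half_pos hpos)
  have hv : 0 < volume (Metric.ball y₀ r) := Metric.measure_ball_pos _ _ hr
  obtain ⟨T, hT⟩ := (hlim.eventually_lt_const hv).exists
  obtain ⟨t, ht, hle⟩ := hrec (T + r - inner ℝ y₀ e)
  refine absurd hT (not_lt.2 ?_)
  have hmp := measurePreserving_add_right (volume : Measure (EN N)) (-(t • e))
  rw [← hmp.measure_preimage Metric.isOpen_ball.measurableSet.nullMeasurableSet]
  refine measure_mono fun y hy => ?_
  have hy' : y + -(t • e) ∈ Metric.ball y₀ r := hy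
  have h1 := hle (y + -(t • e))
  rw [neg_add_cancel_right] at h1
  refine ⟨?_, lt_of_lt_of_le (hball hy') h1⟩
  have h2 : |inner ℝ (y + -(t • e) - y₀) e| < r := by
    refine (abs_real_inner_le_norm _ _).trans_lt ?_
    rw [he, mul_one, ← dist_eq_norm]; exact hy'
  rw [inner_sub_left, inner_add_left, inner_neg_left, real_inner_smul_left,
    real_inner_self_eq_norm_sq, he] at h2
  have := (abs_lt.1 h2).1
  linarith

lemma PlaneSetup.lt_planeRefl (h : PlaneSetup G u g C κ K B δ) {e : EN N} (he : ‖e‖ = 1) {l : ℝ}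
    (hd : ReflDominates u e l) {y₀ : EN N} (hy₀ : l < inner ℝ y₀ e)
    (hne : u y₀ ≠ u (planeRefl e l y₀)) {z : EN N} (hz : l < inner ℝ z e) :
    u z < u (planeRefl e l z) := by
  refine lt_of_le_of_ne (hd z hz) fun heq => ?_
  have hI := h.integral_reflDiff he l z
  rw [heq, sub_self, mul_zero, mul_zero] at hI
  have key : ∀ y, l < inner ℝ y e → y ≠ z → reflDiff G u g e l z y ≤ 0 := fun y hy hyz =>
    mul_nonpos_of_nonneg_of_nonpos (h.ker_lt he hy hz hyz).le
      (sub_nonpos.2 (h.mono_le (h.nonneg _) (hd y hy) (h.le _)))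
  have key2 : ∀ᵐ y, reflDiff G u g e l z y ≤ 0 := by
    filter_upwards [ae_ne_point h.dim z, ae_ne_point h.dim (planeRefl e l z)] with y hyz hyz'
    rcases lt_trichotomy l (inner ℝ y e) with hy | hy | hy
    · exact key y hy hyz
    · rw [reflDiff, planeRefl_of_inner_eq hy.symm, sub_self, mul_zero]
    · have := key (planeRefl e l y) (by rw [inner_planeRefl he]; linarith)
        fun hh => hyz' (by rw [← hh, planeRefl_planeRefl he])
      rwa [h.reflDiff_planeRefl he] at this
  have hzero : ∀ᵐ y, -reflDiff G u g e l z y = 0 := by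
    have := (integral_eq_zero_iff_of_nonneg_ae (f := fun y => -reflDiff G u g e l z y)
      (by filter_upwards [key2] with y hy; simpa using hy) (h.integrable_reflDiff e l z).neg).1
      (by rw [integral_neg, hI, neg_zero])
    exact this
  have hdense := Measure.dense_of_ae (hzero.and (ae_ne_point h.dim z))
  have hopen : IsOpen {y | l < inner ℝ y e ∧ u y < u (planeRefl e l y)} :=
    (isOpen_lt (by fun_prop) (by fun_prop) : IsOpen {y : EN N | l < inner ℝ y e}).inter
      (isOpen_lt h.cont (h.cont.comp (continuous_planeRefl e l)))
  obtain ⟨y, hy, hy1, hy2⟩ := hdense.inter_open_nonempty _ hopen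
    ⟨y₀, hy₀, lt_of_le_of_ne (hd y₀ hy₀) hne⟩
  have h1 := h.ker_lt he hy.1 hz hy2
  have h2 := h.mono _ _ (h.nonneg y) hy.2 (h.le _)
  have h3 : reflDiff G u g e l z y < 0 := mul_neg_of_pos_of_neg h1 (sub_neg.2 h2)
  linarith

lemma PlaneSetup.eventually_reflDominates (h : PlaneSetup G u g C κ K B δ) {e : EN N}
    (he : ‖e‖ = 1) {l : ℝ} (hlt : ∀ z, l < inner ℝ z e → u z < u (planeRefl e l z)) :
    ∀ᶠ μ in 𝓝[<] l, ReflDominates u e μ := by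
  obtain ⟨η, hη, H⟩ := h.exists_reflDominates
  have hm : MeasurableSet {y | δ < u y} := (isOpen_lt continuous_const h.cont).measurableSet
  have hlim := tendsto_measure_of_ae_tendsto_indicator (μ := (volume : Measure (EN N))) (𝓝[<] l)
    (As := fun μ => badSet u δ e μ)
    (A := ∅) MeasurableSet.empty (h.measurableSet_badSet e) hm (h.measure_lt_top h.posδ).ne
    (Eventually.of_forall fun T y hy => hy.2.1) ?_
  · rw [measure_empty] at hlim
    filter_upwards [hlim.eventually_lt_const hη] with μ hμ using H e μ he hμ
  · filter_upwards [volume_hyperplane he l] with y hy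
    simp only [mem_empty_iff_false, iff_false]
    rcases lt_or_gt_of_ne hy with hy | hy
    · filter_upwards [nhdsWithin_le_nhds (lt_mem_nhds hy)] with μ hμ hbad
      exact lt_asymm hμ hbad.1
    · have hc : Continuous fun μ => u (planeRefl e μ y) := by
        refine h.cont.comp ?_
        unfold planeRefl; fun_prop
      filter_upwards [nhdsWithin_le_nhds ((hc.tendsto l).eventually_const_lt (hlt y hy))]
        with μ hμ hbad
      exact lt_asymm hμ hbad.2.2

/-- The moving plane argument: `u` is symmetric about some hyperplane in each direction. -/
lemma PlaneSetup.exists_symmetric (h : PlaneSetup G u g C κ K B δ) {y₀ : EN N} (h0 : u y₀ ≠ 0)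
    {e : EN N} (he : ‖e‖ = 1) : ∃ l, ∀ y, u (planeRefl e l y) = u y := by
  set S : Set ℝ := {l | ∀ μ, l ≤ μ → ReflDominates u e μ} with hS
  have hne : S.Nonempty := h.exists_forall_ge_reflDominates he
  have hbdd : BddBelow S := by
    by_contra hnb
    have hall : ∀ μ, ReflDominates u e μ := by
      intro μ
      obtain ⟨l, hl, hlμ⟩ := not_bddBelow_iff.1 hnb μ
      exact hl μ hlμ.le
    refine h.not_recurrent h0 (e := -e) (by rwa [norm_neg]) fun T => ⟨max T 1, le_max_left _ _, ?_⟩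
    intro y
    have ht : 0 < max T 1 := lt_max_of_lt_right one_pos
    have := hall (inner ℝ y e - max T 1 / 2) y (by linarith)
    convert this using 2
    rw [planeRefl]
    module
  set l := sInf S with hl
  have hgt : ∀ μ, l < μ → ReflDominates u e μ := by
    intro μ hμ
    obtain ⟨s, hs, hsμ⟩ := exists_lt_of_csInf_lt hne hμ
    exact hs μ hsμ.le
  have hgood : ReflDominates u e l := by
    intro z hz
    have hc : Continuous fun μ => u (planeRefl e μ z) := by
      refine h.cont.comp ?_
      unfold planeRefl; fun_prop
    refine ge_of_tendsto ((hc.tendsto l).mono_left (nhdsWithin_le_nhds (s := Ioi l))) ?_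
    filter_upwards [self_mem_nhdsWithin, nhdsWithin_le_nhds (gt_mem_nhds hz)] with μ h1 h2
    exact hgt μ h1 z h2
  by_cases hsym : ∀ y, l < inner ℝ y e → u y = u (planeRefl e l y)
  · refine ⟨l, fun y => ?_⟩
    rcases lt_trichotomy l (inner ℝ y e) with hy | hy | hy
    · exact (hsym y hy).symm
    · rw [planeRefl_of_inner_eq hy.symm]
    · have := hsym (planeRefl e l y) (by rw [inner_planeRefl he]; linarith)
      rwa [planeRefl_planeRefl he] at this
  · exfalso
    push Not at hsym
    obtain ⟨y₁, hy₁, hne₁⟩ := hsym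
    have hev := h.eventually_reflDominates he fun z hz => h.lt_planeRefl he hgood hy₁ hne₁ hz
    obtain ⟨a, ha, hIoo⟩ := (mem_nhdsLT_iff_exists_Ioo_subset).1 hev
    have ha : a < l := ha
    have hmem : (a + l) / 2 ∈ S := by
      intro μ hμ
      rcases lt_trichotomy l μ with h1 | h1 | h1
      · exact hgt μ h1
      · exact h1 ▸ hgood
      · exact hIoo ⟨by linarith, h1⟩
    have := csInf_le hbdd hmem
    linarith

end PlaneSetup

/-- Reflection of the coordinates in `s` about the corresponding coordinates of `c`. -/
def coordFlip {N : ℕ} (c : EN N) (s : Finset (Fin N)) (y : EN N) : EN N :=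
  WithLp.toLp 2 fun i => if i ∈ s then 2 * c i - y i else y i

lemma planeRefl_coordFlip {N : ℕ} (c : EN N) {s : Finset (Fin N)} {i : Fin N} (hi : i ∉ s)
    (y : EN N) : planeRefl (EuclideanSpace.single i 1) (c i) (coordFlip c s y) =
      coordFlip c (insert i s) y := by
  ext j
  have h1 : inner ℝ (coordFlip c s y) (EuclideanSpace.single i 1) = y i := by
    rw [EuclideanSpace.inner_single_right]
    simp [coordFlip, hi]
  rw [planeRefl, h1]
  by_cases hj : j = i
  · subst hj
    simp [coordFlip, hi]; ring
  · simp [coordFlip, hj]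

section PlaneSetup

variable {N : ℕ} {G u : EN N → ℝ} {g : ℝ → ℝ} {C κ K B δ : ℝ}

/-- A nontrivial `u` is symmetric about every hyperplane through some center `c`. -/
lemma PlaneSetup.exists_center (h : PlaneSetup G u g C κ K B δ) {y₀ : EN N} (h0 : u y₀ ≠ 0) :
    ∃ c : EN N, ∀ e : EN N, ‖e‖ = 1 → ∀ y, u (planeRefl e (inner ℝ c e) y) = u y := by
  have hs : ∀ i : Fin N, ∃ l, ∀ y, u (planeRefl (EuclideanSpace.single i 1) l y) = u y :=
    fun i => h.exists_symmetric h0 (by simp)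
  choose l hl using hs
  set c : EN N := WithLp.toLp 2 l with hc
  have hflip : ∀ (s : Finset (Fin N)) (y : EN N), u (coordFlip c s y) = u y := by
    classical
    intro s y
    induction s using Finset.induction_on with
    | empty => congr 1
    | insert i s hi ih =>
      rw [← planeRefl_coordFlip c hi y, ← ih]
      exact hl i _
  have hP : ∀ y, u ((2 : ℝ) • c - y) = u y := by
    intro y
    rw [← hflip Finset.univ y]
    congr 1
    ext i
    simp [coordFlip]
  have key : ∀ e : EN N, ‖e‖ = 1 → ∀ l, (∀ y, u (planeRefl e l y) = u y) →
      l ≤ inner ℝ c e := by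
    intro e he l hl
    by_contra hlt
    push Not at hlt
    set d := 4 * (l - inner ℝ c e) with hd
    have hd0 : 0 < d := by rw [hd]; linarith
    have hper : ∀ y, u y = u (y + d • e) := by
      intro y
      have h1 : (2 : ℝ) • c - planeRefl e l ((2 : ℝ) • c - planeRefl e l (y + d • e)) = y := by
        conv_lhs => rw [planeRefl, inner_sub_left, inner_planeRefl he, planeRefl, inner_add_left]
        simp only [real_inner_smul_left, real_inner_self_eq_norm_sq, he]
        rw [hd]
        module
      conv_lhs => rw [← h1]
      rw [hP, hl, hP, hl]
    have hiter : ∀ (n : ℕ) (y : EN N), u y = u (y + (n * d) • e) := by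
      intro n
      induction n with
      | zero => intro y; simp
      | succ n ih =>
        intro y
        rw [ih y, hper (y + _)]
        congr 1
        push_cast
        module
    refine h.not_recurrent h0 he fun T => ?_
    obtain ⟨n, hn⟩ := exists_nat_ge (T / d)
    exact ⟨n * d, (div_le_iff₀ hd0).1 hn, fun y => (hiter n y).le⟩
  refine ⟨c, fun e he => ?_⟩
  obtain ⟨l, hl⟩ := h.exists_symmetric h0 he
  have h1 := key e he l hl
  have h2 := key (-e) (by rwa [norm_neg]) (-l) fun y => by
    rw [← hl y]
    congr 1
    simp only [planeRefl, inner_neg_right]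
    module
  rw [inner_neg_right, neg_le_neg_iff] at h2
  rwa [le_antisymm h2 h1]

end PlaneSetup

lemma abs_sub_le_of_abs_deriv_le {f : ℝ → ℝ} (hf : Differentiable ℝ f) {a b L : ℝ}
    (hL : ∀ t, a ≤ t → t ≤ b → |deriv f t| ≤ L) {s t : ℝ} (hs : a ≤ s) (hst : s ≤ t)
    (ht : t ≤ b) : |f t - f s| ≤ L * (t - s) := by
  have h := (convex_Icc a b).norm_image_sub_le_of_norm_deriv_le (f := f) (C := L) (x := s) (y := t)
    (fun x _ => hf x) (fun x hx => hL x hx.1 hx.2) ⟨hs, hst.trans ht⟩ ⟨hs.trans hst, ht⟩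
  rwa [Real.norm_eq_abs, Real.norm_eq_abs, abs_of_nonneg (sub_nonneg.2 hst)] at h

lemma HypF.deriv_zero {N : ℕ} {f : ℝ → ℝ} (hf : HypF N f) : deriv f 0 = 0 := by
  have h1 := ((hf.smooth.differentiable one_ne_zero 0).hasDerivAt).hasDerivWithinAt (s := Iic 0)
  have h2 : HasDerivWithinAt f 0 (Iic 0) 0 :=
    (hasDerivWithinAt_const 0 (Iic 0) (0 : ℝ)).congr (fun t ht => hf.nonpos t ht)
      (hf.nonpos 0 le_rfl)
  exact (uniqueDiffWithinAt_Iic 0).eq_deriv _ h1 h2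

/-- The trace of a nonnegative nontrivial solution is symmetric about a point. -/
lemma IsWeakSolution.exists_trace_center {N : ℕ} {m : ℝ} (hm : 0 < m) {f : ℝ → ℝ}
    {v : ℝ × EN N → ℝ} (hN : 2 ≤ N) (hf : HypF N f) (hv : IsWeakSolution m f v)
    (hnn : ∀ p ∈ closedHalf N, 0 ≤ v p) (hnt : ∃ y : EN N, v (0, y) ≠ 0) :
    ∃ c : EN N, ∀ e : EN N, ‖e‖ = 1 →
      ∀ y, v (0, planeRefl e (inner ℝ c e) y) = v (0, y) := by
  obtain ⟨y₀, hy₀⟩ := hnt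
  obtain ⟨B, hB⟩ := hv.exists_trace_bound hm hN hf hnn
  have hd : Differentiable ℝ f := hf.smooth.differentiable one_ne_zero
  have hcd : Continuous (deriv f) := hf.smooth.continuous_deriv le_rfl
  obtain ⟨L, hL, hLle⟩ := exists_abs_le_on_Icc hcd B
  set K := L + 1 with hK
  have hK0 : 0 < K := by positivity
  set I := ∫ η, greenKer N m K η with hI
  have hI0 : 0 ≤ I := integral_nonneg (greenKer_nonneg m K)
  have hlt : K * I < poissonConst N := integral_greenKer_lt hN hm hK0
  set ε := (poissonConst N - K * I) / (2 * (I + 1)) with hε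
  have hε0 : 0 < ε := div_pos (sub_pos.2 hlt) (by positivity)
  have hεI : ε * I < poissonConst N - K * I := by
    rw [hε, div_mul_eq_mul_div, div_lt_iff₀ (by positivity)]
    nlinarith [sub_pos.2 hlt]
  obtain ⟨δ, hδ, hδle⟩ : ∃ δ > 0, ∀ t, 0 ≤ t → t ≤ δ → |deriv f t| ≤ ε := by
    obtain ⟨δ, hδ, h⟩ := Metric.continuous_iff.1 hcd 0 ε hε0
    refine ⟨δ / 2, half_pos hδ, fun t h0 ht => ?_⟩
    have := h t (by rw [Real.dist_eq, sub_zero, abs_of_nonneg h0]; linarith)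
    rw [hf.deriv_zero, Real.dist_eq, sub_zero] at this
    exact this.le
  have hset : PlaneSetup (greenKer N m K) (fun y => v (0, y)) (fun t => f t + K * t)
      (poissonConst N) (K + ε) (2 * K) B δ :=
    { dim := hN
      kerInt := integrable_greenKer hN hm hK0
      kerNonneg := greenKer_nonneg m K
      kerCongr := fun η η' h => greenKer_congr m K h
      kerAnti := fun η η' h h' => greenKer_lt hm hK0 h h'
      cont := hv.1.continuous_trace
      nonneg := fun y => hnn _ (by simp [closedHalf])
      le := hB
      sqInt := hv.1.integrable_trace_sq
      gCont := hf.continuous.add (continuous_const.mul continuous_id)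
      eqn := hv.green_equation hm hN hf hnn hB hK0
      mono := fun s t h0 hst ht => by
        have := (abs_le.1 (abs_sub_le_of_abs_deriv_le hd hLle h0 hst.le ht)).1
        simp only [hK]
        nlinarith
      lip := fun s t h0 hst ht => by
        have := (abs_le.1 (abs_sub_le_of_abs_deriv_le hd hLle h0 hst ht)).2
        simp only [hK]
        nlinarith
      small := fun s t h0 hst ht => by
        have := (abs_le.1 (abs_sub_le_of_abs_deriv_le hd hδle h0 hst ht)).2
        nlinarith
      posδ := hδ
      posC := poissonConst_pos hN
      nonnegκ := by positivity
      nonnegK := by positivity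
      contr := by rw [add_mul]; linarith }
  exact hset.exists_center hy₀

/-! ### From the trace to the half-space -/

/-- Reflection in the `y`-variables of the half-space. -/
def halfRefl {N : ℕ} (e : EN N) (l : ℝ) (p : ℝ × EN N) : ℝ × EN N := (p.1, planeRefl e l p.2)

lemma halfRefl_halfRefl {N : ℕ} {e : EN N} (he : ‖e‖ = 1) (l : ℝ) (p : ℝ × EN N) :
    halfRefl e l (halfRefl e l p) = p := by
  simp [halfRefl, planeRefl_planeRefl he]

lemma continuous_halfRefl {N : ℕ} (e : EN N) (l : ℝ) : Continuous (halfRefl e l) :=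
  continuous_fst.prodMk ((continuous_planeRefl e l).comp continuous_snd)

lemma measurableEmbedding_halfRefl {N : ℕ} {e : EN N} (he : ‖e‖ = 1) (l : ℝ) :
    MeasurableEmbedding (halfRefl e l) :=
  (continuous_halfRefl e l).measurableEmbedding
    (Function.LeftInverse.injective (halfRefl_halfRefl he l))

lemma measurePreserving_halfRefl {N : ℕ} {e : EN N} (he : ‖e‖ = 1) (l : ℝ) :
    MeasurePreserving (halfRefl e l) (volume.restrict (upperHalf N))
      (volume.restrict (upperHalf N)) := by
  rw [volume_restrict_upperHalf]
  exact (MeasurePreserving.id _).prod (measurePreserving_planeRefl he l)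

lemma sum_apply_mul_apply_isometry {N : ℕ} (A B : EN N →L[ℝ] ℝ) (s : EN N ≃ₗᵢ[ℝ] EN N) :
    ∑ i, A (s (EuclideanSpace.single i 1)) * B (s (EuclideanSpace.single i 1)) =
      ∑ i, A (EuclideanSpace.single i 1) * B (EuclideanSpace.single i 1) := by
  set a := (InnerProductSpace.toDual ℝ (EN N)).symm A with ha
  set b := (InnerProductSpace.toDual ℝ (EN N)).symm B with hb
  have hA : ∀ x, A x = inner ℝ a x := fun x => by
    rw [ha, InnerProductSpace.toDual_symm_apply]
  have hB : ∀ x, B x = inner ℝ x b := fun x => by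
    rw [hb, real_inner_comm, InnerProductSpace.toDual_symm_apply]
  have h1 := (EuclideanSpace.basisFun (Fin N) ℝ).sum_inner_mul_inner a b
  have h2 := ((EuclideanSpace.basisFun (Fin N) ℝ).map s).sum_inner_mul_inner a b
  simp only [OrthonormalBasis.map_apply, EuclideanSpace.basisFun_apply] at h1 h2
  simp only [hA, hB]
  rw [h1, h2]

lemma hasFDerivAt_halfRefl {N : ℕ} {e : EN N} (he : ‖e‖ = 1) (l : ℝ) (p : ℝ × EN N) :
    HasFDerivAt (halfRefl e l)
      ((ContinuousLinearMap.fst ℝ ℝ (EN N)).prod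
        (((ℝ ∙ e)ᗮ.reflection : EN N →L[ℝ] EN N).comp (ContinuousLinearMap.snd ℝ ℝ (EN N)))) p := by
  have h : halfRefl e l = fun p => (p.1, (ℝ ∙ e)ᗮ.reflection p.2 + (2 * l) • e) :=
    funext fun p => by rw [halfRefl, planeRefl_eq_reflection he]
  rw [h]
  refine hasFDerivAt_fst.prodMk (HasFDerivAt.add_const _ ?_)
  exact ((ℝ ∙ e)ᗮ.reflection : EN N →L[ℝ] EN N).hasFDerivAt.comp p hasFDerivAt_snd

lemma gradDot_comp_halfRefl {N : ℕ} {e : EN N} (he : ‖e‖ = 1) (l : ℝ) {u v : ℝ × EN N → ℝ}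
    {p : ℝ × EN N} (hu : DifferentiableAt ℝ u (halfRefl e l p))
    (hv : DifferentiableAt ℝ v (halfRefl e l p)) :
    gradDot (u ∘ halfRefl e l) (v ∘ halfRefl e l) p = gradDot u v (halfRefl e l p) := by
  have hT := hasFDerivAt_halfRefl he l p
  rw [gradDot, gradDot, (hu.hasFDerivAt.comp p hT).fderiv, (hv.hasFDerivAt.comp p hT).fderiv]
  have := sum_apply_mul_apply_isometry
    ((fderiv ℝ u (halfRefl e l p)).comp (ContinuousLinearMap.inr ℝ ℝ (EN N)))
    ((fderiv ℝ v (halfRefl e l p)).comp (ContinuousLinearMap.inr ℝ ℝ (EN N)))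
    (ℝ ∙ e)ᗮ.reflection
  simp only [ContinuousLinearMap.comp_apply, ContinuousLinearMap.inr_apply] at this
  simp only [ContinuousLinearMap.comp_apply, ContinuousLinearMap.prod_apply,
    ContinuousLinearMap.coe_fst', ContinuousLinearMap.coe_snd', ex, ey, map_zero]
  congr 1

lemma MemH1.comp_halfRefl {N : ℕ} {v : ℝ × EN N → ℝ} (hv : MemH1 v) {e : EN N} (he : ‖e‖ = 1)
    (l : ℝ) : MemH1 (v ∘ halfRefl e l) where
  contOn := hv.contOn.comp (continuous_halfRefl e l).continuousOn fun p hp => hp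
  diff p hp := (hv.diff (halfRefl e l p) hp).comp p (hasFDerivAt_halfRefl he l p).differentiableAt
  memL2 := (measurePreserving_halfRefl he l).integrable_comp_of_integrable hv.memL2
  gradL2 := by
    refine ((measurePreserving_halfRefl he l).integrable_comp_of_integrable hv.gradL2).congr ?_
    filter_upwards [ae_restrict_mem (measurableSet_upperHalf N)] with p hp
    exact (gradDot_comp_halfRefl he l (hv.diff _ hp) (hv.diff _ hp)).symm

lemma MemH1.integrable_gradDot {N : ℕ} {u v : ℝ × EN N → ℝ} (hu : MemH1 u) (hv : MemH1 v) :
    Integrable (gradDot u v) (volume.restrict (upperHalf N)) := by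
  refine Integrable.add ?_ (integrable_finsetSum _ fun i _ => ?_)
  · exact integrable_mul_of_integrable_sq (measurable_fderiv_dir u _).aestronglyMeasurable
      (measurable_fderiv_dir v _).aestronglyMeasurable hu.sq_ex hv.sq_ex
  · exact integrable_mul_of_integrable_sq (measurable_fderiv_dir u _).aestronglyMeasurable
      (measurable_fderiv_dir v _).aestronglyMeasurable (hu.sq_ey i) (hv.sq_ey i)

lemma gradDot_comm {N : ℕ} (u v : ℝ × EN N → ℝ) (p : ℝ × EN N) :
    gradDot u v p = gradDot v u p := by
  simp only [gradDot, mul_comm]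

lemma gradDot_sub_left {N : ℕ} {u v w : ℝ × EN N → ℝ} {p : ℝ × EN N}
    (hu : DifferentiableAt ℝ u p) (hv : DifferentiableAt ℝ v p) :
    gradDot (fun q => u q - v q) w p = gradDot u w p - gradDot v w p := by
  rw [gradDot, fderiv_fun_sub hu hv]
  simp only [sub_apply, sub_mul, Finset.sum_sub_distrib, gradDot]
  ring

lemma gradDot_neg_right {N : ℕ} (u v : ℝ × EN N → ℝ) (p : ℝ × EN N) :
    gradDot u (fun q => -v q) p = -gradDot u v p := by
  rw [gradDot, fderiv_fun_neg]
  simp only [neg_apply, mul_neg, Finset.sum_neg_distrib, gradDot]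
  ring

lemma MemH1.sub {N : ℕ} {u v : ℝ × EN N → ℝ} (hu : MemH1 u) (hv : MemH1 v) :
    MemH1 fun p => u p - v p where
  contOn := hu.contOn.sub hv.contOn
  diff p hp := (hu.diff p hp).sub (hv.diff p hp)
  memL2 := by
    have h := integrable_mul_of_integrable_sq hu.aesm hv.aesm hu.memL2 hv.memL2
    refine ((hu.memL2.add hv.memL2).sub (h.const_mul 2)).congr (Eventually.of_forall fun p => ?_)
    simp only [Pi.sub_apply, Pi.add_apply]; ring
  gradL2 := by
    have h := (hu.integrable_gradDot hv).const_mul 2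
    refine ((hu.gradL2.add hv.gradL2).sub h).congr ?_
    filter_upwards [ae_restrict_mem (measurableSet_upperHalf N)] with p hp
    have hu' := hu.diff p hp
    have hv' := hv.diff p hp
    simp only [Pi.sub_apply, Pi.add_apply, gradSq]
    rw [gradDot_sub_left hu' hv', gradDot_comm u fun q => u q - v q,
      gradDot_comm v fun q => u q - v q, gradDot_sub_left hu' hv',
      gradDot_sub_left hu' hv', gradDot_comm v u]
    ring

/-- A solution whose trace is symmetric about a hyperplane is itself symmetric. -/
lemma IsWeakSolution.symmetric_of_trace {N : ℕ} {m : ℝ} (hm : 0 < m) {f : ℝ → ℝ}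
    {v : ℝ × EN N → ℝ} (hv : IsWeakSolution m f v) {e : EN N} (he : ‖e‖ = 1) {l : ℝ}
    (hsym : ∀ y, v (0, planeRefl e l y) = v (0, y)) {x : ℝ} (hx : 0 ≤ x) (y : EN N) :
    v (x, planeRefl e l y) = v (x, y) := by
  rcases hx.eq_or_lt with rfl | hx
  · exact hsym y
  set T := halfRefl e l with hT
  set φ : ℝ × EN N → ℝ := fun p => v p - (v ∘ T) p with hφ
  have hw : MemH1 (v ∘ T) := hv.1.comp_halfRefl he l
  have hφH : MemH1 φ := hv.1.sub hw
  have hodd : φ = (fun p => -φ p) ∘ T := by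
    funext p
    simp only [hφ, Function.comp_apply, hT, halfRefl_halfRefl he]
    ring
  set F : ℝ × EN N → ℝ := fun p => gradDot v φ p + m ^ 2 * v p * φ p with hF
  have hvφ := integrable_mul_of_integrable_sq hv.1.aesm hφH.aesm hv.1.memL2 hφH.memL2
  have iF : Integrable F (volume.restrict (upperHalf N)) := by
    refine ((hv.1.integrable_gradDot hφH).add (hvφ.const_mul (m ^ 2))).congr
      (Eventually.of_forall fun p => ?_)
    simp only [Pi.add_apply, hF]; ring
  have hF0 : ∫ p in upperHalf N, F p = 0 := by
    rw [hv.2 φ hφH]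
    have : ∀ y, φ (0, y) = 0 := fun y => by
      simp only [hφ, Function.comp_apply, hT, halfRefl, hsym, sub_self]
    simp [this]
  have mp := measurePreserving_halfRefl he l
  have hFT0 : ∫ p in upperHalf N, F (T p) = 0 :=
    (mp.integral_comp (measurableEmbedding_halfRefl he l) F).trans hF0
  have iFT : Integrable (fun p => F (T p)) (volume.restrict (upperHalf N)) :=
    mp.integrable_comp_of_integrable iF
  set E : ℝ × EN N → ℝ := fun p => gradSq φ p + m ^ 2 * φ p ^ 2 with hE
  have hEF : ∀ p ∈ upperHalf N, E p = F p + F (T p) := by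
    intro p hp
    have hpT : T p ∈ upperHalf N := hp
    have h1 : gradDot (v ∘ T) φ p = -gradDot v φ (T p) := by
      have hn : DifferentiableAt ℝ (fun q => -φ q) (T p) := (hφH.diff _ hpT).fun_neg
      rw [← gradDot_neg_right, ← gradDot_comp_halfRefl he l (hv.1.diff _ hpT) hn, ← hT, ← hodd]
    have h2 : gradSq φ p = gradDot v φ p - gradDot (v ∘ T) φ p := by
      rw [gradSq]
      conv_lhs => rw [hφ]
      rw [gradDot_sub_left (hv.1.diff p hp) (hw.diff p hp)]
    have h3 : φ (T p) = -φ p := by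
      conv_rhs => rw [hodd]
      simp
    simp only [hE, hF, h2, h1, h3]
    have : φ p = v p - v (T p) := rfl
    rw [this]; ring
  have iE : Integrable E (volume.restrict (upperHalf N)) :=
    hφH.gradL2.add (hφH.memL2.const_mul (m ^ 2))
  have hE0 : ∫ p in upperHalf N, E p = 0 := by
    rw [setIntegral_congr_fun (measurableSet_upperHalf N) hEF, integral_add iF iFT, hF0, hFT0,
      add_zero]
  have hEnn : ∀ p, 0 ≤ E p := fun p =>
    add_nonneg (gradSq_nonneg _ _) (mul_nonneg (sq_nonneg _) (sq_nonneg _))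
  have hae := (integral_eq_zero_iff_of_nonneg hEnn iE).1 hE0
  have hφae : φ =ᵐ[volume.restrict (upperHalf N)] fun _ => 0 := by
    filter_upwards [hae] with p hp
    have hp : gradSq φ p + m ^ 2 * φ p ^ 2 = 0 := hp
    have h1 : m ^ 2 * φ p ^ 2 = 0 :=
      le_antisymm (by linarith [gradSq_nonneg φ p]) (mul_nonneg (sq_nonneg _) (sq_nonneg _))
    simpa [hm.ne'] using h1
  have hopen : IsOpen (upperHalf N) := isOpen_lt continuous_const continuous_fst
  have := Measure.eqOn_open_of_ae_eq hφae hopen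
    (hφH.contOn.mono (upperHalf_subset_closedHalf N)) continuousOn_const
    (show (x, y) ∈ upperHalf N from hx)
  have h4 : v (x, y) - v (x, planeRefl e l y) = 0 := this
  linarith

/-- Under (f1)–(f2), any nonnegative nontrivial weak solution `v` of (P)
is radially symmetric in the `y`-variable with respect to some `y₀ ∈ ℝ^N`. -/
theorem stmt3 (N : ℕ) (hN : 2 ≤ N) (m : ℝ) (hm : 0 < m) (f : ℝ → ℝ) (hf : HypF N f)
    (v : ℝ × EN N → ℝ) (hv : IsWeakSolution m f v)
    (hnonneg : ∀ p ∈ closedHalf N, 0 ≤ v p) (hnt : ∃ y : EN N, v (0, y) ≠ 0) :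
    ∃ y₀ : EN N, ∀ x : ℝ, 0 ≤ x → ∀ y y' : EN N,
      ‖y - y₀‖ = ‖y' - y₀‖ → v (x, y) = v (x, y') := by
  obtain ⟨c, hc⟩ := hv.exists_trace_center hm hN hf hnonneg hnt
  refine ⟨c, fun x hx y y' h => ?_⟩
  by_cases hne : y = y'
  · rw [hne]
  obtain ⟨e, he, hswap⟩ := planeRefl_eq_swap h hne
  rw [← hswap]
  exact (hv.symmetric_of_trace hm he (hc e he) hx y).symm
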